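/- There exist an absolute constant c > 0 and, for each m ∈ ℕ, a constant c(m) > 0 such that for all d, m, n ∈ ℕ, all 0 ≤ α ≤ 2, and all F ∈ 𝔉_d^(α), one has max{ ρ_m(F^n, e(nF)), ρ_m(F^n, F^{n+1}) } ≤ c(m) · ( n^{−1} + exp(−nα + c·m·(log n)³) ). -/

import Mathlib

open MeasureTheory RealInnerProductSpace
open scoped ENNReal

noncomputable section

abbrev Euc (d : ℕ) := EuclideanSpace ℝ (Fin d)

/-- Convolution of two measures on an additive structure. -/
def mconv {α : Type*} [MeasurableSpace α] [Add α] (μ ν : Measure α) : Measure α :=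
  (μ.prod ν).map (fun p => p.1 + p.2)

/-- Convolution power `μ^{*n}`, with `μ^{*0}` the Dirac measure at `0`. -/
def convPow {α : Type*} [MeasurableSpace α] [AddMonoid α] (μ : Measure α) : ℕ → Measure α
  | 0 => Measure.dirac 0
  | n + 1 => mconv (convPow μ n) μ

/-- Convolution product of a finite family of measures. -/
def convProd {α : Type*} [MeasurableSpace α] [AddMonoid α] :
    ∀ {n : ℕ}, (Fin n → Measure α) → Measure α
  | 0, _ => Measure.dirac 0
  | n + 1, G => mconv (convProd (fun i : Fin n => G i.castSucc)) (G (Fin.last n))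

/-- The compound Poisson measure `e(a·μ) = e^{-a} ∑_k a^k μ^{*k}/k!`. -/
def cpois {α : Type*} [MeasurableSpace α] [AddMonoid α] (a : ℝ) (μ : Measure α) : Measure α :=
  Measure.sum fun k : ℕ =>
    (ENNReal.ofReal (Real.exp (-a) * a ^ k / k.factorial)) • convPow μ k

/-- A measure is symmetric if it is invariant under `x ↦ -x`. -/
def IsSymmMeasure {d : ℕ} (μ : Measure (Euc d)) : Prop :=
  μ.map (fun x => -x) = μ

/-- Characteristic function of a measure on `ℝ^d`. -/
def charFn {d : ℕ} (μ : Measure (Euc d)) (t : Euc d) : ℂ :=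
  ∫ x, Complex.exp ((⟪t, x⟫ : ℂ) * Complex.I) ∂μ

/-- Characteristic function of a measure on `ℝ`. -/
def charFn1 (μ : Measure ℝ) (t : ℝ) : ℂ :=
  ∫ x, Complex.exp (((t * x : ℝ) : ℂ) * Complex.I) ∂μ

/-- Convex polyhedra determined by the directions `t 1, …, t m`. -/
def polyhedraOn {d m : ℕ} (t : Fin m → Euc d) : Set (Set (Euc d)) :=
  {X | ∃ a b : Fin m → EReal,
    X = {x | ∀ j, a j ≤ ((⟪x, t j⟫ : ℝ) : EReal) ∧ ((⟪x, t j⟫ : ℝ) : EReal) ≤ b j}}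

/-- The collection `𝔛_m` of convex polyhedra determined by `m` pairs of parallel hyperplanes. -/
def polyhedra (d m : ℕ) : Set (Set (Euc d)) :=
  {X | ∃ t : Fin m → Euc d, X ∈ polyhedraOn t}

/-- The distance `ρ_m(G,H) = sup_{X ∈ 𝔛_m} |G{X} - H{X}|`. -/
def rhoPoly {d : ℕ} (m : ℕ) (G H : Measure (Euc d)) : ℝ :=
  ⨆ X ∈ polyhedra d m, |(G X).toReal - (H X).toReal|

/-- The Lévy concentration function `Q(μ, b) = sup_x μ[x, x+b]`. -/
def concFn (μ : Measure ℝ) (b : ℝ) : ℝ :=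
  ⨆ x : ℝ, (μ (Set.Icc x (x + b))).toReal

/-- `q(H, X) = inf_{‖t‖=1} Q(𝓛(⟨ξ,t⟩), λ{⟨x,t⟩ : x ∈ X})` where `H = 𝓛(ξ)`. -/
def qFn {d : ℕ} (H : Measure (Euc d)) (X : Set (Euc d)) : ℝ :=
  ⨅ t ∈ {t : Euc d | ‖t‖ = 1},
    concFn (H.map fun x => ⟪x, t⟫) (volume ((fun x => ⟪x, t⟫) '' X)).toReal

/-- The uniform (Kolmogorov) distance on `ℝ^d`. -/
def kolmDist {d : ℕ} (G H : Measure (Euc d)) : ℝ :=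
  ⨆ x : Euc d, |(G {y | ∀ i, y i ≤ x i}).toReal - (H {y | ∀ i, y i ≤ x i}).toReal|

/-- The uniform (Kolmogorov) distance on `ℝ`. -/
def kolmDist1 (G H : Measure ℝ) : ℝ :=
  ⨆ x : ℝ, |(G (Set.Iic x)).toReal - (H (Set.Iic x)).toReal|

end


section MarkovPart
open Polynomial Polynomial.Chebyshev

lemma mk_deriv_one {n : ℕ} {P : ℝ[X]} {B : ℝ} (hB : 0 < B) (hdeg : P.natDegree ≤ n)
    (hb : ∀ x ∈ Set.Icc (-1:ℝ) 1, |P.eval x| ≤ B) :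
    |(derivative P).eval 1| ≤ n ^ 2 * B := by
  have hT : (derivative (T ℝ n)).eval (1:ℝ) = (n:ℝ)^2 := by
    rw [T_derivative_eq_U]; simp; ring
  have key : ∀ Q : ℝ[X], Q.natDegree ≤ n → (∀ x ∈ Set.Icc (-1:ℝ) 1, |Q.eval x| ≤ B) →
      (derivative Q).eval 1 ≤ n ^ 2 * B := by
    intro Q hQ hQb
    have := eval_iterate_derivative_le_of_forall_abs_le_one (n := n) (P := Polynomial.C B⁻¹ * Q) (k := 1)
      (x := 1) le_rfl ?_ ?_
    · simp [hT] at this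
      rwa [inv_mul_le_iff₀ hB, mul_comm] at this
    · exact natDegree_le_iff_degree_le.mp ((natDegree_C_mul_le _ _).trans hQ)
    · intro x hx
      simp [abs_mul, abs_of_pos hB]
      rw [inv_mul_le_iff₀ hB]; simpa using hQb x hx
  rw [abs_le]
  constructor
  · have := key (-P) (by simpa using hdeg) (by simpa using hb)
    simp at this; linarith
  · exact key P hdeg hb

/-- crude Markov inequality on `[a,b]` -/
lemma markov_crude {n : ℕ} {P : ℝ[X]} {a b B : ℝ} (hab : a < b) (hB : 0 < B)
    (hdeg : P.natDegree ≤ n) (hb : ∀ x ∈ Set.Icc a b, |P.eval x| ≤ B) :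
    ∀ x ∈ Set.Icc a b, |(derivative P).eval x| ≤ 4 * n ^ 2 * B / (b - a) := by
  have main : ∀ x e : ℝ, e ≠ 0 → (b - a) / 2 ≤ |2 * e| →
      (∀ y ∈ Set.Icc (-1:ℝ) 1, x + (y - 1) * e ∈ Set.Icc a b) →
      |(derivative P).eval x| ≤ 4 * n ^ 2 * B / (b - a) := by
    intro x e he hl hm
    have := mk_deriv_one (n := n) (P := P.comp (Polynomial.C e * X + Polynomial.C (x - e))) hB ?_ ?_
    · rw [derivative_comp] at this
      simp [abs_mul] at this
      rw [le_div_iff₀ (by linarith)]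
      rw [abs_mul, abs_two] at hl
      have h0 := abs_nonneg (eval x (derivative P))
      nlinarith
    · refine natDegree_comp_le.trans ?_
      have : (Polynomial.C e * X + Polynomial.C (x - e)).natDegree ≤ 1 := natDegree_linear_le
      nlinarith
    · intro y hy
      rw [eval_comp]
      have := hb _ (hm y hy)
      have e1 : eval y (Polynomial.C e * X + Polynomial.C (x - e)) = x + (y - 1) * e := by
        simp; ring
      rw [e1]; exact this
  intro x hx
  obtain ⟨h1, h2⟩ := hx
  rcases le_total ((a+b)/2) x with h | h
  · refine main x ((x - a)/2) (by linarith) ?_ ?_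
    · rw [abs_of_nonneg] <;> linarith
    · rintro y ⟨hy1, hy2⟩
      constructor <;> nlinarith
  · refine main x (-((b - x)/2)) (by linarith) ?_ ?_
    · rw [abs_of_nonpos] <;> linarith
    · rintro y ⟨hy1, hy2⟩
      constructor <;> nlinarith

/-- from integer nodes to the whole interval -/
lemma nodes_to_interval {n : ℕ} {P : ℝ[X]} {a b : ℕ} {B : ℝ} (hab : a < b) (hB : 0 < B)
    (hdeg : P.natDegree ≤ n) (hn : 8 * (n:ℝ) ^ 2 ≤ b - a)
    (hb : ∀ N : ℕ, a ≤ N → N ≤ b → |P.eval (N:ℝ)| ≤ B) :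
    ∀ x ∈ Set.Icc (a:ℝ) b, |P.eval x| ≤ 2 * B := by
  have hab' : (a:ℝ) < b := by exact_mod_cast hab
  obtain ⟨z, hz, hmax⟩ := isCompact_Icc.exists_isMaxOn (Set.nonempty_Icc.mpr hab'.le)
    (P.continuous.abs.continuousOn (s := Set.Icc (a:ℝ) b))
  set S := |P.eval z| with hS
  have hS' : ∀ x ∈ Set.Icc (a:ℝ) b, |P.eval x| ≤ S := fun x hx => hmax hx
  suffices S ≤ 2 * B from fun x hx => (hS' x hx).trans this
  by_contra hcon
  push Not at hcon
  have hSpos : 0 < S := by linarith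
  have hM := markov_crude hab' hSpos hdeg hS'
  have hM' : ∀ x ∈ Set.Icc (a:ℝ) b, ‖(derivative P).eval x‖ ≤ S / 2 := by
    intro x hx
    refine (hM x hx).trans ?_
    rw [div_le_iff₀ (by linarith)]; nlinarith
  obtain ⟨hz1, hz2⟩ := hz
  have hz0 : 0 ≤ z := le_trans (Nat.cast_nonneg _) hz1
  have hN1 : a ≤ ⌊z⌋₊ := Nat.le_floor hz1
  have hN2 : ⌊z⌋₊ ≤ b := Nat.floor_le_of_le hz2
  have := Convex.norm_image_sub_le_of_norm_hasDerivWithin_le (f := fun x => P.eval x)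
    (f' := fun x => (derivative P).eval x) (s := Set.Icc (a:ℝ) b) (x := (⌊z⌋₊:ℝ)) (y := z)
    (fun x _ => (P.hasDerivAt x).hasDerivWithinAt) hM' (convex_Icc _ _)
    ⟨by exact_mod_cast hN1, by exact_mod_cast hN2⟩ ⟨hz1, hz2⟩
  have h3 : ‖z - ⌊z⌋₊‖ ≤ 1 := by
    rw [Real.norm_eq_abs, abs_le]
    have := Nat.floor_le hz0
    have := Nat.lt_floor_add_one z
    constructor <;> linarith
  have h4 := hb _ hN1 hN2
  have h5 : S ≤ |P.eval z - P.eval (⌊z⌋₊:ℝ)| + |P.eval (⌊z⌋₊:ℝ)| := by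
    have := abs_add_le (P.eval z - P.eval (⌊z⌋₊:ℝ)) (P.eval (⌊z⌋₊:ℝ))
    simpa using this
  simp only [Real.norm_eq_abs] at this h3
  nlinarith

end MarkovPart


section FinishPart
open Polynomial

lemma summable_S8 : Summable (fun l : ℕ => ((l:ℝ) + 1) ^ 8 * (1/2:ℝ) ^ l) := by
  have := summable_pow_mul_geometric_of_norm_lt_one (R := ℝ) 8 (r := 1/2) (by norm_num)
  have h2 := (summable_nat_add_iff (f := fun n : ℕ => (n:ℝ)^8 * (1/2:ℝ)^n) 1).mpr this
  refine (h2.mul_left 2).congr fun l => ?_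
  push_cast; ring

lemma taylor_two {p : ℝ[X]} {a b K : ℝ} (hK : 0 ≤ K)
    (h2 : ∀ x ∈ Set.Icc a b, |(derivative (derivative p)).eval x| ≤ K)
    {x y : ℝ} (hx : x ∈ Set.Icc a b) (hy : y ∈ Set.Icc a b) :
    |p.eval y - p.eval x - (derivative p).eval x * (y - x)| ≤ K * (y - x) ^ 2 := by
  have h1 : ∀ z ∈ Set.uIcc x y, |(derivative p).eval z - (derivative p).eval x| ≤ K * |y - x| := by
    intro z hz
    have hz' : z ∈ Set.Icc a b := (Set.ordConnected_Icc.uIcc_subset hx hy) hz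
    have := Convex.norm_image_sub_le_of_norm_hasDerivWithin_le (f := fun x => (derivative p).eval x)
      (f' := fun x => (derivative (derivative p)).eval x) (s := Set.Icc a b) (x := x) (y := z)
      (fun x _ => ((derivative p).hasDerivAt x).hasDerivWithinAt) h2 (convex_Icc _ _) hx hz'
    refine this.trans ?_
    gcongr
    rw [Real.norm_eq_abs, abs_sub_comm z, abs_sub_comm y]
    exact Set.abs_sub_left_of_mem_uIcc hz |> fun h => by rw [abs_sub_comm x z, abs_sub_comm x y]; exact h
  have := Convex.norm_image_sub_le_of_norm_hasDerivWithin_le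
      (f := fun z => p.eval z - (derivative p).eval x * z)
      (f' := fun z => (derivative p).eval z - (derivative p).eval x) (s := Set.uIcc x y) (x := x) (y := y)
      (fun z _ => by
        have := (p.hasDerivAt z).sub ((hasDerivAt_id z).const_mul ((derivative p).eval x))
        simp only [id, mul_one] at this
        exact this.hasDerivWithinAt) h1 (convex_uIcc _ _)
        Set.left_mem_uIcc Set.right_mem_uIcc
  simp only [Real.norm_eq_abs] at this
  calc _ = |p.eval y - (derivative p).eval x * y - (p.eval x - (derivative p).eval x * x)| := by
        congr 1; ring
    _ ≤ _ := this
    _ = K * (y-x)^2 := by rw [← sq_abs (y - x)]; ring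

set_option maxHeartbeats 1000000 in
lemma linear_of_levels (A B : ℝ) (hA : 1 ≤ A) (hB : 0 < B) :
    ∃ C : ℝ, 0 < C ∧ ∀ (n J : ℕ) (P : ℕ → ℝ[X]) (f : ℕ → ℝ), 32 ≤ n →
      (∀ N, 0 ≤ f N) → (∀ N, f N ≤ 1) →
      8 * (A * (J + 1) ^ 2) ^ 2 ≤ (n / 16 : ℕ) →
      (∀ l ≤ J, ((P l).natDegree : ℝ) ≤ A * (l + 1) ^ 2) →
      (∀ l ≤ J, ∀ N : ℕ, n - n / 16 ≤ N → N ≤ n + n / 16 → |(P l).eval (N:ℝ)| ≤ B * (1/2) ^ l) →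
      (∀ N : ℕ, n - n / 16 ≤ N → N ≤ n + n / 16 →
        |f N - (∑ l ∈ Finset.range (J + 1), P l).eval (N:ℝ)| ≤ B / n ^ 2) →
      ∃ a : ℝ, |a| ≤ C / n ∧ ∀ N : ℕ, |f N - f n - a * (N - n)| ≤ C * ((N - n) ^ 2 + 1) / n ^ 2 := by
  set S := ∑' l : ℕ, ((l:ℝ) + 1) ^ 8 * (1/2:ℝ) ^ l with hS
  have hS0 : 0 ≤ S := tsum_nonneg fun l => by positivity
  set K1 := 128 * A ^ 2 * B * S with hK1
  set K2 := 8192 * A ^ 4 * B * S with hK2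
  have hK10 : 0 ≤ K1 := by positivity
  have hK20 : 0 ≤ K2 := by positivity
  refine ⟨2 * B + K2 + 1024 + 32 * K1, by positivity, ?_⟩
  intro n J P f hn hf0 hf1 hJ hdeg hP hf
  set L := n / 16 with hL
  have hL1 : 2 ≤ L := by omega
  have hnL : n ≤ 32 * L := by omega
  have hLn : L ≤ n := by omega
  have hnLr : (n:ℝ) ≤ 32 * L := by exact_mod_cast hnL
  have hn0 : (0:ℝ) < n := by positivity
  have hLr : (2:ℝ) ≤ L := by exact_mod_cast hL1
  have hcast : ((n - L : ℕ) : ℝ) = n - L := by push_cast [hLn]; ring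
  have hIntg : ∀ l ≤ J, ∀ x ∈ Set.Icc ((n - L : ℕ):ℝ) ((n + L : ℕ):ℝ), |(P l).eval x| ≤ 2 * (B * (1/2)^l) := by
    intro l hl
    refine nodes_to_interval (n := (P l).natDegree) (by omega) (by positivity) le_rfl ?_ (hP l hl)
    rw [hcast]
    have h1 := hdeg l hl
    have h2 : A * ((l:ℝ) + 1)^2 ≤ A * ((J:ℝ)+1)^2 := by
      have : (l:ℝ) ≤ J := by exact_mod_cast hl
      gcongr
    have h3 : ((P l).natDegree : ℝ)^2 ≤ (A * ((J:ℝ)+1)^2)^2 := by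
      gcongr; exact h1.trans h2
    push_cast; nlinarith
  have hlen : (((n + L : ℕ):ℝ) - ((n - L : ℕ):ℝ)) = 2 * L := by rw [hcast]; push_cast; ring
  have hlt : ((n - L : ℕ):ℝ) < ((n + L : ℕ):ℝ) := by linarith
  have hd1 : ∀ l ≤ J, ∀ x ∈ Set.Icc ((n - L : ℕ):ℝ) ((n + L : ℕ):ℝ),
      |(derivative (P l)).eval x| ≤ 4 * (A * (l+1)^2) ^2 * (B * (1/2)^l) / L := by
    intro l hl x hx
    refine (markov_crude hlt (by positivity) le_rfl (hIntg l hl) x hx).trans ?_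
    rw [hlen]
    have h1 := hdeg l hl
    have h3 : ((P l).natDegree : ℝ)^2 ≤ (A * ((l:ℝ)+1)^2)^2 := by gcongr
    rw [div_le_div_iff₀ (by positivity) (by positivity)]
    have : 0 ≤ (B * (1/2:ℝ)^l) * (L * L) := by positivity
    nlinarith [mul_le_mul_of_nonneg_right h3 (show 0 ≤ (B * (1/2:ℝ)^l) * L by positivity)]
  have hd2 : ∀ l ≤ J, ∀ x ∈ Set.Icc ((n - L : ℕ):ℝ) ((n + L : ℕ):ℝ),
      |(derivative (derivative (P l))).eval x| ≤ 8 * (A * (l+1)^2) ^4 * (B * (1/2)^l) / L^2 := by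
    intro l hl x hx
    refine (markov_crude hlt (by positivity)
      ((natDegree_derivative_le (P l)).trans (Nat.sub_le _ _)) (hd1 l hl) x hx).trans ?_
    rw [hlen]
    have h1 := hdeg l hl
    have h3 : ((P l).natDegree : ℝ)^2 ≤ (A * ((l:ℝ)+1)^2)^2 := by gcongr
    calc 4 * ((P l).natDegree : ℝ)^2 * (4 * (A * (l+1)^2) ^2 * (B * (1/2)^l) / L) / (2 * L)
        ≤ 4 * (A * ((l:ℝ)+1)^2)^2 * (4 * (A * (l+1)^2) ^2 * (B * (1/2)^l) / L) / (2 * L) := by gcongr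
      _ = _ := by field_simp; ring
  set p := ∑ l ∈ Finset.range (J + 1), P l with hp
  have hsum8 : ∑ l ∈ Finset.range (J+1), ((l:ℝ) + 1) ^ 8 * (1/2:ℝ) ^ l ≤ S :=
    summable_S8.sum_le_tsum _ (fun l _ => by positivity)
  have hp1 : ∀ x ∈ Set.Icc ((n - L : ℕ):ℝ) ((n + L : ℕ):ℝ), |(derivative p).eval x| ≤ K1 / n := by
    intro x hx
    rw [hp, derivative_sum, eval_finsetSum]
    calc _ ≤ ∑ l ∈ Finset.range (J+1), |(derivative (P l)).eval x| := Finset.abs_sum_le_sum_abs _ _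
      _ ≤ ∑ l ∈ Finset.range (J+1), (4 * A^2 * B / L) * (((l:ℝ) + 1) ^ 8 * (1/2:ℝ) ^ l) := by
        refine Finset.sum_le_sum fun l hl => ?_
        refine (hd1 l (by simpa [Nat.lt_succ_iff] using hl) x hx).trans ?_
        have : ((l:ℝ)+1)^4 ≤ ((l:ℝ)+1)^8 := pow_le_pow_right₀ (by linarith [(Nat.cast_nonneg l : (0:ℝ) ≤ l)]) (by norm_num)
        calc 4 * (A * ((l:ℝ)+1)^2) ^2 * (B * (1/2)^l) / L
            = (4 * A^2 * B / L) * (((l:ℝ) + 1) ^ 4 * (1/2:ℝ) ^ l) := by ring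
          _ ≤ _ := by gcongr
      _ ≤ (4 * A^2 * B / L) * S := by rw [← Finset.mul_sum]; gcongr
      _ ≤ K1 / n := by
        rw [hK1, div_mul_eq_mul_div, div_le_div_iff₀ (by positivity) hn0]
        have : 0 ≤ 4 * A^2 * B * S := by positivity
        nlinarith
  have hp2 : ∀ x ∈ Set.Icc ((n - L : ℕ):ℝ) ((n + L : ℕ):ℝ),
      |(derivative (derivative p)).eval x| ≤ K2 / n^2 := by
    intro x hx
    rw [hp, derivative_sum, derivative_sum, eval_finsetSum]
    calc _ ≤ ∑ l ∈ Finset.range (J+1), |(derivative (derivative (P l))).eval x| := Finset.abs_sum_le_sum_abs _ _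
      _ ≤ ∑ l ∈ Finset.range (J+1), (8 * A^4 * B / L^2) * (((l:ℝ) + 1) ^ 8 * (1/2:ℝ) ^ l) := by
        refine Finset.sum_le_sum fun l hl => ?_
        refine (hd2 l (by simpa [Nat.lt_succ_iff] using hl) x hx).trans (le_of_eq ?_)
        ring
      _ ≤ (8 * A^4 * B / L^2) * S := by rw [← Finset.mul_sum]; gcongr
      _ ≤ K2 / n^2 := by
        rw [hK2, div_mul_eq_mul_div, div_le_div_iff₀ (by positivity) (by positivity)]
        have : 0 ≤ 8 * A^4 * B * S := by positivity
        have h2 : (n:ℝ)^2 ≤ 1024 * L^2 := by nlinarith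
        nlinarith
  have hnmem : (n:ℝ) ∈ Set.Icc ((n - L : ℕ):ℝ) ((n + L : ℕ):ℝ) := by
    constructor <;> norm_cast <;> omega
  refine ⟨(derivative p).eval (n:ℝ), (hp1 n hnmem).trans ?_, ?_⟩
  · gcongr
    have : 0 ≤ 2 * B + K2 + 1024 := by positivity
    linarith
  intro N
  by_cases hN : n - L ≤ N ∧ N ≤ n + L
  · have hNmem : (N:ℝ) ∈ Set.Icc ((n - L : ℕ):ℝ) ((n + L : ℕ):ℝ) := by
      constructor <;> norm_cast <;> omega
    have t := taylor_two (by positivity) hp2 hnmem hNmem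
    have e1 := hf N hN.1 hN.2
    have e2 := hf n (by omega) (by omega)
    have : |f N - f n - (derivative p).eval (n:ℝ) * (N - n)| ≤ B / n^2 + B / n^2 + K2 / n^2 * ((N:ℝ) - n)^2 := by
      rw [abs_le] at *
      constructor <;> linarith [e1.1, e1.2, e2.1, e2.2, t.1, t.2]
    refine this.trans ?_
    rw [div_mul_eq_mul_div, ← add_div, ← add_div]
    gcongr
    have h0 : 0 ≤ ((N:ℝ)-n)^2 := by positivity
    nlinarith [mul_nonneg hB.le h0, mul_nonneg hK10 h0]
  · have hL2 : (L:ℝ) ≤ |(N:ℝ) - n| := by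
      rcases not_and_or.mp hN with h | h
      · rw [abs_of_nonpos]
        · have : (N:ℝ) + L ≤ n := by norm_cast; omega
          linarith
        · have : (N:ℝ) ≤ n := by norm_cast; omega
          linarith
      · rw [abs_of_nonneg]
        · have : (n:ℝ) + L ≤ N := by norm_cast; omega
          linarith
        · have : (n:ℝ) ≤ N := by norm_cast; omega
          linarith
    have hsq : ((N:ℝ) - n)^2 = |(N:ℝ) - n|^2 := (sq_abs _).symm
    set u := |(N:ℝ) - n| with hu
    have a1 : |f N - f n| ≤ 1 := by
      rw [abs_le]; constructor <;> linarith [hf0 N, hf1 N, hf0 n, hf1 n]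
    have a2 : |(derivative p).eval (n:ℝ) * (N - n)| ≤ K1 / n * u := by
      rw [abs_mul]; gcongr; exact hp1 n hnmem
    have a3 : |f N - f n - (derivative p).eval (n:ℝ) * (N - n)| ≤ 1 + K1 / n * u := (abs_sub _ _).trans (add_le_add a1 a2)
    refine a3.trans ?_
    rw [le_div_iff₀ (by positivity), hsq]
    have b1 : (n:ℝ)^2 ≤ 1024 * u^2 := by nlinarith
    have b2 : (1 + K1 / n * u) * (n:ℝ)^2 = n^2 + K1 * u * n := by field_simp
    rw [b2]
    have b3 : (n:ℝ) ≤ 32 * u := by linarith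
    have b4 : K1 * u * n ≤ 32 * K1 * u^2 := by
      have : 0 ≤ K1 * u := by positivity
      nlinarith
    have : 0 ≤ (2 * B + K2) * (u^2 + 1) := by positivity
    nlinarith

lemma hasSum_of_eq' {f g : ℕ → ℝ} {a b : ℝ} (h : HasSum g b) (hf : ∀ k, f k = g k) (hab : a = b) :
    HasSum f a := by
  subst hab; rwa [funext hf]

lemma pois_hasSum (a : ℝ) : HasSum (fun k : ℕ => Real.exp (-a) * a ^ k / k.factorial) 1 := by
  have := (NormedSpace.expSeries_div_hasSum_exp (𝔸 := ℝ) a).mul_left (Real.exp (-a))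
  rw [← Real.exp_eq_exp_ℝ, ← Real.exp_add] at this
  simpa [mul_div_assoc] using this

lemma pois_hasSum_one (a : ℝ) : HasSum (fun k : ℕ => Real.exp (-a) * a ^ k / k.factorial * k) a := by
  rw [← hasSum_nat_add_iff' 1]
  have := (pois_hasSum a).mul_left a
  simp only [Finset.range_one, Finset.sum_singleton, Nat.cast_zero, mul_zero, sub_zero]
  refine hasSum_of_eq' this (fun k => ?_) (by simp)
  rw [Nat.factorial_succ]; push_cast
  field_simp
  ring

lemma pois_hasSum_two (a : ℝ) :
    HasSum (fun k : ℕ => Real.exp (-a) * a ^ k / k.factorial * (k * (k - 1))) (a ^ 2) := by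
  rw [← hasSum_nat_add_iff' 1]
  have := (pois_hasSum_one a).mul_left a
  simp only [Finset.range_one, Finset.sum_singleton, Nat.cast_zero, zero_mul, mul_zero, sub_zero]
  refine hasSum_of_eq' this (fun k => ?_) (by ring)
  rw [Nat.factorial_succ]; push_cast
  field_simp
  ring

lemma pois_compare {f : ℕ → ℝ} {n : ℕ} {a C : ℝ} (hn : 0 < n) (hf0 : ∀ N, 0 ≤ f N) (hf1 : ∀ N, f N ≤ 1)
    (h : ∀ N : ℕ, |f N - f n - a * (N - n)| ≤ C * ((N - n) ^ 2 + 1) / n ^ 2) :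
    |(∑' k : ℕ, Real.exp (-(n:ℝ)) * (n:ℝ) ^ k / k.factorial * f k) - f n| ≤ C * 2 / n := by
  set w : ℕ → ℝ := fun k => Real.exp (-(n:ℝ)) * (n:ℝ) ^ k / k.factorial with hw
  have hw0 : ∀ k, 0 ≤ w k := fun k => by positivity
  have h0 : HasSum w 1 := pois_hasSum n
  have h1 : HasSum (fun k => w k * k) n := pois_hasSum_one n
  have h2 : HasSum (fun k : ℕ => w k * (k * (k - 1))) ((n:ℝ)^2) := pois_hasSum_two n
  have hsq : HasSum (fun k : ℕ => w k * (((k:ℝ) - n)^2 + 1)) ((n:ℝ) + 1) := by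
    have := (h2.add (h1.mul_right (1 - 2 * (n:ℝ)))).add (h0.mul_right ((n:ℝ)^2 + 1))
    exact hasSum_of_eq' this (fun k => by ring) (by ring)
  have hlin : HasSum (fun k : ℕ => w k * (f n + a * ((k:ℝ) - n))) (f n) := by
    have := (h0.mul_right (f n - a * n)).add (h1.mul_right a)
    exact hasSum_of_eq' this (fun k => by ring) (by ring)
  have hfs : Summable fun k => w k * f k :=
    Summable.of_nonneg_of_le (fun k => mul_nonneg (hw0 k) (hf0 k))
      (fun k => mul_le_of_le_one_right (hw0 k) (hf1 k)) h0.summable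
  have hdiff := hfs.hasSum.sub hlin
  have hb : HasSum (fun k : ℕ => w k * (((k:ℝ) - n)^2 + 1) * (C / n^2)) (((n:ℝ) + 1) * (C / n^2)) := hsq.mul_right _
  have hn0 : (1:ℝ) ≤ n := by exact_mod_cast hn
  have hC : 0 ≤ C := by
    have := (abs_nonneg _).trans (h n)
    simp at this
    by_contra hC
    push Not at hC
    have : C / (n:ℝ)^2 < 0 := div_neg_of_neg_of_pos hC (by positivity)
    linarith
  have key : ‖(∑' k, w k * f k) - f n‖ ≤ (n + 1) * (C / n^2) := by
    rw [← hdiff.tsum_eq, ← hb.tsum_eq]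
    refine tsum_of_norm_bounded hb.summable.hasSum fun k => ?_
    rw [← mul_sub, norm_mul, Real.norm_of_nonneg (hw0 k), mul_assoc, Real.norm_eq_abs]
    refine mul_le_mul_of_nonneg_left ?_ (hw0 k)
    have e1 : f k - (f n + a * ((k:ℝ) - n)) = f k - f n - a * (k - n) := by ring
    rw [e1]
    refine (h k).trans (le_of_eq ?_)
    ring
  refine key.trans ?_
  rw [mul_div_assoc', div_le_div_iff₀ (by positivity) (by positivity)]
  nlinarith [mul_nonneg hC (show (0:ℝ) ≤ n * (n - 1) by nlinarith)]

end FinishPart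


section ApxPart
open Polynomial MeasureTheory

def Apx (I : Finset ℕ) (d : ℕ) (ε : ℝ) (f : ℕ → ℝ) : Prop :=
  ∃ p : ℝ[X], p.natDegree ≤ d ∧ ∀ N ∈ I, |f N - p.eval (N:ℝ)| ≤ ε

def evI (I : Finset ℕ) : ℝ[X] →ₗ[ℝ] (I → ℝ) where
  toFun p := fun N => p.eval ((N:ℕ):ℝ)
  map_add' p q := by ext; simp
  map_smul' c p := by ext; simp

lemma Apx.dual {I : Finset ℕ} {d : ℕ} {ε : ℝ} {f : ℕ → ℝ} (h : Apx I d ε f) (w : ℕ → ℝ)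
    (hw : ∀ p : ℝ[X], p.natDegree ≤ d → ∑ N ∈ I, w N * p.eval (N:ℝ) = 0) :
    |∑ N ∈ I, w N * f N| ≤ ε * ∑ N ∈ I, |w N| := by
  obtain ⟨p, hp, hb⟩ := h
  have : ∑ N ∈ I, w N * f N = ∑ N ∈ I, w N * (f N - p.eval (N:ℝ)) := by
    simp_rw [mul_sub]; rw [Finset.sum_sub_distrib, hw p hp, sub_zero]
  rw [this, Finset.mul_sum]
  refine (Finset.abs_sum_le_sum_abs _ _).trans (Finset.sum_le_sum fun N hN => ?_)
  rw [abs_mul, mul_comm]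
  exact mul_le_mul_of_nonneg_right (hb N hN) (abs_nonneg _)

lemma apx_of_dual {I : Finset ℕ} {d : ℕ} {ε : ℝ} {f : ℕ → ℝ} (hε : 0 ≤ ε)
    (h : ∀ w : ℕ → ℝ, (∀ p : ℝ[X], p.natDegree ≤ d → ∑ N ∈ I, w N * p.eval (N:ℝ) = 0) →
      |∑ N ∈ I, w N * f N| ≤ ε * ∑ N ∈ I, |w N|) : Apx I d ε f := by
  classical
  set S : Submodule ℝ (I → ℝ) := (degreeLE ℝ d).map (evI I) with hS
  have hScl : IsClosed (S : Set (I → ℝ)) := Submodule.closed_of_finiteDimensional S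
  set g : I → ℝ := fun N => f N with hg
  obtain ⟨φ, hφ1, hφ2⟩ := exists_dual_vector'' ℝ (Submodule.Quotient.mk (p := S) g)
  set w : ℕ → ℝ := fun N => if hN : N ∈ I then φ (Submodule.Quotient.mk (Pi.single ⟨N, hN⟩ 1)) else 0 with hw
  have hrep : ∀ v : I → ℝ, φ (Submodule.Quotient.mk v) = ∑ N : I, w N * v N := by
    intro v
    have : v = ∑ N : I, v N • (Pi.single N (1:ℝ) : I → ℝ) := by
      ext N; simp [Finset.sum_apply, Pi.single_apply]
    conv_lhs => rw [this]
    rw [← Submodule.mkQ_apply, map_sum, map_sum]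
    refine Finset.sum_congr rfl fun N _ => ?_
    rw [map_smul, map_smul]
    simp [hw, mul_comm]
  have hnorm : ‖Submodule.Quotient.mk (p := S) g‖ ≤ ε := by
    have h1 := h w (by
      intro p hp
      have hmem : evI I p ∈ S := ⟨p, mem_degreeLE.mpr (natDegree_le_iff_degree_le.mp hp), rfl⟩
      have := hrep (evI I p)
      rw [(Submodule.Quotient.mk_eq_zero S).mpr hmem, map_zero] at this
      rw [← Finset.sum_coe_sort]
      exact this.symm)
    have h2 : ∑ N ∈ I, |w N| ≤ 1 := by
      have := hrep (fun N => SignType.sign (w N))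
      have e : ∑ N : I, w N * (SignType.sign (w N) : ℝ) = ∑ N ∈ I, |w N| := by
        rw [← Finset.sum_coe_sort I (fun N => |w N|)]
        exact Finset.sum_congr rfl fun N _ => self_mul_sign _
      rw [e] at this
      rw [← this]
      refine (le_abs_self _).trans ?_
      refine (φ.le_opNorm _).trans ?_
      have : ‖Submodule.Quotient.mk (p := S) (fun N : I => (SignType.sign (w N) : ℝ))‖ ≤ 1 := by
        refine (Submodule.Quotient.norm_mk_le S _).trans ?_
        rw [pi_norm_le_iff_of_nonneg (by norm_num)]
        intro N
        rcases SignType.trichotomy (SignType.sign (w N)) with h | h | h <;> simp [h]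
      nlinarith [norm_nonneg φ, norm_nonneg (Submodule.Quotient.mk (p := S) (fun N : I => (SignType.sign (w N) : ℝ)))]
    have h3 := hrep g
    rw [hφ2] at h3
    have h4 : ∑ N : I, w N * g N = ∑ N ∈ I, w N * f N := by
      rw [← Finset.sum_coe_sort I]
    rw [h4] at h3
    have h5 : ‖Submodule.Quotient.mk (p := S) g‖ = ∑ N ∈ I, w N * f N := by simpa using h3
    rw [h5]
    refine (le_abs_self _).trans (h1.trans ?_)
    nlinarith
  have hinf : Metric.infDist g S ≤ ε := by
    have : ‖Submodule.Quotient.mk (p := S) g‖ = Metric.infDist g S :=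
      QuotientAddGroup.norm_mk (S := S.toAddSubgroup) g
    rwa [this] at hnorm
  obtain ⟨y, hy, hyd⟩ := hScl.exists_infDist_eq_dist ⟨0, S.zero_mem⟩ g
  obtain ⟨p, hp, rfl⟩ := hy
  refine ⟨p, natDegree_le_iff_degree_le.mpr (mem_degreeLE.mp hp), fun N hN => ?_⟩
  rw [hyd] at hinf
  have := (dist_pi_le_iff hε).mp hinf ⟨N, hN⟩
  rw [Real.dist_eq] at this
  exact this

lemma Apx.mono {I : Finset ℕ} {d d' : ℕ} {ε ε' : ℝ} {f : ℕ → ℝ} (h : Apx I d ε f)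
    (hd : d ≤ d') (hε : ε ≤ ε') : Apx I d' ε' f := by
  obtain ⟨p, hp, hb⟩ := h
  exact ⟨p, hp.trans hd, fun N hN => (hb N hN).trans hε⟩

lemma Apx.congr {I : Finset ℕ} {d : ℕ} {ε : ℝ} {f g : ℕ → ℝ} (h : Apx I d ε f)
    (hfg : ∀ N ∈ I, g N = f N) : Apx I d ε g := by
  obtain ⟨p, hp, hb⟩ := h
  exact ⟨p, hp, fun N hN => by rw [hfg N hN]; exact hb N hN⟩

lemma apx_of_le {I : Finset ℕ} {d : ℕ} {ε : ℝ} {f : ℕ → ℝ} (h : ∀ N ∈ I, |f N| ≤ ε) : Apx I d ε f :=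
  ⟨0, by simp, fun N hN => by simpa using h N hN⟩

lemma Apx.add {I : Finset ℕ} {d : ℕ} {ε ε' : ℝ} {f g : ℕ → ℝ} (hf : Apx I d ε f) (hg : Apx I d ε' g) :
    Apx I d (ε + ε') (fun N => f N + g N) := by
  obtain ⟨p, hp, hb⟩ := hf
  obtain ⟨q, hq, hc⟩ := hg
  refine ⟨p + q, natDegree_add_le_of_degree_le hp hq, fun N hN => ?_⟩
  rw [eval_add, add_sub_add_comm]
  exact (abs_add_le _ _).trans (add_le_add (hb N hN) (hc N hN))

lemma Apx.sum {I : Finset ℕ} {d : ℕ} {ι : Type*} (s : Finset ι) {ε : ι → ℝ} {f : ι → ℕ → ℝ}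
    (h : ∀ i ∈ s, Apx I d (ε i) (f i)) :
    Apx I d (∑ i ∈ s, ε i) (fun N => ∑ i ∈ s, f i N) := by
  classical
  induction s using Finset.induction_on with
  | empty => exact apx_of_le (by simp)
  | insert a s ha ih =>
    simp_rw [Finset.sum_insert ha]
    exact (h a (by simp)).add (ih fun i hi => h i (Finset.mem_insert_of_mem hi))

lemma Apx.mul_poly {I : Finset ℕ} {d k : ℕ} {ε B : ℝ} {f : ℕ → ℝ} (hf : Apx I d ε f) (q : ℝ[X])
    (hq : q.natDegree ≤ k) (hB : ∀ N ∈ I, |q.eval (N:ℝ)| ≤ B) :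
    Apx I (d + k) (B * ε) (fun N => q.eval (N:ℝ) * f N) := by
  obtain ⟨p, hp, hb⟩ := hf
  refine ⟨q * p, natDegree_mul_le.trans (by omega), fun N hN => ?_⟩
  rw [eval_mul, ← mul_sub, abs_mul]
  exact mul_le_mul (hB N hN) (hb N hN) (abs_nonneg _) ((abs_nonneg _).trans (hB N hN))

lemma Apx.integral {X : Type*} [MeasurableSpace X] {μ : Measure X} {I : Finset ℕ} {d : ℕ} {ε : X → ℝ}
    {f : X → ℕ → ℝ} (hf : ∀ N ∈ I, Integrable (fun x => f x N) μ) (hε : Integrable ε μ)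
    (hε0 : ∀ x, 0 ≤ ε x)
    (h : ∀ x, Apx I d (ε x) (f x)) : Apx I d (∫ x, ε x ∂μ) (fun N => ∫ x, f x N ∂μ) := by
  refine apx_of_dual (integral_nonneg hε0) fun w hw => ?_
  have e : ∑ N ∈ I, w N * ∫ x, f x N ∂μ = ∫ x, ∑ N ∈ I, w N * f x N ∂μ := by
    rw [integral_finsetSum]
    · simp_rw [integral_const_mul]
    · intro N hN; exact (hf N hN).const_mul _
  rw [e, ← integral_mul_const]
  refine (norm_integral_le_integral_norm (fun x => ∑ N ∈ I, w N * f x N)).trans ?_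
  refine integral_mono_of_nonneg (Filter.Eventually.of_forall fun x => norm_nonneg _) (hε.mul_const _)
    (Filter.Eventually.of_forall fun x => ?_)
  exact (h x).dual w hw

lemma exp_rem_nonneg {y : ℝ} (hy : 0 ≤ y) (m : ℕ) :
    Real.exp y - ∑ i ∈ Finset.range m, y ^ i / i.factorial ≤ (1/2) ^ m * Real.exp (2 * y) := by
  have h (z : ℝ) : HasSum (fun k : ℕ => z ^ k / k.factorial) (Real.exp z) := by
    have := NormedSpace.expSeries_div_hasSum_exp (𝔸 := ℝ) z
    rwa [← Real.exp_eq_exp_ℝ] at this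
  have h1 := (hasSum_nat_add_iff' m).mpr (h y)
  have h2 := ((hasSum_nat_add_iff' m).mpr (h (2 * y))).mul_left ((1/2:ℝ)^m)
  have := hasSum_le (fun i => ?_) h1 h2
  · refine this.trans ?_
    gcongr
    have : 0 ≤ ∑ i ∈ Finset.range m, (2 * y) ^ i / (i.factorial : ℝ) := Finset.sum_nonneg fun i _ => by positivity
    linarith
  · rw [mul_pow, pow_add 2, show (1/2:ℝ)^m * (2 ^ i * 2 ^ m * y ^ (i+m) / (i+m).factorial) = ((1/2)^m * 2^m) * (2 ^ i * (y ^ (i+m) / (i+m).factorial)) by ring,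
      ← mul_pow]
    norm_num
    exact le_mul_of_one_le_left (by positivity) (one_le_pow₀ (by norm_num))

lemma exp_rem (x : ℝ) (m : ℕ) :
    |Real.exp x - ∑ i ∈ Finset.range m, x ^ i / i.factorial| ≤ (1/2) ^ m * Real.exp (2 * |x|) := by
  refine le_trans ?_ (exp_rem_nonneg (abs_nonneg x) m)
  have := Complex.norm_exp_sub_sum_le_exp_norm_sub_sum (x:ℂ) m
  have e : Complex.exp (x:ℂ) - ∑ i ∈ Finset.range m, (x:ℂ) ^ i / i.factorial =
    ((Real.exp x - ∑ i ∈ Finset.range m, x ^ i / i.factorial : ℝ) : ℂ) := by push_cast; rfl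
  rw [e, Complex.norm_real, Complex.norm_real] at this
  exact this

lemma apx_pow {n L k d : ℕ} {ω : ℝ} (h0 : 0 ≤ ω) (h1 : ω ≤ 1) (hk : k + 8 * L ≤ n) (hL : 1 ≤ L) :
    Apx (Finset.Icc (n - L) (n + L)) d ((1/2) ^ d) (fun N => ω ^ (N - k)) := by
  rcases h0.eq_or_lt with h | hpos
  · refine apx_of_le fun N hN => ?_
    rw [← h, zero_pow (by simp at hN; omega)]; simp
  set lam := - Real.log ω with hlam
  have hlam0 : 0 ≤ lam := by have := Real.log_nonpos h0 h1; simp [hlam]; exact this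
  set K : ℝ := (n:ℝ) - k with hK
  have hLK : 8 * (L:ℝ) ≤ K := by
    have : (k:ℝ) + 8 * L ≤ n := by exact_mod_cast hk
    simp [hK]; linarith
  have hK0 : 0 ≤ K := by have : (0:ℝ) ≤ L := Nat.cast_nonneg _; linarith
  refine ⟨∑ i ∈ Finset.range (d + 1), C (Real.exp (-(lam * K)) * (-lam) ^ i / i.factorial) * (X - C (n:ℝ)) ^ i,
    ?_, ?_⟩
  · refine natDegree_sum_le_of_forall_le _ _ fun i hi => ?_
    refine (natDegree_C_mul_le _ _).trans ?_
    rw [natDegree_pow, natDegree_X_sub_C]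
    simp at hi; omega
  intro N hN
  simp only [Finset.mem_Icc] at hN
  set j : ℝ := (N:ℝ) - n with hj
  have hjL : |j| ≤ L := by
    rw [abs_le]
    have h2 : (n:ℝ) ≤ N + L := by norm_cast; omega
    have h3 : (N:ℝ) ≤ n + L := by norm_cast; omega
    constructor <;> simp [hj] <;> linarith
  have e1 : ω ^ (N - k) = Real.exp (-(lam * K)) * Real.exp (-lam * j) := by
    rw [← Real.exp_add, ← Real.rpow_natCast, Nat.cast_sub (by omega), Real.rpow_def_of_pos hpos]
    congr 1; simp [hlam, hK, hj]; ring
  have e2 : (∑ i ∈ Finset.range (d + 1), C (Real.exp (-(lam * K)) * (-lam) ^ i / i.factorial) * (X - C (n:ℝ)) ^ i).eval (N:ℝ)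
      = Real.exp (-(lam * K)) * ∑ i ∈ Finset.range (d + 1), (-lam * j) ^ i / i.factorial := by
    rw [eval_finsetSum, Finset.mul_sum]
    refine Finset.sum_congr rfl fun i _ => ?_
    rw [mul_pow]; simp [hj]; ring
  show |ω ^ (N - k) - _| ≤ _
  rw [e1, e2, ← mul_sub, abs_mul, abs_of_pos (Real.exp_pos _)]
  set x := -lam * j with hx
  have hr : |Real.exp x - ∑ i ∈ Finset.range (d + 1), x ^ i / i.factorial| ≤ (1/2) ^ (d+1) * Real.exp (2 * |x|) :=
    exp_rem x (d+1)
  have hxs : |x| ≤ lam * K / 8 := by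
    rw [hx, abs_mul, abs_neg, abs_of_nonneg hlam0]
    nlinarith
  set s := lam * K with hs
  have hs0 : 0 ≤ s := by positivity
  calc Real.exp (-s) * |Real.exp x - ∑ i ∈ Finset.range (d + 1), x ^ i / i.factorial|
      ≤ Real.exp (-s) * ((1/2) ^ (d+1) * Real.exp (2 * (s/8))) := by
        gcongr
        refine hr.trans ?_
        gcongr
    _ = (1/2)^(d+1) * Real.exp (-s + 2 * (s/8)) := by rw [Real.exp_add]; ring
    _ ≤ (1/2)^(d+1) * 1 := by
        gcongr
        rw [Real.exp_le_one_iff]; linarith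
    _ = (1/2)^(d+1) := mul_one _
    _ ≤ (1/2)^d := pow_le_pow_of_le_one (by norm_num) (by norm_num) (by omega)

end ApxPart


section SaPart
open MeasureTheory ProbabilityTheory

noncomputable abbrev gam : Measure ℝ := gaussianReal 0 1

lemma gam_cos (y : ℝ) : ∫ x, Real.cos (x * y) ∂gam = Real.exp (-(y ^ 2 / 2)) := by
  have h := charFun_gaussianReal (μ := 0) (v := 1) y
  rw [charFun_apply_real] at h
  have h2 := congrArg Complex.re h
  have h3 : (∫ x : ℝ, Complex.exp (y * x * Complex.I) ∂gam).re = ∫ x : ℝ, (Complex.exp (y * x * Complex.I)).re ∂gam := by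
    have hi : Integrable (fun x : ℝ => Complex.exp (y * x * Complex.I)) gam := by
      refine Integrable.of_bound (C := 1) (by fun_prop) (Filter.Eventually.of_forall fun x => ?_)
      rw [show (y:ℂ) * x * Complex.I = ((y * x : ℝ):ℂ) * Complex.I by push_cast; ring, Complex.norm_exp_ofReal_mul_I]
    exact (integral_re hi).symm
  rw [h3] at h2
  have e1 : ∀ x : ℝ, (Complex.exp (y * x * Complex.I)).re = Real.cos (x * y) := by
    intro x
    rw [show (y:ℂ) * x * Complex.I = ((x * y : ℝ):ℂ) * Complex.I by push_cast; ring, Complex.exp_ofReal_mul_I_re]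
  simp_rw [e1] at h2
  rw [h2]
  rw [show Complex.exp (y * ((0:ℝ):ℂ) * Complex.I - ((1:NNReal):ℂ) * y ^ 2 / 2) = ((Real.exp (-(y ^ 2 / 2)) : ℝ):ℂ) by
    push_cast; congr 1; simp]
  exact Complex.ofReal_re _

lemma integrable_of_bdd {X : Type*} [MeasurableSpace X] {μ : Measure X} [IsFiniteMeasure μ] {f : X → ℝ}
    (hf : Measurable f) {C : ℝ} (h : ∀ x, |f x| ≤ C) : Integrable f μ :=
  Integrable.of_bound (C := C) hf.aestronglyMeasurable (Filter.Eventually.of_forall h)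

lemma pk_hasSum {ρ : ℝ} (h0 : 0 ≤ ρ) (h1 : ρ < 1) (θ : ℝ) :
    HasSum (fun w : ℕ => ρ ^ w * Real.cos (w * θ))
      ((1 - ρ * Real.cos θ) / ((1 - ρ) ^ 2 + 2 * ρ * (1 - Real.cos θ))) := by
  set z : ℂ := (ρ:ℂ) * Complex.exp (θ * Complex.I) with hz
  have hn : ‖z‖ < 1 := by rw [hz, norm_mul, Complex.norm_exp_ofReal_mul_I]; simpa [abs_of_nonneg h0] using h1
  have := Complex.hasSum_re (hasSum_geometric_of_norm_lt_one hn)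
  have hD : 0 < (1 - ρ) ^ 2 + 2 * ρ * (1 - Real.cos θ) := by
    have : 0 ≤ 1 - Real.cos θ := by linarith [Real.cos_le_one θ]
    have : 0 < (1-ρ)^2 := by have : 0 < 1 - ρ := by linarith
                             positivity
    positivity
  convert this using 1
  · funext w
    rw [hz, mul_pow, ← Complex.exp_nat_mul, ← Complex.ofReal_pow, Complex.re_ofReal_mul]
    rw [show (w:ℂ) * (θ * Complex.I) = ((w * θ : ℝ):ℂ) * Complex.I by push_cast; ring, Complex.exp_ofReal_mul_I_re]
  · have hre : z.re = ρ * Real.cos θ := by rw [hz, Complex.re_ofReal_mul, Complex.exp_ofReal_mul_I_re]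
    have him : z.im = ρ * Real.sin θ := by rw [hz, Complex.im_ofReal_mul, Complex.exp_ofReal_mul_I_im]
    rw [Complex.inv_re, Complex.normSq_apply]
    simp only [Complex.sub_re, Complex.one_re, Complex.sub_im, Complex.one_im, hre, him]
    congr 1
    have := Real.sin_sq_add_cos_sq θ
    linear_combination (-ρ^2) * this

lemma exp_le_pk {ρ : ℝ} (h0 : 0 ≤ ρ) (h1 : ρ < 1) (θ : ℝ) :
    Real.exp (-(2 / (1 - ρ) ^ 2 * (1 - Real.cos θ))) ≤
      (1 - ρ) * (2 * ∑' w : ℕ, ρ ^ w * Real.cos (w * θ) - 1) := by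
  rw [(pk_hasSum h0 h1 θ).tsum_eq]
  set x := 1 - Real.cos θ with hx
  have hx0 : 0 ≤ x := by rw [hx]; linarith [Real.cos_le_one θ]
  have hcos : Real.cos θ = 1 - x := by rw [hx]; ring
  have hδ : 0 < 1 - ρ := by linarith
  have hD : 0 < (1 - ρ) ^ 2 + 2 * ρ * x := by positivity
  have e1 : (1 - ρ) * (2 * ((1 - ρ * Real.cos θ) / ((1 - ρ) ^ 2 + 2 * ρ * x)) - 1)
      = (1 + ρ) * ((1-ρ)^2 / ((1 - ρ) ^ 2 + 2 * ρ * x)) := by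
    rw [hcos]; field_simp; ring
  rw [e1]
  have e2 : (1-ρ)^2 / ((1 - ρ) ^ 2 + 2 * x) ≤ (1-ρ)^2 / ((1 - ρ) ^ 2 + 2 * ρ * x) := by
    gcongr; nlinarith
  have e3 : Real.exp (-(2 / (1 - ρ) ^ 2 * x)) ≤ (1-ρ)^2 / ((1 - ρ) ^ 2 + 2 * x) := by
    have h := Real.add_one_le_exp (2 / (1 - ρ) ^ 2 * x)
    rw [Real.exp_neg]
    rw [show (1-ρ)^2 / ((1 - ρ) ^ 2 + 2 * x) = (2 / (1 - ρ) ^ 2 * x + 1)⁻¹ by field_simp; ring]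
    exact inv_anti₀ (by positivity) h
  have e4 : 0 ≤ (1-ρ)^2 / ((1 - ρ) ^ 2 + 2 * ρ * x) := by positivity
  nlinarith

lemma gam_one_y {y W : ℝ} (hy : y ≠ 0) (hW : 2 ≤ W) :
    ∫ x, Real.exp (-(W / min (y ^ 2) 1 * (1 - Real.cos (x * y)))) ∂gam ≤ 12 / Real.sqrt W := by
  set η := min |y| 1 with hη
  have hη0 : 0 < η := lt_min (abs_pos.mpr hy) one_pos
  have hη1 : η ≤ 1 := min_le_right _ _
  have hηy : η ≤ |y| := min_le_left _ _
  have hη2 : min (y^2) 1 = η ^ 2 := by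
    rw [hη]
    rcases le_total |y| 1 with h | h
    · rw [min_eq_left h, min_eq_left, sq_abs]; rw [← sq_abs]; exact pow_le_one₀ (abs_nonneg _) h
    · rw [min_eq_right h, min_eq_right]; · norm_num
      rw [← sq_abs]; exact one_le_pow₀ h
  set sW := Real.sqrt W with hsW
  have hsW2 : sW ^ 2 = W := Real.sq_sqrt (by linarith)
  have hsW0 : 0 < sW := Real.sqrt_pos.mpr (by linarith)
  set s2 := Real.sqrt 2 with hs2
  have hs22 : s2 ^ 2 = 2 := Real.sq_sqrt (by norm_num)
  have hs20 : 0 < s2 := Real.sqrt_pos.mpr (by norm_num)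
  have hs2W : s2 ≤ sW := Real.sqrt_le_sqrt hW
  have hs2b : s2 ≤ 3/2 := by nlinarith
  set δ := η * (s2 / sW) with hδ
  have hδ0 : 0 < δ := by positivity
  have hδ1 : δ ≤ 1 := by
    have : s2 / sW ≤ 1 := (div_le_one hsW0).mpr hs2W
    have : 0 ≤ s2 / sW := by positivity
    nlinarith
  set ρ := 1 - δ with hρ
  have hρ0 : 0 ≤ ρ := by linarith
  have hρ1 : ρ < 1 := by linarith
  have hρδ : 1 - ρ = δ := by rw [hρ]; ring
  have ha : W / min (y^2) 1 = 2 / (1 - ρ)^2 := by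
    rw [hη2, hρδ, hδ, mul_pow, div_pow, hs22, hsW2]; field_simp
  rw [ha]
  have hmeas : ∀ w : ℕ, Measurable fun x : ℝ => ρ ^ w * Real.cos (w * (x * y)) := fun w => by fun_prop
  have hIntg : ∀ w : ℕ, Integrable (fun x : ℝ => ρ ^ w * Real.cos (w * (x * y))) gam := fun w =>
    integrable_of_bdd (hmeas w) (C := ρ ^ w) fun x => by
      rw [abs_mul, abs_of_nonneg (by positivity : 0 ≤ ρ^w)]
      exact mul_le_of_le_one_right (by positivity) (Real.abs_cos_le_one _)
  have hgs : Summable fun w : ℕ => ρ ^ w := summable_geometric_of_lt_one hρ0 hρ1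
  have hsn : Summable fun w : ℕ => ∫ x, ‖ρ ^ w * Real.cos (w * (x * y))‖ ∂gam := by
    refine Summable.of_nonneg_of_le (fun w => integral_nonneg fun x => norm_nonneg _) (fun w => ?_) hgs
    calc ∫ x, ‖ρ ^ w * Real.cos (w * (x * y))‖ ∂gam ≤ ∫ x, ρ ^ w ∂gam := by
          refine integral_mono (hIntg w).norm (integrable_const _) fun x => ?_
          rw [Real.norm_eq_abs, abs_mul, abs_of_nonneg (by positivity : 0 ≤ ρ^w)]
          exact mul_le_of_le_one_right (by positivity) (Real.abs_cos_le_one _)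
      _ = ρ ^ w := by simp
  have hsum := hasSum_integral_of_summable_integral_norm hIntg hsn
  have hterm : ∀ w : ℕ, ∫ x, ρ ^ w * Real.cos (w * (x * y)) ∂gam = ρ ^ w * Real.exp (-((w * y)^2 / 2)) := by
    intro w
    rw [integral_const_mul, ← gam_cos (w * y)]
    congr 2; funext x; ring_nf
  simp_rw [hterm] at hsum
  have hr0 : Real.exp (-η) < 1 := by rw [Real.exp_lt_one_iff]; linarith
  have hgeo := (hasSum_geometric_of_lt_one (Real.exp_pos _).le hr0).mul_left 2
  have hle : ∫ x, ∑' w : ℕ, ρ ^ w * Real.cos (w * (x * y)) ∂gam ≤ 2 * (1 - Real.exp (-η))⁻¹ := by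
    refine hasSum_le (fun w => ?_) hsum hgeo
    have hw0 : (0:ℝ) ≤ w := Nat.cast_nonneg _
    have h1 : ρ ^ w ≤ 1 := pow_le_one₀ hρ0 hρ1.le
    have h2 : Real.exp (-((w * y)^2 / 2)) ≤ 2 * Real.exp (-η) ^ w := by
      rw [← Real.exp_nat_mul]
      have h3 : -((w * y)^2 / 2) ≤ 1/2 + w * -η := by
        have : (w * η)^2 ≤ (w * y)^2 := by
          rw [mul_pow, mul_pow, ← sq_abs y]; gcongr
        nlinarith [sq_nonneg (w * η - 1)]
      have h4 : Real.exp (1/2) ≤ 2 := by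
        have : Real.exp (1/2) ^ 2 = Real.exp 1 := by rw [← Real.exp_nat_mul]; norm_num
        have h5 := Real.exp_one_lt_d9
        nlinarith [Real.exp_pos (1/2)]
      calc Real.exp (-((w * y)^2 / 2)) ≤ Real.exp (1/2 + w * -η) := Real.exp_le_exp.mpr h3
        _ = Real.exp (1/2) * Real.exp (w * -η) := Real.exp_add _ _
        _ ≤ _ := by gcongr
    calc _ ≤ 1 * Real.exp (-((w * y)^2 / 2)) := by gcongr
      _ ≤ _ := by rw [one_mul]; exact h2
  have hinv : (1 - Real.exp (-η))⁻¹ ≤ 2 / η := by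
    rw [inv_le_comm₀ (by linarith) (by positivity), inv_div]
    have h := Real.add_one_le_exp η
    rw [Real.exp_neg]
    have : (Real.exp η)⁻¹ ≤ (η + 1)⁻¹ := inv_anti₀ (by positivity) h
    have h3 : (η + 1)⁻¹ ≤ 1 - η/2 := by
      rw [inv_le_iff_one_le_mul₀ (by positivity)]; nlinarith
    linarith
  have hTint : Integrable (fun x : ℝ => ∑' w : ℕ, ρ ^ w * Real.cos (w * (x * y))) gam := by
    have hcont : Measurable fun x : ℝ => ∑' w : ℕ, ρ ^ w * Real.cos (w * (x * y)) := by
      have : (fun x : ℝ => ∑' w : ℕ, ρ ^ w * Real.cos (w * (x * y))) = fun x =>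
        (1 - ρ * Real.cos (x*y)) / ((1 - ρ) ^ 2 + 2 * ρ * (1 - Real.cos (x*y))) := by
        funext x; exact (pk_hasSum hρ0 hρ1 _).tsum_eq
      rw [this]; fun_prop
    refine integrable_of_bdd hcont (C := ∑' w : ℕ, ρ^w) fun x => ?_
    rw [← Real.norm_eq_abs]
    refine tsum_of_norm_bounded hgs.hasSum fun w => ?_
    rw [Real.norm_eq_abs, abs_mul, abs_of_nonneg (by positivity : 0 ≤ ρ^w)]
    exact mul_le_of_le_one_right (by positivity) (Real.abs_cos_le_one _)
  calc ∫ x, Real.exp (-(2 / (1 - ρ)^2 * (1 - Real.cos (x * y)))) ∂gam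
      ≤ ∫ x, (1 - ρ) * (2 * ∑' w : ℕ, ρ ^ w * Real.cos (w * (x * y)) - 1) ∂gam := by
        refine integral_mono_of_nonneg (Filter.Eventually.of_forall fun x => (Real.exp_pos _).le)
          (((hTint.const_mul 2).sub (integrable_const 1)).const_mul _)
          (Filter.Eventually.of_forall fun x => exp_le_pk hρ0 hρ1 _)
    _ = δ * (2 * (∫ x, ∑' w : ℕ, ρ ^ w * Real.cos (w * (x * y)) ∂gam) - 1) := by
        rw [integral_const_mul, integral_sub (hTint.const_mul 2) (integrable_const 1), integral_const_mul, hρδ]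
        simp
    _ ≤ δ * (8 / η) := by
        gcongr
        have : 2 / η = (8 / η) / 4 := by ring
        nlinarith
    _ = 8 * s2 / sW := by rw [hδ]; field_simp
    _ ≤ 12 / sW := by gcongr; linarith

/-- (S-a) -/
lemma W_bound {Λ : Measure ℝ} [IsFiniteMeasure Λ] {q : ℝ} (hq0 : 0 < q) (hq1 : q ≤ 1)
    (h : q ≤ ∫ x, Real.exp (-∫ y, (1 - Real.cos (x * y)) ∂Λ) ∂gam) :
    ∫ y, min (y ^ 2) 1 ∂Λ ≤ 144 / q ^ 2 := by
  set W := ∫ y, min (y ^ 2) 1 ∂Λ with hW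
  have hq2 : q^2 ≤ 1 := pow_le_one₀ hq0.le hq1
  rcases lt_or_ge W 2 with h2 | h2
  · have : (144:ℝ) ≤ 144 / q^2 := by rw [le_div_iff₀ (by positivity)]; nlinarith
    linarith
  have hW0 : 0 < W := by linarith
  set om : ℝ → ℝ := fun y => min (y^2) 1 with hom
  have hom0 : ∀ y, 0 ≤ om y := fun y => le_min (sq_nonneg _) zero_le_one
  have hom1 : ∀ y, om y ≤ 1 := fun y => min_le_right _ _
  have homm : Measurable om := by fun_prop
  have homi : Integrable om Λ := integrable_of_bdd homm (C := 1) fun y => by rw [abs_of_nonneg (hom0 y)]; exact hom1 y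
  set ν : Measure ℝ := Λ.withDensity (fun y => ENNReal.ofReal (om y / W)) with hν
  have hνp : IsProbabilityMeasure ν := by
    constructor
    rw [hν, withDensity_apply _ MeasurableSet.univ, Measure.restrict_univ,
      ← ofReal_integral_eq_lintegral_ofReal (homi.div_const W) (Filter.Eventually.of_forall fun y => div_nonneg (hom0 y) hW0.le),
      integral_div]
    rw [show (∫ a, om a ∂Λ) = W from rfl, div_self hW0.ne']; simp
  have hνint : ∀ g : ℝ → ℝ, ∫ y, g y ∂ν = ∫ y, om y / W * g y ∂Λ := by
    intro g
    rw [hν, integral_withDensity_eq_integral_toReal_smul (by fun_prop) (Filter.Eventually.of_forall fun y => ENNReal.ofReal_lt_top)]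
    refine integral_congr_ae (Filter.Eventually.of_forall fun y => ?_)
    simp only [smul_eq_mul]
    rw [ENNReal.toReal_ofReal (div_nonneg (hom0 y) hW0.le)]
  have hν0 : ∀ᵐ y ∂ν, y ≠ 0 := by
    rw [ae_iff]; simp only [not_not, Set.ofPred_eq_eq_singleton]
    rw [hν, withDensity_apply _ (measurableSet_singleton _)]
    simp [hom]
  set u : ℝ → ℝ → ℝ := fun x y => W / om y * (1 - Real.cos (x * y)) with hu
  have hu0 : ∀ x y, 0 ≤ u x y := fun x y => mul_nonneg (div_nonneg hW0.le (hom0 y)) (by linarith [Real.cos_le_one (x*y)])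
  have hum : Measurable (Function.uncurry u) := by
    simp only [hu, Function.uncurry_def]; fun_prop
  have hubd : ∀ x y, u x y ≤ W * (2 + x^2) := by
    intro x y
    have h1 : 1 - Real.cos (x*y) ≤ om y * (2 + x^2) := by
      have := Real.one_sub_sq_div_two_le_cos (x := x * y)
      have := Real.neg_one_le_cos (x*y)
      simp only [hom]
      rcases le_total (y^2) 1 with h | h
      · rw [min_eq_left h]; nlinarith [sq_nonneg y, sq_nonneg (x*y)]
      · rw [min_eq_right h]; nlinarith [sq_nonneg x]
    rcases (hom0 y).eq_or_lt with h | h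
    · simp only [hu]; rw [← h]; simp; positivity
    · simp only [hu]
      rw [div_mul_eq_mul_div, div_le_iff₀ h]
      nlinarith
  have hjen : ∀ x, Real.exp (-∫ y, (1 - Real.cos (x * y)) ∂Λ) ≤ ∫ y, Real.exp (-u x y) ∂ν := by
    intro x
    have hui : Integrable (u x) ν := integrable_of_bdd (hum.comp (by fun_prop : Measurable fun y => (x, y))) (C := W * (2+x^2))
      fun y => by rw [abs_of_nonneg (hu0 x y)]; exact hubd x y
    have e : ∫ y, u x y ∂ν = ∫ y, (1 - Real.cos (x * y)) ∂Λ := by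
      rw [hνint]
      refine integral_congr_ae (Filter.Eventually.of_forall fun y => ?_)
      simp only [hu]
      by_cases hy : y = 0
      · simp [hy]
      · have : om y ≠ 0 := (lt_min (by positivity) one_pos : 0 < om y).ne'
        field_simp
    rw [← e, ← integral_neg]
    refine convexOn_exp.map_integral_le Real.continuous_exp.continuousOn isClosed_univ (by simp) hui.neg ?_
    refine integrable_of_bdd (Real.measurable_exp.comp (hum.comp (by fun_prop : Measurable fun y => (x, y))).neg) (C := 1) fun y => ?_
    simp only [Function.comp, abs_of_pos (Real.exp_pos _)]
    rw [Real.exp_le_one_iff]; simpa using hu0 x y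
  have hexpint : Integrable (Function.uncurry fun x y => Real.exp (-u x y)) (gam.prod ν) := by
    refine integrable_of_bdd (Real.measurable_exp.comp hum.neg) (C := 1) fun p => ?_
    simp only [Function.uncurry, abs_of_pos (Real.exp_pos _)]
    rw [Real.exp_le_one_iff]; simpa using hu0 p.1 p.2
  have hfin : q ≤ 12 / Real.sqrt W := by
    refine h.trans ?_
    calc _ ≤ ∫ x, ∫ y, Real.exp (-u x y) ∂ν ∂gam :=
          integral_mono_of_nonneg (Filter.Eventually.of_forall fun x => (Real.exp_pos _).le)
            hexpint.integral_prod_left (Filter.Eventually.of_forall hjen)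
      _ = ∫ y, ∫ x, Real.exp (-u x y) ∂gam ∂ν := integral_integral_swap hexpint
      _ ≤ ∫ y, 12 / Real.sqrt W ∂ν := by
          refine integral_mono_ae hexpint.swap.integral_prod_left (integrable_const _) ?_
          filter_upwards [hν0] with y hy
          exact gam_one_y hy h2
      _ = _ := by simp
  have hs := Real.sq_sqrt hW0.le
  have hs0 : 0 < Real.sqrt W := Real.sqrt_pos.mpr hW0
  rw [le_div_iff₀ hs0] at hfin
  rw [le_div_iff₀ (by positivity)]
  have : (q * Real.sqrt W)^2 ≤ 12^2 := by gcongr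
  rw [mul_pow, hs] at this; linarith

end SaPart


section SbPart
open MeasureTheory ProbabilityTheory

/-- points not near the half-lattice generated by `u 0, …, u (k-1)` -/
def OutS (u : ℕ → ℝ) (k : ℕ) : Set ℝ :=
  {y | ∀ a : Fin k → ℤ, (∀ j, |a j| ≤ 2) →
    1 < |y - ∑ j, (a j : ℝ) * u j| ∧ 1 < |2 * y - ∑ j, (a j : ℝ) * u j|}

lemma OutS_meas (u : ℕ → ℝ) (k : ℕ) : MeasurableSet (OutS u k) := by
  have : OutS u k = ⋂ a : Fin k → ℤ, ⋂ _ : (∀ j, |a j| ≤ 2),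
      ({y | 1 < |y - ∑ j, (a j : ℝ) * u j|} ∩ {y | 1 < |2 * y - ∑ j, (a j : ℝ) * u j|}) := by
    ext y; simp [OutS]
  rw [this]
  refine MeasurableSet.iInter fun a => MeasurableSet.iInter fun _ => ?_
  refine (measurableSet_lt (by fun_prop) (by fun_prop)).inter (measurableSet_lt (by fun_prop) (by fun_prop))

lemma OutS_congr {u v : ℕ → ℝ} {k : ℕ} (h : ∀ j < k, u j = v j) : OutS u k = OutS v k := by
  have : ∀ a : Fin k → ℤ, ∑ j, (a j : ℝ) * u j = ∑ j, (a j : ℝ) * v j := fun a =>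
    Finset.sum_congr rfl fun j _ => by rw [h j j.2]
  simp only [OutS, this]

lemma OutS_neg (u : ℕ → ℝ) (k : ℕ) {y : ℝ} (hy : y ∈ OutS u k) : -y ∈ OutS u k := by
  intro a ha
  have := hy (fun j => - a j) (fun j => by simpa using ha j)
  simp only [Int.cast_neg, neg_mul, Finset.sum_neg_distrib] at this
  constructor
  · rw [← abs_neg]; convert this.1 using 2; ring
  · rw [← abs_neg]; convert this.2 using 2; ring

lemma sep_aux {u : ℕ → ℝ} : ∀ r : ℕ, (∀ j < r, u j ∈ OutS u j) → ∀ w : ℕ → ℤ, (∀ j, |w j| ≤ 2) →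
    (∃ j < r, w j ≠ 0) → 1 < |∑ j ∈ Finset.range r, (w j : ℝ) * u j| := by
  intro r
  induction r with
  | zero => rintro _ w _ ⟨j, hj, _⟩; omega
  | succ r ih =>
    intro hu w hw hex
    by_cases h0 : w r = 0
    · rw [Finset.sum_range_succ, h0]
      obtain ⟨j, hj, hj0⟩ := hex
      have hjr : j ≠ r := fun h => hj0 (h ▸ h0)
      have := ih (fun j hj => hu j (by omega)) w hw ⟨j, by omega, hj0⟩
      simpa using this
    · have h := hu r (by omega)
      rw [Finset.sum_range_succ, Finset.sum_range]
      have hwr := abs_le.mp (hw r)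
      have hcase : w r = 1 ∨ w r = 2 ∨ w r = -1 ∨ w r = -2 := by omega
      rcases hcase with e | e | e | e
      · have := (h (fun j : Fin r => - w j) (fun j => by simpa using hw j)).1
        simp only [Int.cast_neg, neg_mul, Finset.sum_neg_distrib] at this
        rw [e]; convert this using 2; push_cast; ring
      · have := (h (fun j : Fin r => - w j) (fun j => by simpa using hw j)).2
        simp only [Int.cast_neg, neg_mul, Finset.sum_neg_distrib] at this
        rw [e]; convert this using 2; push_cast; ring
      · have := (h (fun j : Fin r => w j) (fun j => by simpa using hw j)).1
        rw [e, ← abs_neg]; convert this using 2; push_cast; ring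
      · have := (h (fun j : Fin r => w j) (fun j => by simpa using hw j)).2
        rw [e, ← abs_neg]; convert this using 2; push_cast; ring

lemma summable_exp_int : Summable fun n : ℤ => 6 * Real.exp (-|(n:ℝ)|) := by
  refine Summable.mul_left 6 ?_
  have h : Summable fun n : ℕ => Real.exp (-(n:ℝ)) := Real.summable_exp_neg_nat
  refine Summable.of_nat_of_neg ?_ ?_
  · simpa using h
  · simpa using h

noncomputable def Cs : ℝ := ∑' n : ℤ, 6 * Real.exp (-|(n:ℝ)|)

lemma exp_floor (s : ℝ) : Real.exp (-(s ^ 2 / 2)) ≤ 6 * Real.exp (-|((⌊s⌋:ℤ):ℝ)|) := by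
  have h1 : |((⌊s⌋:ℤ):ℝ)| ≤ |s| + 1 := by
    have a := Int.floor_le s
    have b := Int.lt_floor_add_one s
    have : |((⌊s⌋:ℤ):ℝ) - s| ≤ 1 := by rw [abs_le]; constructor <;> linarith
    have := abs_sub_abs_le_abs_sub ((⌊s⌋:ℤ):ℝ) s
    linarith
  have h2 : -(s^2/2) ≤ 3/2 + -|((⌊s⌋:ℤ):ℝ)| := by
    have := sq_abs s
    nlinarith [sq_nonneg (|s| - 1)]
  have h3 : Real.exp (3/2) ≤ 6 := by
    have : Real.exp (3/2) ^ 2 = Real.exp 1 ^ 3 := by rw [← Real.exp_nat_mul, ← Real.exp_nat_mul]; norm_num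
    have h5 := Real.exp_one_lt_d9
    have h6 : Real.exp 1 ^ 3 ≤ 2.72 ^ 3 := by gcongr; linarith
    have : Real.exp (3/2) ^ 2 ≤ 6^2 := by rw [this]; norm_num at h6 ⊢; linarith
    exact (le_abs_self _).trans (abs_le_of_sq_le_sq this (by norm_num))
  calc _ ≤ Real.exp (3/2 + -|((⌊s⌋:ℤ):ℝ)|) := Real.exp_le_exp.mpr h2
    _ = Real.exp (3/2) * Real.exp (-|((⌊s⌋:ℤ):ℝ)|) := Real.exp_add _ _
    _ ≤ _ := by gcongr

lemma prod_cos_bound {u : ℕ → ℝ} {r : ℕ} (hu : ∀ j < r, u j ∈ OutS u j) :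
    ∫ x, ∏ j ∈ Finset.range r, (3/5 + 2/5 * Real.cos (x * u j)) ∂gam ≤ Cs * (3/5) ^ r := by
  set A : Finset ℤ := {-1, 0, 1} with hA
  set p : ℤ → ℝ := fun z => if z = 0 then 3/5 else 1/5 with hp
  have hp0 : ∀ z, 0 ≤ p z := fun z => by simp only [hp]; split_ifs <;> norm_num
  have hp1 : ∀ z, p z ≤ 3/5 := fun z => by simp only [hp]; split_ifs <;> norm_num
  set Z := Fintype.piFinset (fun _ : Fin r => A) with hZ
  set S : (Fin r → ℤ) → ℝ := fun z => ∑ j, (z j : ℝ) * u j with hS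
  have hexp : ∀ x : ℝ, ∏ j ∈ Finset.range r, (3/5 + 2/5 * Real.cos (x * u j))
      = ∑ z ∈ Z, (∏ j, p (z j)) * Real.cos (x * S z) := by
    intro x
    have h1 : ∀ y : ℝ, ((3/5 + 2/5 * Real.cos y : ℝ):ℂ) = ∑ z ∈ A, (p z : ℂ) * Complex.exp (((z * y : ℝ):ℂ) * Complex.I) := by
      intro y
      rw [hA, Finset.sum_insert (by decide), Finset.sum_insert (by decide), Finset.sum_singleton]
      simp only [hp]
      norm_num
      rw [Complex.cos]
      ring_nf
    have h2 : ((∏ j ∈ Finset.range r, (3/5 + 2/5 * Real.cos (x * u j)) : ℝ) : ℂ)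
      = ∑ z ∈ Z, ((∏ j, p (z j) : ℝ) : ℂ) * Complex.exp ((((x * S z) : ℝ):ℂ) * Complex.I) := by
      rw [Finset.prod_range, Complex.ofReal_prod]
      simp_rw [h1]
      rw [Finset.prod_univ_sum]
      refine Finset.sum_congr rfl fun z _ => ?_
      rw [Finset.prod_mul_distrib, ← Complex.exp_sum, Complex.ofReal_prod]
      congr 2
      rw [← Finset.sum_mul]; congr 1
      rw [hS, Finset.mul_sum, Complex.ofReal_sum]
      refine Finset.sum_congr rfl fun j _ => ?_
      congr 1; ring
    have h3 := congrArg Complex.re h2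
    rw [Complex.ofReal_re, Complex.re_sum] at h3
    rw [h3]
    refine Finset.sum_congr rfl fun z _ => ?_
    rw [Complex.re_ofReal_mul, Complex.exp_ofReal_mul_I_re]
  simp_rw [hexp]
  rw [integral_finsetSum _ (fun z _ => (integrable_of_bdd (by fun_prop) (C := 1) (fun x => Real.abs_cos_le_one _)).const_mul _)]
  simp_rw [integral_const_mul, gam_cos]
  have hinj : Set.InjOn (fun z => ⌊S z⌋) (Z : Set (Fin r → ℤ)) := by
    intro z hz z' hz' he
    by_contra hne
    have hex : ∃ j, z j ≠ z' j := Function.ne_iff.mp hne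
    simp only [hZ, Finset.mem_coe, Fintype.mem_piFinset, hA, Finset.mem_insert, Finset.mem_singleton] at hz hz'
    set w : ℕ → ℤ := fun j => if h : j < r then z ⟨j, h⟩ - z' ⟨j, h⟩ else 0 with hw
    have hs : ∑ j ∈ Finset.range r, (w j : ℝ) * u j = S z - S z' := by
      rw [Finset.sum_range, hS, ← Finset.sum_sub_distrib]
      refine Finset.sum_congr rfl fun j _ => ?_
      simp [hw]; ring
    have h1 := sep_aux r hu w (fun j => by
      simp only [hw]; split_ifs with h
      · have := hz ⟨j, h⟩; have := hz' ⟨j, h⟩; rw [abs_le]; omega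
      · simp) (by
      obtain ⟨j, hj⟩ := hex
      exact ⟨j, j.2, by simp only [hw, j.2, dif_pos]; exact sub_ne_zero.mpr hj⟩)
    rw [hs] at h1
    have := Int.abs_sub_lt_one_of_floor_eq_floor he
    linarith
  calc ∑ z ∈ Z, (∏ j, p (z j)) * Real.exp (-(S z ^ 2 / 2))
      ≤ ∑ z ∈ Z, (3/5)^r * (6 * Real.exp (-|((⌊S z⌋:ℤ):ℝ)|)) := by
        refine Finset.sum_le_sum fun z _ => ?_
        refine mul_le_mul ?_ (exp_floor _) (Real.exp_pos _).le (by positivity)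
        calc ∏ j, p (z j) ≤ ∏ _j : Fin r, (3/5 : ℝ) := Finset.prod_le_prod (fun j _ => hp0 _) (fun j _ => hp1 _)
          _ = _ := by rw [Finset.prod_const, Finset.card_univ, Fintype.card_fin]
    _ = (3/5)^r * ∑ n ∈ Z.image (fun z => ⌊S z⌋), (6 * Real.exp (-|(n:ℝ)|)) := by
        rw [Finset.sum_image hinj, Finset.mul_sum]
    _ ≤ (3/5)^r * Cs := by
        gcongr
        exact summable_exp_int.sum_le_tsum _ (fun n _ => by positivity)
    _ = _ := mul_comm _ _

lemma exp_neg_le_lin {x : ℝ} (h0 : 0 ≤ x) (h2 : x ≤ 2) : Real.exp (-x) ≤ 1 - 2/5 * x := by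
  have h := convexOn_exp.2 (Set.mem_univ (0:ℝ)) (Set.mem_univ (-2:ℝ)) (show 0 ≤ 1 - x/2 by linarith)
    (show 0 ≤ x/2 by linarith) (by ring)
  simp only [smul_eq_mul, mul_zero, zero_add, Real.exp_zero, mul_one] at h
  rw [show x / 2 * -2 = -x by ring] at h
  have h3 : Real.exp (-2) ≤ 1/5 := by
    rw [Real.exp_neg, show (1:ℝ)/5 = 5⁻¹ by norm_num]
    refine inv_anti₀ (by norm_num) ?_
    have h5 := Real.exp_one_gt_d9
    have : Real.exp 2 = Real.exp 1 ^ 2 := by rw [← Real.exp_nat_mul]; norm_num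
    rw [this]; nlinarith
  nlinarith

/-- (S-b) -/
lemma structure_lemma {Λ : Measure ℝ} [IsFiniteMeasure Λ] {q : ℝ} {r : ℕ} (hr : 1 ≤ r)
    (hq : Cs * (3/5) ^ r < q)
    (h : q ≤ ∫ x, Real.exp (-∫ y, (1 - Real.cos (x * y)) ∂Λ) ∂gam) :
    ∃ k < r, ∃ u : ℕ → ℝ, Λ.real (OutS u k) < r := by
  by_contra hcon
  push Not at hcon
  have hr0 : (0:ℝ) < r := by exact_mod_cast hr
  set ψ : ℝ → ℝ := fun x => ∫ y, (1 - Real.cos (x * y)) ∂Λ with hψ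
  have hIntg : ∀ (x : ℝ) (μ : Measure ℝ) [IsFiniteMeasure μ], Integrable (fun y => 1 - Real.cos (x * y)) μ := fun x μ _ =>
    integrable_of_bdd (by fun_prop) (C := 2) fun y => by
      rw [abs_le]; constructor <;> linarith [Real.cos_le_one (x*y), Real.neg_one_le_cos (x*y)]
  have hnn : ∀ x y : ℝ, 0 ≤ 1 - Real.cos (x * y) := fun x y => by linarith [Real.cos_le_one (x*y)]
  have hψ0 : ∀ x, 0 ≤ ψ x := fun x => integral_nonneg fun y => hnn x y
  have hψm : Measurable ψ := by
    have : StronglyMeasurable fun p : ℝ × ℝ => 1 - Real.cos (p.1 * p.2) := by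
      apply Measurable.stronglyMeasurable; fun_prop
    exact this.integral_prod_right.measurable
  have key : ∀ k ≤ r, ∃ u : ℕ → ℝ, (∀ j < k, u j ∈ OutS u j) ∧
      q ≤ ∫ x, Real.exp (-((1 - k / r) * ψ x)) * ∏ j ∈ Finset.range k, (3/5 + 2/5 * Real.cos (x * u j)) ∂gam := by
    intro k
    induction k with
    | zero =>
      intro _
      refine ⟨fun _ => 0, by simp, ?_⟩
      simpa using h
    | succ k ih =>
      intro hk
      obtain ⟨u, hu, hq'⟩ := ih (by omega)
      set O := OutS u k with hO
      have hv := hcon k (by omega) u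
      set v := Λ.real O with hvdef
      have hv0 : 0 < v := lt_of_lt_of_le hr0 hv
      set w : ℝ → ℝ := fun x => Real.exp (-((1 - (k+1:ℕ) / r) * ψ x)) * ∏ j ∈ Finset.range k, (3/5 + 2/5 * Real.cos (x * u j)) with hw
      have hfac : ∀ x y : ℝ, 0 ≤ 3/5 + 2/5 * Real.cos (x * y) ∧ 3/5 + 2/5 * Real.cos (x * y) ≤ 1 := fun x y => by
        constructor <;> linarith [Real.cos_le_one (x*y), Real.neg_one_le_cos (x*y)]
      have hprod0 : ∀ x, 0 ≤ ∏ j ∈ Finset.range k, (3/5 + 2/5 * Real.cos (x * u j)) := fun x =>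
        Finset.prod_nonneg fun j _ => (hfac x _).1
      have hprod1 : ∀ x, ∏ j ∈ Finset.range k, (3/5 + 2/5 * Real.cos (x * u j)) ≤ 1 := fun x =>
        Finset.prod_le_one (fun j _ => (hfac x _).1) fun j _ => (hfac x _).2
      have hw0 : ∀ x, 0 ≤ w x := fun x => mul_nonneg (Real.exp_pos _).le (hprod0 x)
      have hk1 : 0 ≤ 1 - ((k+1:ℕ):ℝ) / r := by
        rw [sub_nonneg, div_le_one hr0]; exact_mod_cast hk
      have hw1 : ∀ x, w x ≤ 1 := fun x => by
        refine mul_le_one₀ ?_ (hprod0 x) (hprod1 x)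
        rw [Real.exp_le_one_iff]; have := mul_nonneg hk1 (hψ0 x); linarith
      have hwm : Measurable w := by
        refine Measurable.mul (by fun_prop) ?_
        exact Finset.measurable_fun_prod _ fun j _ => by fun_prop
      -- pointwise
      have hpt : ∀ x, Real.exp (-((1 - k / r) * ψ x)) * ∏ j ∈ Finset.range k, (3/5 + 2/5 * Real.cos (x * u j))
          ≤ ⨍ y in O, w x * (3/5 + 2/5 * Real.cos (x * y)) ∂Λ := by
        intro x
        set A := ∫ y in O, (1 - Real.cos (x * y)) ∂Λ with hAdef
        have hA0 : 0 ≤ A := integral_nonneg fun y => hnn x y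
        have hAψ : A ≤ ψ x := setIntegral_le_integral (hIntg x Λ) (Filter.Eventually.of_forall fun y => hnn x y)
        have hA2 : A ≤ 2 * v := by
          calc A ≤ ∫ y in O, (2:ℝ) ∂Λ := by
                refine integral_mono (hIntg x _) (integrable_const _) fun y => ?_
                simp only; linarith [Real.neg_one_le_cos (x*y)]
            _ = 2 * v := by simp [hvdef, mul_comm]
        have havg : ⨍ y in O, w x * (3/5 + 2/5 * Real.cos (x * y)) ∂Λ = w x * (1 - 2/5 * (A / v)) := by
          rw [setAverage_eq, ← hvdef, smul_eq_mul, integral_const_mul]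
          have : ∫ y in O, (3/5 + 2/5 * Real.cos (x * y)) ∂Λ = v - 2/5 * A := by
            rw [hAdef, ← integral_const_mul]
            have e : v = ∫ y in O, (1:ℝ) ∂Λ := by simp [hvdef]
            rw [e, ← integral_sub (integrable_const _) ((hIntg x _).const_mul _)]
            congr 1; funext y; ring
          rw [this]; field_simp
        rw [havg]
        have h1 : Real.exp (-(A/v)) ≤ 1 - 2/5 * (A/v) := exp_neg_le_lin (by positivity) (by rw [div_le_iff₀ hv0]; exact hA2)
        have h2 : Real.exp (-((1 - k / r) * ψ x)) ≤ Real.exp (-((1 - (k+1:ℕ) / r) * ψ x)) * Real.exp (-(A/v)) := by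
          rw [← Real.exp_add, Real.exp_le_exp]
          have : A / v ≤ ψ x / r := by
            have := hψ0 x
            gcongr
          push_cast
          have e : (1 - (k:ℝ)/r) * ψ x = (1 - ((k:ℝ)+1)/r) * ψ x + ψ x / r := by ring
          linarith
        calc _ ≤ (Real.exp (-((1 - (k+1:ℕ) / r) * ψ x)) * (1 - 2/5 * (A/v))) * ∏ j ∈ Finset.range k, (3/5 + 2/5 * Real.cos (x * u j)) := by
              refine mul_le_mul_of_nonneg_right (h2.trans ?_) (hprod0 x)
              gcongr
          _ = _ := by rw [hw]; ring
      have hjm : Measurable fun z : ℝ × ℝ => w z.1 * (3/5 + 2/5 * Real.cos (z.1 * z.2)) := by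
        have : Measurable fun z : ℝ × ℝ => w z.1 := hwm.comp measurable_fst
        refine Measurable.mul this (by fun_prop)
      have hji : Integrable (fun z : ℝ × ℝ => w z.1 * (3/5 + 2/5 * Real.cos (z.1 * z.2))) (gam.prod (Λ.restrict O)) :=
        integrable_of_bdd hjm (C := 1) fun z => by
          rw [abs_of_nonneg (mul_nonneg (hw0 _) (hfac _ _).1)]
          exact mul_le_one₀ (hw1 _) (hfac _ _).1 (hfac _ _).2
      have hq2 : q ≤ ∫ x, ⨍ y in O, w x * (3/5 + 2/5 * Real.cos (x * y)) ∂Λ ∂gam := by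
        refine hq'.trans ?_
        refine integral_mono_of_nonneg (Filter.Eventually.of_forall fun x => mul_nonneg (Real.exp_pos _).le (hprod0 x)) ?_
          (Filter.Eventually.of_forall hpt)
        simp_rw [setAverage_eq]
        exact (hji.integral_prod_left).smul (Λ.real O)⁻¹
      have hq3 : q ≤ ⨍ y in O, ∫ x, w x * (3/5 + 2/5 * Real.cos (x * y)) ∂gam ∂Λ := by
        refine hq2.trans (le_of_eq ?_)
        simp_rw [setAverage_eq]
        rw [integral_smul, integral_integral_swap hji]
      have hΛ0 : Λ O ≠ 0 := by
        intro h0; rw [hvdef, measureReal_def, h0] at hv0; simp at hv0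
      obtain ⟨y, hyO, hy⟩ := exists_setAverage_le hΛ0 (measure_ne_top _ _) (f := fun y => ∫ x, w x * (3/5 + 2/5 * Real.cos (x * y)) ∂gam)
        (hji.integral_prod_right)
      set u' := Function.update u k y with hu'
      have hu'j : ∀ j < k, u' j = u j := fun j hj => by rw [hu', Function.update_of_ne (by omega)]
      have hu'k : u' k = y := by rw [hu', Function.update_self]
      refine ⟨u', fun j hj => ?_, ?_⟩
      · rcases Nat.lt_succ_iff_lt_or_eq.mp hj with hj | rfl
        · rw [hu'j j hj, OutS_congr (fun i hi => hu'j i (hi.trans hj))]; exact hu j hj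
        · rw [hu'k, OutS_congr hu'j]; exact hyO
      · refine (hq3.trans hy).trans (le_of_eq ?_)
        congr 1; funext x
        rw [Finset.prod_range_succ, hu'k, hw, mul_assoc]
        congr 2
        exact Finset.prod_congr rfl fun j hj => by rw [hu'j j (Finset.mem_range.mp hj)]
  obtain ⟨u, hu, hq'⟩ := key r le_rfl
  rw [div_self hr0.ne'] at hq'
  simp only [sub_self, zero_mul, neg_zero, Real.exp_zero, one_mul] at hq'
  linarith [prod_cos_bound hu]

end SbPart


section CPart
set_option linter.unusedSectionVars false
open MeasureTheory
open scoped ENNReal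

variable {E : Type*} [NormedAddCommGroup E] [NormedSpace ℝ E] [MeasurableSpace E] [BorelSpace E]
  [SecondCountableTopology E]

lemma mconv_eq_conv (μ ν : Measure E) : mconv μ ν = μ.conv ν := rfl

lemma convPow_finite (μ : Measure E) [IsFiniteMeasure μ] : ∀ N, IsFiniteMeasure (convPow μ N)
  | 0 => by unfold convPow; infer_instance
  | N + 1 => by
    have := convPow_finite μ N
    unfold convPow mconv; infer_instance

instance (μ : Measure E) [IsFiniteMeasure μ] (N : ℕ) : IsFiniteMeasure (convPow μ N) := convPow_finite μ N

lemma lintegral_convPow_succ (μ : Measure E) [IsFiniteMeasure μ] (N : ℕ) {f : E → ℝ≥0∞} (hf : Measurable f) :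
    ∫⁻ x, f x ∂(convPow μ (N+1)) = ∫⁻ x, ∫⁻ y, f (x + y) ∂μ ∂(convPow μ N) := by
  show ∫⁻ x, f x ∂(((convPow μ N).prod μ).map (fun p => p.1 + p.2)) = _
  rw [lintegral_map hf (by fun_prop), lintegral_prod _ (by fun_prop)]

lemma convPow_univ (μ : Measure E) [IsFiniteMeasure μ] (N : ℕ) : convPow μ N Set.univ = μ Set.univ ^ N := by
  induction N with
  | zero => simp [convPow]
  | succ N ih =>
    have := lintegral_convPow_succ μ N (f := fun _ => 1) measurable_const
    simp only [lintegral_const, one_mul] at this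
    rw [this, ih, pow_succ, mul_comm]

noncomputable def ctr (u : ℕ → ℝ) {k : ℕ} (a : Fin k → ℤ) : ℝ := (1/2) * ∑ j, (a j : ℝ) * u j

lemma ctr_add (u : ℕ → ℝ) {k : ℕ} (a b : Fin k → ℤ) : ctr u (a + b) = ctr u a + ctr u b := by
  simp only [ctr, Pi.add_apply, Int.cast_add, add_mul, Finset.sum_add_distrib, mul_add]

lemma ctr_neg (u : ℕ → ℝ) {k : ℕ} (a : Fin k → ℤ) : ctr u (-a) = - ctr u a := by
  simp [ctr]

noncomputable def potA (u : ℕ → ℝ) {k : ℕ} (a : Fin k → ℤ) (s : ℝ) : ℝ :=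
  Real.exp ‖a‖ * Real.cosh (s - ctr u a)

noncomputable def pot (u : ℕ → ℝ) (k : ℕ) (s : ℝ) : ℝ≥0∞ := ⨅ a : Fin k → ℤ, ENNReal.ofReal (potA u a s)

lemma pot_meas (u : ℕ → ℝ) (k : ℕ) : Measurable (pot u k) := by
  unfold pot potA
  refine Measurable.iInf fun a => ?_
  have : Measurable fun s => Real.cosh (s - ctr u a) := Real.measurable_cosh.comp (by fun_prop)
  fun_prop

lemma potA_pos (u : ℕ → ℝ) {k : ℕ} (a : Fin k → ℤ) (s : ℝ) : 0 < potA u a s :=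
  mul_pos (Real.exp_pos _) (Real.cosh_pos _)

lemma pot_le (u : ℕ → ℝ) {k : ℕ} (a : Fin k → ℤ) (s : ℝ) : pot u k s ≤ ENNReal.ofReal (potA u a s) := iInf_le _ a

lemma cosh_add_le (s t : ℝ) : Real.cosh (s + t) ≤ Real.cosh s * Real.exp |t| := by
  rw [Real.cosh_eq, Real.cosh_eq, neg_add, Real.exp_add, Real.exp_add]
  have h1 : Real.exp t ≤ Real.exp |t| := Real.exp_le_exp.mpr (le_abs_self t)
  have h2 : Real.exp (-t) ≤ Real.exp |t| := Real.exp_le_exp.mpr (neg_le_abs t)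
  have := mul_le_mul_of_nonneg_left h1 (Real.exp_pos s).le
  have := mul_le_mul_of_nonneg_left h2 (Real.exp_pos (-s)).le
  linarith

lemma cosh_le_one_add_sq {y : ℝ} (h : |y| ≤ 1) : Real.cosh y ≤ 1 + y ^ 2 := by
  have h1 := Real.cosh_le_exp_half_sq y
  have h2 := Real.abs_exp_sub_one_le (x := y^2/2) (by
    rw [abs_of_nonneg (by positivity)]
    have : y^2 ≤ 1 := by rw [← sq_abs]; exact pow_le_one₀ (abs_nonneg _) h
    linarith)
  rw [abs_of_nonneg (by positivity : 0 ≤ y^2/2)] at h2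
  have := le_abs_self (Real.exp (y^2/2) - 1)
  linarith

lemma not_out_cover {u : ℕ → ℝ} {k : ℕ} {y : ℝ} (hy : y ∉ OutS u k) :
    ∃ b : Fin k → ℤ, ‖b‖ ≤ 4 ∧ |y - ctr u b| ≤ 1 := by
  simp only [OutS, Set.mem_ofPred_eq] at hy
  push Not at hy
  obtain ⟨a, ha, h⟩ := hy
  have ha' : ∀ j, |(a j : ℝ)| ≤ 2 := fun j => by exact_mod_cast ha j
  by_cases h1 : 1 < |y - ∑ j, (a j : ℝ) * u j|
  · refine ⟨a, ?_, ?_⟩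
    · rw [pi_norm_le_iff_of_nonneg (by norm_num)]
      intro j; rw [Int.norm_eq_abs]; linarith [ha' j]
    · have := h h1
      have e : y - ctr u a = (1/2) * (2 * y - ∑ j, (a j : ℝ) * u j) := by rw [ctr]; ring
      rw [e, abs_mul, abs_of_pos (by norm_num : (0:ℝ) < 1/2)]; linarith
  · push Not at h1
    refine ⟨a + a, ?_, ?_⟩
    · rw [pi_norm_le_iff_of_nonneg (by norm_num)]
      intro j; rw [Int.norm_eq_abs, Pi.add_apply, Int.cast_add]
      have := abs_add_le (a j : ℝ) (a j); linarith [ha' j]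
    · rw [ctr_add]; rw [show ctr u a + ctr u a = ∑ j, (a j : ℝ) * u j by rw [ctr]; ring]; exact h1

lemma pot_shift {u : ℕ → ℝ} {k : ℕ} (a b : Fin k → ℤ) {x y : ℝ} (hb : ‖b‖ ≤ 4) (hy : |y - ctr u b| ≤ 1) :
    pot u k (x + y) ≤ ENNReal.ofReal (potA u a x * Real.exp 5) := by
  refine (pot_le u (a + b) _).trans (ENNReal.ofReal_le_ofReal ?_)
  unfold potA
  rw [ctr_add, show x + y - (ctr u a + ctr u b) = (x - ctr u a) + (y - ctr u b) by ring]
  have h1 : Real.exp ‖a + b‖ ≤ Real.exp ‖a‖ * Real.exp 4 := by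
    rw [← Real.exp_add]; exact Real.exp_le_exp.mpr ((norm_add_le a b).trans (by linarith))
  have h2 := cosh_add_le (x - ctr u a) (y - ctr u b)
  have h3 : Real.exp |y - ctr u b| ≤ Real.exp 1 := Real.exp_le_exp.mpr hy
  have hc := Real.cosh_pos (x - ctr u a)
  calc _ ≤ (Real.exp ‖a‖ * Real.exp 4) * (Real.cosh (x - ctr u a) * Real.exp 1) := by
        refine mul_le_mul h1 (h2.trans ?_) (Real.cosh_pos _).le (by positivity)
        gcongr
    _ = Real.exp ‖a‖ * Real.cosh (x - ctr u a) * (Real.exp 4 * Real.exp 1) := by ring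
    _ = _ := by rw [← Real.exp_add]; norm_num

lemma pot_sym {u : ℕ → ℝ} {k : ℕ} {y : ℝ} (hy : y ∉ OutS u k) (a : Fin k → ℤ) (x : ℝ) :
    pot u k (x + y) + pot u k (x - y) ≤ ENNReal.ofReal (2 * potA u a x * (1 + Real.exp 5 * min (y^2) 1)) := by
  have he : 1 ≤ Real.exp 5 := Real.one_le_exp (by norm_num)
  have hA := potA_pos u a x
  rcases le_or_gt |y| 1 with h | h
  · refine (add_le_add (pot_le u a _) (pot_le u a _)).trans ?_
    rw [← ENNReal.ofReal_add (potA_pos _ _ _).le (potA_pos _ _ _).le]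
    refine ENNReal.ofReal_le_ofReal ?_
    have hy2 : y^2 ≤ 1 := by rw [← sq_abs]; exact pow_le_one₀ (abs_nonneg _) h
    have e : potA u a (x+y) + potA u a (x-y) = 2 * potA u a x * Real.cosh y := by
      unfold potA
      rw [show x + y - ctr u a = (x - ctr u a) + y by ring, show x - y - ctr u a = (x - ctr u a) - y by ring,
        Real.cosh_add, Real.cosh_sub (x - ctr u a) y]; ring
    rw [e, min_eq_left hy2]
    have := cosh_le_one_add_sq h
    have : y^2 ≤ Real.exp 5 * y^2 := by nlinarith [sq_nonneg y]
    gcongr; linarith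
  · obtain ⟨b, hb, hyb⟩ := not_out_cover hy
    have hy2 : 1 ≤ y^2 := by rw [← sq_abs]; exact one_le_pow₀ h.le
    have h2 : pot u k (x - y) ≤ ENNReal.ofReal (potA u a x * Real.exp 5) := by
      rw [sub_eq_add_neg]
      refine pot_shift a (-b) (by rwa [norm_neg]) ?_
      rw [ctr_neg, ← abs_neg]; convert hyb using 2; ring
    refine (add_le_add (pot_shift a b hb hyb) h2).trans ?_
    rw [← ENNReal.ofReal_add (by positivity) (by positivity), min_eq_right hy2]
    refine ENNReal.ofReal_le_ofReal ?_
    nlinarith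

lemma pot_step {u : ℕ → ℝ} {k : ℕ} {μ : Measure E} [IsFiniteMeasure μ] (hμ1 : μ Set.univ ≤ 1)
    (hsym : μ.map (fun x => -x) = μ) (s : E →L[ℝ] ℝ) (hout : ∀ᵐ y ∂μ, s y ∉ OutS u k) {W : ℝ}
    (hW : ∫ y, min ((s y)^2) 1 ∂μ ≤ W) (x : ℝ) :
    ∫⁻ y, pot u k (x + s y) ∂μ ≤ ENNReal.ofReal (1 + Real.exp 5 * W) * pot u k x := by
  have hsm : Measurable s := s.continuous.measurable
  have hpm := pot_meas u k
  have hW0 : 0 ≤ W := (integral_nonneg fun y => le_min (sq_nonneg _) zero_le_one).trans hW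
  have hc0 : 0 ≤ 1 + Real.exp 5 * W := by positivity
  have h1 : ∫⁻ y, pot u k (x + s y) ∂μ = ∫⁻ y, pot u k (x - s y) ∂μ := by
    conv_lhs => rw [← hsym]
    rw [lintegral_map (by fun_prop) (by fun_prop)]
    simp only [map_neg, sub_eq_add_neg]
  unfold pot
  rw [ENNReal.mul_iInf_of_ne (by simp; positivity) ENNReal.ofReal_ne_top]
  refine le_iInf fun a => ?_
  have hA := potA_pos u a x
  have h2 : 2 * ∫⁻ y, pot u k (x + s y) ∂μ ≤ 2 * (ENNReal.ofReal (1 + Real.exp 5 * W) * ENNReal.ofReal (potA u a x)) := by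
    calc 2 * ∫⁻ y, pot u k (x + s y) ∂μ = ∫⁻ y, (pot u k (x + s y) + pot u k (x - s y)) ∂μ := by
          rw [lintegral_add_left (by fun_prop), ← h1, two_mul]
      _ ≤ ∫⁻ y, ENNReal.ofReal (2 * potA u a x * (1 + Real.exp 5 * min ((s y)^2) 1)) ∂μ := by
          refine lintegral_mono_ae ?_
          filter_upwards [hout] with y hy using pot_sym hy a x
      _ = ENNReal.ofReal (∫ y, 2 * potA u a x * (1 + Real.exp 5 * min ((s y)^2) 1) ∂μ) := by
          rw [ofReal_integral_eq_lintegral_ofReal]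
          · refine Integrable.const_mul ((integrable_const _).add (Integrable.const_mul ?_ _)) _
            refine integrable_of_bdd (by fun_prop) (C := 1) fun y => ?_
            rw [abs_of_nonneg (le_min (sq_nonneg _) zero_le_one)]; exact min_le_right _ _
          · refine Filter.Eventually.of_forall fun y => ?_
            have : 0 ≤ min ((s y)^2) 1 := le_min (sq_nonneg _) zero_le_one
            simp only [Pi.zero_apply]; positivity
      _ ≤ ENNReal.ofReal (2 * potA u a x * (1 + Real.exp 5 * W)) := by
          refine ENNReal.ofReal_le_ofReal ?_
          have hi : Integrable (fun y => min ((s y)^2) 1) μ := by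
            refine integrable_of_bdd (by fun_prop) (C := 1) fun y => ?_
            rw [abs_of_nonneg (le_min (sq_nonneg _) zero_le_one)]; exact min_le_right _ _
          rw [integral_const_mul, integral_add (integrable_const _) (hi.const_mul _), integral_const_mul]
          have : μ.real Set.univ ≤ 1 := ENNReal.toReal_le_of_le_ofReal zero_le_one (by simpa using hμ1)
          simp only [integral_const, smul_eq_mul, mul_one]
          gcongr
      _ = _ := by
          rw [show 2 * potA u a x * (1 + Real.exp 5 * W) = 2 * ((1 + Real.exp 5 * W) * potA u a x) by ring,
            ENNReal.ofReal_mul (by norm_num), ENNReal.ofReal_mul hc0]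
          norm_num
  exact (ENNReal.mul_le_mul_iff_right (by norm_num) (by norm_num)).mp h2

lemma pot_convPow {u : ℕ → ℝ} {k : ℕ} {μ : Measure E} [IsFiniteMeasure μ] (hμ1 : μ Set.univ ≤ 1)
    (hsym : μ.map (fun x => -x) = μ) (s : E →L[ℝ] ℝ) (hout : ∀ᵐ y ∂μ, s y ∉ OutS u k) {W : ℝ}
    (hW : ∫ y, min ((s y)^2) 1 ∂μ ≤ W) (N : ℕ) :
    ∫⁻ x, pot u k (s x) ∂(convPow μ N) ≤ ENNReal.ofReal (1 + Real.exp 5 * W) ^ N := by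
  have hsm : Measurable s := s.continuous.measurable
  have hpm := pot_meas u k
  induction N with
  | zero =>
    simp only [convPow, pow_zero]
    rw [lintegral_dirac' _ (by fun_prop)]
    refine (pot_le u 0 _).trans ?_
    simp [potA, ctr]
  | succ N ih =>
    rw [lintegral_convPow_succ μ N (by fun_prop)]
    calc ∫⁻ x, ∫⁻ y, pot u k (s (x + y)) ∂μ ∂(convPow μ N)
        ≤ ∫⁻ x, ENNReal.ofReal (1 + Real.exp 5 * W) * pot u k (s x) ∂(convPow μ N) := by
          refine lintegral_mono fun x => ?_
          simp only [map_add]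
          exact pot_step hμ1 hsym s hout hW (s x)
      _ = ENNReal.ofReal (1 + Real.exp 5 * W) * ∫⁻ x, pot u k (s x) ∂(convPow μ N) := by
          rw [lintegral_const_mul _ (by fun_prop)]
      _ ≤ _ := by rw [pow_succ, mul_comm]; gcongr

/-- tail estimate -/
lemma pot_tail {u : ℕ → ℝ} {k : ℕ} {μ : Measure E} [IsFiniteMeasure μ] (hμ1 : μ Set.univ ≤ 1)
    (hsym : μ.map (fun x => -x) = μ) (s : E →L[ℝ] ℝ) (hout : ∀ᵐ y ∂μ, s y ∉ OutS u k) {W : ℝ}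
    (hW : ∫ y, min ((s y)^2) 1 ∂μ ≤ W) (N : ℕ) (R : ℝ) :
    (convPow μ N).real {x | ENNReal.ofReal (Real.exp R) ≤ pot u k (s x)} ≤ Real.exp (N * (Real.exp 5 * W) - R) := by
  have hsm : Measurable s := s.continuous.measurable
  have hpm := pot_meas u k
  have hW0 : 0 ≤ W := (integral_nonneg fun y => le_min (sq_nonneg _) zero_le_one).trans hW
  have h1 := mul_meas_ge_le_lintegral (μ := convPow μ N) (f := fun x => pot u k (s x)) (by fun_prop) (ENNReal.ofReal (Real.exp R))
  have h2 := h1.trans (pot_convPow hμ1 hsym s hout hW N)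
  rw [← ENNReal.ofReal_pow (by positivity)] at h2
  have h3 := ENNReal.toReal_mono ENNReal.ofReal_ne_top h2
  rw [ENNReal.toReal_mul, ENNReal.toReal_ofReal (Real.exp_pos _).le, ENNReal.toReal_ofReal (by positivity)] at h3
  rw [measureReal_def, Real.exp_sub, le_div_iff₀ (Real.exp_pos _), mul_comm]
  refine h3.trans ?_
  rw [Real.exp_nat_mul]
  gcongr
  linarith [Real.add_one_le_exp (Real.exp 5 * W)]

lemma pot_lt {u : ℕ → ℝ} {k : ℕ} {s R : ℝ} (h : pot u k s < ENNReal.ofReal (Real.exp R)) :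
    ∃ a : Fin k → ℤ, ‖a‖ < R ∧ |s - ctr u a| < R + 1 := by
  obtain ⟨a, ha⟩ := iInf_lt_iff.mp h
  have ha' := (ENNReal.ofReal_lt_ofReal_iff (Real.exp_pos _)).mp ha
  unfold potA at ha'
  have hc := Real.one_le_cosh (s - ctr u a)
  have h0 := norm_nonneg a
  refine ⟨a, ?_, ?_⟩
  · rw [← Real.exp_lt_exp]
    nlinarith [Real.exp_pos ‖a‖]
  · rw [← Real.exp_lt_exp]
    have h1 : Real.exp |s - ctr u a| ≤ 2 * Real.cosh (s - ctr u a) := by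
      rw [← Real.cosh_abs, Real.cosh_eq]
      linarith [Real.exp_pos (-|s - ctr u a|)]
    have h2 : 1 ≤ Real.exp ‖a‖ := Real.one_le_exp h0
    have h3 : Real.cosh (s - ctr u a) < Real.exp R := by nlinarith
    rw [Real.exp_add]
    have := Real.exp_one_gt_d9
    nlinarith [Real.exp_pos R]

end CPart


section BPart
set_option linter.unusedSectionVars false
open MeasureTheory
open scoped ENNReal FourierTransform

noncomputable def tau (y : ℝ) : ℝ := Real.smoothTransition (y + 1) - Real.smoothTransition y
noncomputable def gst (y : ℝ) : ℝ := 1 - Real.smoothTransition y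

lemma tau_nonneg (y : ℝ) : 0 ≤ tau y := by
  unfold tau
  have := Real.smoothTransition.monotone (show y ≤ y + 1 by linarith)
  linarith

lemma tau_zero {y : ℝ} (h : 1 ≤ |y|) : tau y = 0 := by
  unfold tau
  rcases le_abs.mp h with h | h
  · rw [Real.smoothTransition.one_of_one_le h, Real.smoothTransition.one_of_one_le (by linarith)]; simp
  · rw [Real.smoothTransition.zero_of_nonpos (by linarith), Real.smoothTransition.zero_of_nonpos (by linarith)]; simp

lemma tau_cont : Continuous tau := by
  unfold tau
  have := Real.smoothTransition.continuous
  fun_prop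

lemma gst_nonneg (y : ℝ) : 0 ≤ gst y := by unfold gst; linarith [Real.smoothTransition.le_one y]
lemma gst_le_one (y : ℝ) : gst y ≤ 1 := by unfold gst; linarith [Real.smoothTransition.nonneg y]
lemma gst_cont : Continuous gst := by
  unfold gst
  have := Real.smoothTransition.continuous
  fun_prop
lemma gst_one {y : ℝ} (h : y ≤ 0) : gst y = 1 := by unfold gst; rw [Real.smoothTransition.zero_of_nonpos h]; simp
lemma gst_zero {y : ℝ} (h : 1 ≤ y) : gst y = 0 := by unfold gst; rw [Real.smoothTransition.one_of_one_le h]; simp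

lemma tau_sum_range (y : ℝ) (m : ℕ) : ∑ k ∈ Finset.range m, tau (y + k) =
    Real.smoothTransition (y + m) - Real.smoothTransition y := by
  induction m with
  | zero => simp
  | succ m ih =>
    rw [Finset.sum_range_succ, ih, tau]; push_cast
    rw [show y + (m:ℝ) + 1 = y + (m + 1) by ring]; ring

lemma tau_sum_le (y : ℝ) (K : Finset ℕ) : ∑ k ∈ K, tau (y + k) ≤ gst y := by
  obtain ⟨m, hm⟩ := K.exists_nat_subset_range
  refine (Finset.sum_le_sum_of_subset_of_nonneg hm fun k _ _ => tau_nonneg _).trans ?_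
  rw [tau_sum_range, gst]
  linarith [Real.smoothTransition.le_one (y + m)]

lemma tau_sum_eq (y : ℝ) (K : Finset ℕ) (h : ∀ k : ℕ, |y + k| < 1 → k ∈ K) : ∑ k ∈ K, tau (y + k) = gst y := by
  obtain ⟨m, hm⟩ := K.exists_nat_subset_range
  obtain ⟨m', hm'⟩ := exists_nat_ge (1 - y)
  have hsub : K ⊆ Finset.range (max m m') := hm.trans (Finset.range_subset_range.mpr (le_max_left _ _))
  rw [Finset.sum_subset hsub fun k _ hk => tau_zero (not_lt.mp fun h' => hk (h k h')), tau_sum_range, gst,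
    Real.smoothTransition.one_of_one_le]
  push_cast
  have := le_max_right (m:ℝ) (m':ℝ)
  linarith

lemma tau_fourier : ∃ T : ℝ → ℂ, Integrable T ∧ Continuous T ∧
    ∀ y : ℝ, (tau y : ℂ) = ∫ ξ, Complex.exp (((2 * Real.pi * ξ * y : ℝ) : ℂ) * Complex.I) * T ξ := by
  have hsm : ContDiff ℝ (⊤ : ℕ∞) (fun y => (tau y : ℂ)) := by
    have : ContDiff ℝ (⊤ : ℕ∞) Real.smoothTransition := Real.smoothTransition.contDiff
    have h2 : ContDiff ℝ (⊤ : ℕ∞) tau := (this.comp (contDiff_id.add contDiff_const)).sub this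
    exact Complex.ofRealCLM.contDiff.comp h2
  have hcs : HasCompactSupport (fun y => (tau y : ℂ)) := by
    refine HasCompactSupport.of_support_subset_isCompact (isCompact_Icc (a := (-1:ℝ)) (b := 1)) fun y hy => ?_
    by_contra h
    refine hy ?_
    rw [Set.mem_Icc, ← abs_le] at h
    simp [tau_zero (not_le.mp h).le]
  set f := hcs.toSchwartzMap hsm with hf
  have hft : ∀ y, f y = (tau y : ℂ) := fun y => rfl
  refine ⟨fun ξ => (𝓕 f) ξ, (𝓕 f).integrable, (𝓕 f).continuous, fun y => ?_⟩
  rw [← hft]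
  have h : 𝓕⁻ (𝓕 f) = f := FourierTransform.fourierInv_fourier_eq f
  conv_lhs => rw [← h]
  rw [SchwartzMap.fourierInv_coe, Real.fourierInv_eq']
  congr 1; funext ξ
  simp only [smul_eq_mul]
  congr 2
  simp [mul_comm, mul_left_comm, mul_assoc]

noncomputable def T0 : ℝ → ℂ := tau_fourier.choose
lemma T0_int : Integrable T0 := tau_fourier.choose_spec.1
lemma T0_cont : Continuous T0 := tau_fourier.choose_spec.2.1
lemma T0_eq (y : ℝ) : (tau y : ℂ) = ∫ ξ, Complex.exp (((2 * Real.pi * ξ * y : ℝ) : ℂ) * Complex.I) * T0 ξ :=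
  tau_fourier.choose_spec.2.2 y
noncomputable def c0 : ℝ := ∫ ξ, ‖T0 ξ‖
lemma c0_nonneg : 0 ≤ c0 := integral_nonneg fun _ => norm_nonneg _

variable {E : Type*} [NormedAddCommGroup E] [NormedSpace ℝ E] [MeasurableSpace E] [BorelSpace E]
  [SecondCountableTopology E]

lemma integrable_cexp {X : Type*} [MeasurableSpace X] (μ : Measure X) [IsFiniteMeasure μ] {φ : X → ℝ} (hφ : Measurable φ) :
    Integrable (fun x => Complex.exp ((φ x : ℂ) * Complex.I)) μ :=
  Integrable.of_bound (C := 1) (by fun_prop) (Filter.Eventually.of_forall fun x => by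
    rw [Complex.norm_exp_ofReal_mul_I])

lemma cexp_convPow (μ : Measure E) [IsFiniteMeasure μ] (φ : E →L[ℝ] ℝ) (N : ℕ) :
    ∫ x, Complex.exp ((φ x : ℂ) * Complex.I) ∂(convPow μ N) = (∫ x, Complex.exp ((φ x : ℂ) * Complex.I) ∂μ) ^ N := by
  have hφ : Measurable φ := φ.continuous.measurable
  induction N with
  | zero => simp [convPow]
  | succ N ih =>
    show ∫ x, Complex.exp ((φ x : ℂ) * Complex.I) ∂(((convPow μ N).prod μ).map (fun p => p.1 + p.2)) = _
    rw [integral_map (by fun_prop) (by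
      apply Measurable.aestronglyMeasurable; fun_prop)]
    simp only [map_add, Complex.ofReal_add, add_mul, Complex.exp_add]
    rw [integral_prod_mul (fun x => Complex.exp ((φ x : ℂ) * Complex.I)) (fun x => Complex.exp ((φ x : ℂ) * Complex.I)), ih, pow_succ]

lemma cexp_symm {μ : Measure E} [IsFiniteMeasure μ] (hsym : μ.map (fun x => -x) = μ) (φ : E →L[ℝ] ℝ) :
    ∫ x, Complex.exp ((φ x : ℂ) * Complex.I) ∂μ = ((∫ x, Real.cos (φ x) ∂μ : ℝ) : ℂ) := by
  have hφ : Measurable φ := φ.continuous.measurable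
  have hi := integrable_cexp μ hφ
  have h1 : ∫ x, Complex.exp ((φ x : ℂ) * Complex.I) ∂μ = ∫ x, Complex.exp (-((φ x : ℂ) * Complex.I)) ∂μ := by
    conv_lhs => rw [← hsym]
    rw [integral_map (by fun_prop) (by apply Measurable.aestronglyMeasurable; fun_prop)]
    simp
  have hi' : Integrable (fun x => Complex.exp (-((φ x : ℂ) * Complex.I))) μ := by
    have := integrable_cexp μ (φ := fun x => - φ x) (by fun_prop)
    simpa using this
  have h2 : ∫ x, Complex.exp ((φ x : ℂ) * Complex.I) ∂μ + ∫ x, Complex.exp ((φ x : ℂ) * Complex.I) ∂μ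
      = 2 * ((∫ x, Real.cos (φ x) ∂μ : ℝ) : ℂ) := by
    nth_rw 2 [h1]
    rw [← integral_add hi hi', ← integral_complex_ofReal, ← integral_const_mul]
    congr 1; funext x
    rw [Complex.ofReal_cos, Complex.cos]; ring_nf
  linear_combination h2 / 2

noncomputable def lin {ι : Type*} [Fintype ι] (s : ι → E →L[ℝ] ℝ) (ξ : ι → ℝ) : E →L[ℝ] ℝ :=
  ∑ i, (2 * Real.pi * ξ i) • s i

lemma lin_apply {ι : Type*} [Fintype ι] (s : ι → E →L[ℝ] ℝ) (ξ : ι → ℝ) (x : E) :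
    lin s ξ x = ∑ i, 2 * Real.pi * ξ i * s i x := by
  simp [lin]

noncomputable def Aco {ι : Type*} [Fintype ι] (w : ι → ℝ) (ξ : ι → ℝ) : ℂ :=
  ∏ i, (Complex.exp (((2 * Real.pi * ξ i * w i : ℝ) : ℂ) * Complex.I) * T0 (ξ i))

lemma Aco_norm {ι : Type*} [Fintype ι] (w : ι → ℝ) (ξ : ι → ℝ) : ‖Aco w ξ‖ = ∏ i, ‖T0 (ξ i)‖ := by
  rw [Aco, norm_prod]
  refine Finset.prod_congr rfl fun i _ => ?_
  rw [norm_mul, Complex.norm_exp_ofReal_mul_I, one_mul]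

lemma T0_prod_int (ι : Type*) [Fintype ι] : Integrable (fun ξ : ι → ℝ => ∏ i, ‖T0 (ξ i)‖) :=
  Integrable.fintype_prod (f := fun _ => fun x => ‖T0 x‖) fun _ => T0_int.norm

lemma T0_prod_integral (ι : Type*) [Fintype ι] : ∫ ξ : ι → ℝ, ∏ i, ‖T0 (ξ i)‖ = c0 ^ Fintype.card ι :=
  integral_fintype_prod_volume_eq_pow (fun x => ‖T0 x‖)

lemma Aco_cont {ι : Type*} [Fintype ι] (w : ι → ℝ) : Continuous (Aco w) := by
  unfold Aco
  have := T0_cont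
  fun_prop

lemma Aco_int {ι : Type*} [Fintype ι] (w : ι → ℝ) : Integrable (Aco w) :=
  (T0_prod_int ι).mono' (Aco_cont w).aestronglyMeasurable (Filter.Eventually.of_forall fun ξ => (Aco_norm w ξ).le)

lemma tau_prod_pt {ι : Type*} [Fintype ι] (s : ι → E →L[ℝ] ℝ) (w : ι → ℝ) (x : E) :
    ((∏ i, tau (s i x + w i) : ℝ) : ℂ) = ∫ ξ : ι → ℝ, Aco w ξ * Complex.exp ((lin s ξ x : ℂ) * Complex.I) := by
  rw [Complex.ofReal_prod]
  simp_rw [T0_eq]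
  rw [← integral_fintype_prod_volume_eq_prod (fun i ξ => Complex.exp (((2 * Real.pi * ξ * (s i x + w i) : ℝ) : ℂ) * Complex.I) * T0 ξ)]
  congr 1; funext ξ
  rw [Aco, lin_apply, Complex.ofReal_sum, Finset.sum_mul, Complex.exp_sum, ← Finset.prod_mul_distrib]
  refine Finset.prod_congr rfl fun i _ => ?_
  rw [mul_right_comm (Complex.exp _), ← Complex.exp_add]
  congr 2; push_cast; ring

/-- the real Fourier representation of `∫ ∏ τ dμ^N` -/
lemma tau_prod_convPow {ι : Type*} [Fintype ι] {μ : Measure E} [IsFiniteMeasure μ]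
    (hsym : μ.map (fun x => -x) = μ) (s : ι → E →L[ℝ] ℝ) (w : ι → ℝ) (N : ℕ) :
    ∫ x, ∏ i, tau (s i x + w i) ∂(convPow μ N) =
      ∫ ξ : ι → ℝ, (Aco w ξ).re * (∫ x, Real.cos (lin s ξ x) ∂μ) ^ N := by
  have hlm : Continuous fun p : E × (ι → ℝ) => lin s p.2 p.1 := by
    simp only [lin_apply]
    refine continuous_finsetSum _ fun i _ => ?_
    have := (s i).continuous
    fun_prop
  have hA := Aco_cont w
  have h1 : ((∫ x, ∏ i, tau (s i x + w i) ∂(convPow μ N) : ℝ) : ℂ) =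
      ∫ ξ : ι → ℝ, Aco w ξ * (((∫ x, Real.cos (lin s ξ x) ∂μ) ^ N : ℝ) : ℂ) := by
    rw [← integral_complex_ofReal]
    simp_rw [tau_prod_pt]
    rw [integral_integral_swap]
    · congr 1; funext ξ
      rw [integral_const_mul, cexp_convPow, cexp_symm hsym, Complex.ofReal_pow]
    · have hb : Integrable (fun p : E × (ι → ℝ) => (1:ℝ) * ∏ i, ‖T0 (p.2 i)‖) ((convPow μ N).prod volume) :=
        Integrable.mul_prod (f := fun _ : E => (1:ℝ)) (integrable_const _) (T0_prod_int ι)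
      refine hb.mono' ?_ (Filter.Eventually.of_forall fun p => ?_)
      · refine Continuous.aestronglyMeasurable ?_
        show Continuous fun p : E × (ι → ℝ) => Aco w p.2 * Complex.exp ((lin s p.2 p.1 : ℂ) * Complex.I)
        fun_prop
      · simp only [Function.uncurry]
        rw [norm_mul, Complex.norm_exp_ofReal_mul_I, Aco_norm]; simp
  have h2 := congrArg Complex.re h1
  rw [Complex.ofReal_re] at h2
  rw [h2]
  have hm : Measurable fun ξ : ι → ℝ => (∫ x, Real.cos (lin s ξ x) ∂μ) := by
    have : StronglyMeasurable fun p : (ι → ℝ) × E => Real.cos (lin s p.1 p.2) := by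
      refine (Real.continuous_cos.comp (hlm.comp continuous_swap)).stronglyMeasurable
    exact this.integral_prod_right.measurable
  have hIntg : Integrable fun ξ : ι → ℝ => Aco w ξ * (((∫ x, Real.cos (lin s ξ x) ∂μ) ^ N : ℝ) : ℂ) := by
    refine (Aco_int w).mul_bdd (c := (μ.real Set.univ)^N) (Complex.measurable_ofReal.comp (hm.pow_const N)).aestronglyMeasurable (Filter.Eventually.of_forall fun ξ => ?_)
    rw [Complex.norm_real, norm_pow]
    gcongr
    refine (norm_integral_le_of_norm_le_const (C := 1) (Filter.Eventually.of_forall fun x => Real.abs_cos_le_one _)).trans ?_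
    simp
  have h3 := (integral_re hIntg).symm
  refine h3.trans ?_
  congr 1; funext ξ
  exact Complex.re_mul_ofReal _ _

/-- Polynomial approximation of `N ↦ ∫ ∏ τ dμ^(N-k)`. -/
lemma tau_prod_apx {ι : Type*} [Fintype ι] {μ : Measure E} [IsFiniteMeasure μ] (hμ1 : μ Set.univ ≤ 1)
    (hsym : μ.map (fun x => -x) = μ) {β : ℝ} (hβ0 : 0 ≤ β) (hβ : ∀ φ : E →L[ℝ] ℝ, -1 + β ≤ ∫ x, Real.cos (φ x) ∂μ)
    (s : ι → E →L[ℝ] ℝ) (w : ι → ℝ) {n L k D : ℕ} (hk : k + 8 * L ≤ n) (hL : 1 ≤ L) {ν : ℝ}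
    (hν : ∀ N ∈ Finset.Icc (n - L) (n + L), Real.exp (-(β * ((N - k : ℕ):ℝ))) ≤ ν) :
    Apx (Finset.Icc (n - L) (n + L)) D (c0 ^ Fintype.card ι * ((1/2) ^ D + ν))
      (fun N => ∫ x, ∏ i, tau (s i x + w i) ∂(convPow μ (N - k))) := by
  have hν0 : 0 ≤ ν := (Real.exp_pos _).le.trans (hν n (by simp))
  simp_rw [tau_prod_convPow hsym]
  rw [← T0_prod_integral, ← integral_mul_const]
  have hlm : Continuous fun p : E × (ι → ℝ) => lin s p.2 p.1 := by
    simp only [lin_apply]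
    refine continuous_finsetSum _ fun i _ => ?_
    have := (s i).continuous
    fun_prop
  have hm : Measurable fun ξ : ι → ℝ => (∫ x, Real.cos (lin s ξ x) ∂μ) := by
    have : StronglyMeasurable fun p : (ι → ℝ) × E => Real.cos (lin s p.1 p.2) := by
      refine (Real.continuous_cos.comp (hlm.comp continuous_swap)).stronglyMeasurable
    exact this.integral_prod_right.measurable
  have hμ1' : μ.real Set.univ ≤ 1 := ENNReal.toReal_le_of_le_ofReal zero_le_one (by simpa using hμ1)
  have hle : ∀ φ : E →L[ℝ] ℝ, |∫ x, Real.cos (φ x) ∂μ| ≤ 1 := fun φ => by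
    have h := norm_integral_le_of_norm_le_const (μ := μ) (f := fun x => Real.cos (φ x)) (C := 1)
      (Filter.Eventually.of_forall fun x => Real.abs_cos_le_one _)
    rw [one_mul] at h
    exact h.trans hμ1'
  have hre : ∀ ξ : ι → ℝ, |(Aco w ξ).re| ≤ ∏ i, ‖T0 (ξ i)‖ := fun ξ =>
    (Complex.abs_re_le_norm _).trans (Aco_norm w ξ).le
  have hP : ∀ ξ : ι → ℝ, 0 ≤ ∏ i, ‖T0 (ξ i)‖ := fun ξ => Finset.prod_nonneg fun i _ => norm_nonneg _
  refine Apx.integral ?_ ((T0_prod_int ι).mul_const _) (fun ξ => mul_nonneg (hP ξ) (by positivity)) fun ξ => ?_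
  · intro N _
    refine ((Aco_int w).re).mul_bdd (c := 1) (hm.pow_const _).aestronglyMeasurable (Filter.Eventually.of_forall fun ξ => ?_)
    rw [norm_pow]; exact pow_le_one₀ (norm_nonneg _) (hle _)
  · set om := ∫ x, Real.cos (lin s ξ x) ∂μ with hom
    have h1 := abs_le.mp (hle (lin s ξ))
    rcases le_or_gt 0 om with h0 | h0
    · have := (apx_pow (d := D) h0 h1.2 hk hL).mul_poly (Polynomial.C (Aco w ξ).re) (k := 0) (by simp) (B := ∏ i, ‖T0 (ξ i)‖)
        (fun N _ => by simpa using hre ξ)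
      simp only [Polynomial.eval_C, add_zero] at this
      refine this.mono le_rfl ?_
      exact mul_le_mul_of_nonneg_left (by linarith) (hP ξ)
    · refine apx_of_le fun N hN => ?_
      rw [abs_mul, abs_pow]
      refine mul_le_mul (hre ξ) ?_ (by positivity) (hP ξ)
      have h2 : |om| ≤ Real.exp (-β) := by
        rw [abs_of_neg h0]
        have := hβ (lin s ξ)
        have := Real.add_one_le_exp (-β)
        linarith
      have h3 : (0:ℝ) ≤ (1/2)^D := by positivity
      calc |om| ^ (N - k) ≤ Real.exp (-β) ^ (N - k) := by gcongr
        _ = Real.exp (-(β * ((N - k : ℕ):ℝ))) := by rw [← Real.exp_nat_mul]; ring_nf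
        _ ≤ ν := hν N hN
        _ ≤ _ := by linarith

end BPart


section OPart
set_option linter.unusedSectionVars false
open MeasureTheory
open scoped ENNReal

variable {E : Type*} [NormedAddCommGroup E] [NormedSpace ℝ E] [MeasurableSpace E] [BorelSpace E]
  [SecondCountableTopology E]

variable (E) in
/-- finite measures as an additive submonoid -/
def finSub : AddSubmonoid (Measure E) where
  carrier := {μ | IsFiniteMeasure μ}
  add_mem' := by
    intro a b ha hb
    have : IsFiniteMeasure a := ha
    have : IsFiniteMeasure b := hb
    show IsFiniteMeasure (a + b)
    infer_instance
  zero_mem' := by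
    show IsFiniteMeasure (0 : Measure E)
    infer_instance

instance (μ : finSub E) : IsFiniteMeasure (μ : Measure E) := μ.2

lemma fin_conv (μ ν : Measure E) [IsFiniteMeasure μ] [IsFiniteMeasure ν] : IsFiniteMeasure (μ.conv ν) := by
  infer_instance

noncomputable instance finSubSemiring : CommSemiring (finSub E) :=
  { (inferInstance : AddCommMonoid (finSub E)) with
    mul := fun μ ν => ⟨(μ : Measure E).conv (ν : Measure E), fin_conv _ _⟩
    one := ⟨Measure.dirac 0, by show IsFiniteMeasure (Measure.dirac (0:E)); infer_instance⟩
    left_distrib := fun a b c => Subtype.ext (Measure.conv_add _ _ _)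
    right_distrib := fun a b c => Subtype.ext (Measure.add_conv _ _ _)
    zero_mul := fun a => Subtype.ext (Measure.zero_conv _)
    mul_zero := fun a => Subtype.ext (Measure.conv_zero _)
    mul_assoc := fun a b c => Subtype.ext (Measure.conv_assoc _ _ _)
    one_mul := fun a => Subtype.ext (Measure.dirac_zero_conv _)
    mul_one := fun a => Subtype.ext (Measure.conv_dirac_zero _)
    mul_comm := fun a b => Subtype.ext (Measure.conv_comm _ _) }

lemma finSub_pow (μ : finSub E) (N : ℕ) : ((μ ^ N : finSub E) : Measure E) = convPow (μ : Measure E) N := by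
  induction N with
  | zero => rw [pow_zero]; rfl
  | succ N ih =>
    rw [pow_succ]
    show ((μ ^ N : finSub E) : Measure E).conv (μ : Measure E) = mconv (convPow (μ : Measure E) N) μ
    rw [ih]; rfl

lemma convPow_add (μ ν : Measure E) [hμ : IsFiniteMeasure μ] [hν : IsFiniteMeasure ν] (N : ℕ) :
    convPow (μ + ν) N = ∑ k ∈ Finset.range (N + 1), (N.choose k) • ((convPow μ k).conv (convPow ν (N - k))) := by
  set a : finSub E := ⟨μ, hμ⟩
  set b : finSub E := ⟨ν, hν⟩
  have h := congrArg (fun x : finSub E => (x : Measure E)) (add_pow a b N)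
  simp only [finSub_pow] at h
  have h1 : ((a + b : finSub E) : Measure E) = μ + ν := rfl
  rw [h1] at h
  rw [h, AddSubmonoid.coe_finsetSum]
  refine Finset.sum_congr rfl fun k _ => ?_
  rw [mul_comm, ← nsmul_eq_mul, AddSubmonoidClass.coe_nsmul]
  congr 1
  show ((a ^ k : finSub E) : Measure E).conv ((b ^ (N - k) : finSub E) : Measure E) = _
  rw [finSub_pow, finSub_pow]

lemma integral_conv_bdd (μ ν : Measure E) [IsFiniteMeasure μ] [IsFiniteMeasure ν] {f : E → ℝ} (hf : Measurable f)
    {C : ℝ} (hC : ∀ x, |f x| ≤ C) : ∫ x, f x ∂(μ.conv ν) = ∫ y, ∫ x, f (y + x) ∂ν ∂μ := by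
  rw [Measure.conv, integral_map (by fun_prop) hf.aestronglyMeasurable,
    integral_prod _ (integrable_of_bdd (by fun_prop) fun p => hC _)]

lemma integral_convPow_add (μ ν : Measure E) [IsFiniteMeasure μ] [IsFiniteMeasure ν] (N : ℕ) {f : E → ℝ} (hf : Measurable f)
    {C : ℝ} (hC : ∀ x, |f x| ≤ C) :
    ∫ x, f x ∂(convPow (μ + ν) N) = ∑ k ∈ Finset.range (N + 1), (N.choose k : ℝ) *
      ∫ y, ∫ x, f (y + x) ∂(convPow ν (N - k)) ∂(convPow μ k) := by
  have hi : ∀ (ρ : Measure E) [IsFiniteMeasure ρ], Integrable f ρ := fun ρ _ => integrable_of_bdd hf hC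
  have hfin : ∀ k, IsFiniteMeasure ((convPow μ k).conv (convPow ν (N - k))) := fun k => inferInstance
  have hfin2 : ∀ (c : ℕ) (ρ : Measure E) [IsFiniteMeasure ρ], IsFiniteMeasure (c • ρ) := fun c ρ _ => by
    rw [← Nat.cast_smul_eq_nsmul NNReal]; infer_instance
  rw [convPow_add, integral_finsetSum_measure]
  · refine Finset.sum_congr rfl fun k _ => ?_
    rw [← integral_conv_bdd _ _ hf hC, ← Nat.cast_smul_eq_nsmul NNReal, integral_smul_nnreal_measure]
    simp [NNReal.smul_def]
  · intro k _
    have := hfin2 (N.choose k) ((convPow μ k).conv (convPow ν (N - k)))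
    exact hi _

lemma convPow_real_univ (μ : Measure E) [IsFiniteMeasure μ] (N : ℕ) : (convPow μ N).real Set.univ = μ.real Set.univ ^ N := by
  rw [measureReal_def, convPow_univ, ENNReal.toReal_pow, measureReal_def]

lemma choose_poly (k : ℕ) : ∃ q : Polynomial ℝ, q.natDegree ≤ k ∧ ∀ N : ℕ, q.eval (N:ℝ) = (N.choose k : ℝ) := by
  refine ⟨Polynomial.C ((k.factorial:ℝ)⁻¹) * descPochhammer ℝ k, ?_, fun N => ?_⟩
  · refine (Polynomial.natDegree_C_mul_le _ _).trans ?_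
    rw [descPochhammer_natDegree]
  · rw [Polynomial.eval_mul, Polynomial.eval_C, descPochhammer_eval_eq_descFactorial,
      Nat.descFactorial_eq_factorial_mul_choose]
    push_cast
    have : (k.factorial:ℝ) ≠ 0 := by positivity
    field_simp

lemma exp_tail {K0 : ℝ} (hK : 0 ≤ K0) (km N : ℕ) :
    ∑ k ∈ Finset.Ico (km + 1) (N + 1), K0 ^ k / k.factorial ≤ Real.exp (3 * K0 - km) := by
  have h1 : ∀ k ∈ Finset.Ico (km + 1) (N + 1), K0 ^ k / k.factorial ≤ Real.exp (-(km:ℝ)) * ((3 * K0) ^ k / k.factorial) := by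
    intro k hk
    have hk' : km ≤ k := by simp at hk; omega
    have h2 : 1 ≤ Real.exp (-(km:ℝ)) * 3 ^ k := by
      have : Real.exp (km:ℝ) ≤ 3 ^ k := by
        calc Real.exp (km:ℝ) ≤ Real.exp (k:ℝ) := Real.exp_le_exp.mpr (by exact_mod_cast hk')
          _ = Real.exp 1 ^ k := by rw [← Real.exp_nat_mul, mul_one]
          _ ≤ 3 ^ k := by gcongr; linarith [Real.exp_one_lt_d9]
      rw [Real.exp_neg, inv_mul_eq_div, le_div_iff₀ (Real.exp_pos _)]; linarith
    rw [mul_pow]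
    have h3 : 0 ≤ K0 ^ k / k.factorial := by positivity
    calc K0 ^ k / k.factorial = 1 * (K0 ^ k / k.factorial) := by ring
      _ ≤ (Real.exp (-(km:ℝ)) * 3 ^ k) * (K0 ^ k / k.factorial) := by gcongr
      _ = _ := by ring
  refine (Finset.sum_le_sum h1).trans ?_
  rw [← Finset.mul_sum, show 3 * K0 - km = -(km:ℝ) + 3 * K0 by ring, Real.exp_add]
  gcongr
  refine (Finset.sum_le_sum_of_subset_of_nonneg (t := Finset.range (N+1)) (fun k hk => by simp at hk ⊢; omega)
    fun k _ _ => by positivity).trans ?_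
  exact Real.sum_le_exp_of_nonneg (by positivity) _

/-- binomial expansion + polynomial approximation -/
lemma binom_apx {μo μr : Measure E} [IsFiniteMeasure μo] [IsFiniteMeasure μr] (hr1 : μr Set.univ ≤ 1)
    {f : E → ℝ} (hf : Measurable f) (hf1 : ∀ x, |f x| ≤ 1) {n L D km : ℕ} {e1 K0 : ℝ} (he1 : 0 ≤ e1)
    (hkm : km ≤ n - L) (hK0 : ((n + L : ℕ):ℝ) * μo.real Set.univ ≤ K0)
    (h : ∀ k ≤ km, ∀ y : E, Apx (Finset.Icc (n - L) (n + L)) D e1 (fun N => ∫ x, f (y + x) ∂(convPow μr (N - k)))) :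
    Apx (Finset.Icc (n - L) (n + L)) (D + km) (e1 * Real.exp K0 + Real.exp (3 * K0 - km))
      (fun N => ∫ x, f x ∂(convPow (μo + μr) N)) := by
  set I := Finset.Icc (n - L) (n + L) with hI
  set mo := μo.real Set.univ with hmo
  have hmo0 : 0 ≤ mo := measureReal_nonneg
  have hK : 0 ≤ K0 := (by positivity : (0:ℝ) ≤ ((n + L : ℕ):ℝ) * mo).trans hK0
  have hr1' : μr.real Set.univ ≤ 1 := ENNReal.toReal_le_of_le_ofReal zero_le_one (by simpa using hr1)
  set G : ℕ → ℕ → ℝ := fun k N => ∫ y, ∫ x, f (y + x) ∂(convPow μr (N - k)) ∂(convPow μo k) with hG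
  have hin : ∀ k y, |∫ x, f (y + x) ∂(convPow μr k)| ≤ 1 := fun k y => by
    have h := norm_integral_le_of_norm_le_const (μ := convPow μr k) (f := fun x => f (y + x)) (C := 1)
      (Filter.Eventually.of_forall fun x => hf1 _)
    rw [one_mul, convPow_real_univ] at h
    exact h.trans (pow_le_one₀ measureReal_nonneg hr1')
  have hGm : ∀ k, Measurable fun y => ∫ x, f (y + x) ∂(convPow μr k) := fun k => by
    have : StronglyMeasurable fun p : E × E => f (p.1 + p.2) := by
      apply Measurable.stronglyMeasurable; fun_prop
    exact this.integral_prod_right.measurable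
  have hGb : ∀ k N, |G k N| ≤ mo ^ k := fun k N => by
    have h := norm_integral_le_of_norm_le_const (μ := convPow μo k) (f := fun y => ∫ x, f (y + x) ∂(convPow μr (N - k))) (C := 1)
      (Filter.Eventually.of_forall fun y => hin _ y)
    rw [one_mul, convPow_real_univ] at h
    exact h
  have hch : ∀ k, ∀ N ∈ I, (N.choose k : ℝ) * mo ^ k ≤ K0 ^ k / k.factorial := fun k N hN => by
    have hN' : (N:ℝ) ≤ ((n + L:ℕ):ℝ) := by exact_mod_cast (Finset.mem_Icc.mp hN).2
    calc (N.choose k : ℝ) * mo ^ k ≤ ((N:ℝ)^k / k.factorial) * mo ^ k := by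
          gcongr; exact Nat.choose_le_pow_div k N
      _ = (N * mo) ^ k / k.factorial := by rw [mul_pow]; ring
      _ ≤ K0 ^ k / k.factorial := by
          gcongr
          exact (mul_le_mul_of_nonneg_right hN' hmo0).trans hK0
  have hmain : ∀ k ∈ Finset.range (km + 1), Apx I (D + km) (e1 * (K0 ^ k / k.factorial)) (fun N => (N.choose k : ℝ) * G k N) := by
    intro k hk
    have hk' : k ≤ km := by simp at hk; omega
    have h1 : Apx I D (∫ _y, e1 ∂(convPow μo k)) (G k) := by
      refine Apx.integral (fun N _ => integrable_of_bdd (hGm _) fun y => hin _ y) (integrable_const _) (fun _ => he1) fun y => h k hk' y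
    obtain ⟨q, hq, hqe⟩ := choose_poly k
    rcases hmo0.eq_or_lt with h0 | hpos
    · -- zero mass
      refine Apx.congr (f := fun N => (N.choose k : ℝ) * G k N) ?_ (fun N _ => rfl)
      rcases Nat.eq_zero_or_pos k with rfl | hkpos
      · have h2 := h1.mul_poly q (k := 0) hq (B := 1) (fun N _ => by rw [hqe]; simp)
        simp only [hqe] at h2
        refine h2.mono (by omega) ?_
        simp [convPow_real_univ]
      · refine apx_of_le fun N _ => ?_
        have := hGb k N
        rw [← h0, zero_pow (by omega)] at this
        rw [abs_mul, le_antisymm this (abs_nonneg _), mul_zero]; positivity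
    · have h2 := h1.mul_poly q (k := k) hq (B := (K0 ^ k / k.factorial) / mo ^ k) (fun N hN => by
        rw [hqe, abs_of_nonneg (by positivity), le_div_iff₀ (by positivity)]; exact hch k N hN)
      simp only [hqe] at h2
      refine h2.mono (by omega) (le_of_eq ?_)
      simp only [integral_const, convPow_real_univ, smul_eq_mul, ← hmo]
      field_simp
  have hsum := Apx.sum (Finset.range (km + 1)) hmain
  have htail : Apx I (D + km) (Real.exp (3 * K0 - km)) (fun N => ∑ k ∈ Finset.Ico (km + 1) (N + 1), (N.choose k : ℝ) * G k N) := by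
    refine apx_of_le fun N hN => ?_
    refine (Finset.abs_sum_le_sum_abs _ _).trans ((Finset.sum_le_sum fun k _ => ?_).trans (exp_tail hK km N))
    rw [abs_mul, abs_of_nonneg (by positivity : (0:ℝ) ≤ (N.choose k : ℝ))]
    exact (mul_le_mul_of_nonneg_left (hGb k N) (by positivity)).trans (hch k N hN)
  refine ((hsum.add htail).congr (g := fun N => ∫ x, f x ∂(convPow (μo + μr) N)) fun N hN => ?_).mono le_rfl ?_
  · have hN' : km + 1 ≤ N + 1 := by have := (Finset.mem_Icc.mp hN).1; omega
    show ∫ x, f x ∂(convPow (μo + μr) N) = _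
    rw [integral_convPow_add _ _ _ hf hf1, Finset.sum_range_add_sum_Ico _ hN']
  · gcongr
    rw [← Finset.mul_sum]
    gcongr
    exact Real.sum_le_exp_of_nonneg hK _

end OPart


section L1Part
set_option linter.unusedSectionVars false
open MeasureTheory
open scoped ENNReal

variable {E : Type*} [NormedAddCommGroup E] [NormedSpace ℝ E] [MeasurableSpace E] [BorelSpace E]
  [SecondCountableTopology E]

lemma kset_exists (u : ℕ → ℝ) (k : ℕ) (v : ℝ) (R : ℕ) : ∃ K : Finset ℕ, K.card ≤ (2*R+5)^(k+1) ∧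
    ∀ σ : ℝ, pot u k σ < ENNReal.ofReal (Real.exp R) → ∀ j : ℕ, |σ + v + j| < 1 → j ∈ K := by
  classical
  set A : (Fin k → ℤ) → ℝ := fun a => - ctr u a - v - R - 2 with hA
  refine ⟨(Fintype.piFinset fun _ : Fin k => Finset.Icc (-(R:ℤ)) R).biUnion
    fun a => Finset.Ico ⌈A a⌉₊ (⌈A a⌉₊ + (2*R+4)), ?_, ?_⟩
  · refine (Finset.card_biUnion_le_card_mul _ _ (2*R+4) fun a _ => by simp).trans ?_
    rw [Fintype.card_piFinset, pow_succ]
    simp only [Int.card_Icc, Finset.prod_const, Finset.card_univ, Fintype.card_fin]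
    refine Nat.mul_le_mul (Nat.pow_le_pow_left (by omega) _) (by omega)
  · intro σ hσ j hj
    obtain ⟨a, ha1, ha2⟩ := pot_lt hσ
    rw [Finset.mem_biUnion]
    refine ⟨a, ?_, ?_⟩
    · rw [Fintype.mem_piFinset]
      intro i
      have h1 : ‖a i‖ ≤ ‖a‖ := norm_le_pi_norm a i
      rw [Int.norm_eq_abs] at h1
      have h2 : |(a i : ℝ)| ≤ (R:ℝ) := by linarith
      have h3 : |a i| ≤ (R:ℤ) := by exact_mod_cast h2
      rw [Finset.mem_Icc]; exact abs_le.mp h3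
    · rw [abs_lt] at hj ha2
      rw [Finset.mem_Ico]
      constructor
      · rw [Nat.ceil_le]; simp only [hA]; linarith
      · have : A a ≤ ⌈A a⌉₊ := Nat.le_ceil _
        have h2 : (j:ℝ) < ((⌈A a⌉₊ + (2*R+4) : ℕ):ℝ) := by
          push_cast; simp only [hA] at this ⊢; linarith
        exact_mod_cast h2

lemma l1_apx {ι : Type*} [Fintype ι] {μ : Measure E} [IsFiniteMeasure μ] (hμ1 : μ Set.univ ≤ 1)
    (hsym : μ.map (fun x => -x) = μ) {β : ℝ} (hβ0 : 0 ≤ β) (hβ : ∀ φ : E →L[ℝ] ℝ, -1 + β ≤ ∫ x, Real.cos (φ x) ∂μ)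
    (s : ι → E →L[ℝ] ℝ) (b : ι → ℝ) (u : ι → ℕ → ℝ) (kk : ι → ℕ) {r : ℕ} (hkr : ∀ i, kk i < r)
    (hout : ∀ i, ∀ᵐ y ∂μ, s i y ∉ OutS (u i) (kk i)) {W V : ℝ} (hW : ∀ i, ∫ y, min ((s i y)^2) 1 ∂μ ≤ W)
    {n L k D : ℕ} (hV : ((n + L : ℕ):ℝ) * (Real.exp 5 * W) ≤ V) (R : ℕ)
    (hk : k + 8 * L ≤ n) (hL : 1 ≤ L) {ν : ℝ}
    (hν : ∀ N ∈ Finset.Icc (n - L) (n + L), Real.exp (-(β * ((N - k : ℕ):ℝ))) ≤ ν) (y : E) :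
    Apx (Finset.Icc (n - L) (n + L)) D (Fintype.card ι * Real.exp (V - R) +
        (((2*R+5:ℕ):ℝ)^r)^Fintype.card ι * (c0 ^ Fintype.card ι * ((1/2) ^ D + ν)))
      (fun N => ∫ x, ∏ i, gst (s i (y + x) + b i) ∂(convPow μ (N - k))) := by
  classical
  have hν0 : 0 ≤ ν := (Real.exp_pos _).le.trans (hν n (by simp))
  have hc0 := c0_nonneg
  choose K hK1 hK2 using fun i => kset_exists (u i) (kk i) (s i y + b i) R
  -- truncated sum
  have hmain := Apx.sum (I := Finset.Icc (n - L) (n + L)) (d := D) (Fintype.piFinset K)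
    (f := fun p N => ∫ x, ∏ i, tau (s i x + (s i y + b i + p i)) ∂(convPow μ (N - k)))
    fun p _ => tau_prod_apx (D := D) hμ1 hsym hβ0 hβ s (fun i => s i y + b i + p i) hk hL hν
  have hsm : ∀ i, Measurable (s i) := fun i => (s i).continuous.measurable
  have htm := tau_cont.measurable
  have hgm := gst_cont.measurable
  have hpm : ∀ i, Measurable fun x => pot (u i) (kk i) (s i x) := fun i => (pot_meas _ _).comp (hsm i)
  -- pointwise identity
  have hpt : ∀ x, ∑ p ∈ Fintype.piFinset K, ∏ i, tau (s i x + (s i y + b i + p i)) =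
      ∏ i, ∑ j ∈ K i, tau (s i (y+x) + b i + j) := by
    intro x
    rw [Finset.prod_univ_sum]
    refine Finset.sum_congr rfl fun p _ => Finset.prod_congr rfl fun i _ => ?_
    rw [map_add]; congr 1; ring
  have hp0 : ∀ x, 0 ≤ ∏ i, ∑ j ∈ K i, tau (s i (y+x) + b i + j) := fun x =>
    Finset.prod_nonneg fun i _ => Finset.sum_nonneg fun j _ => tau_nonneg _
  have hp1 : ∀ x, ∏ i, ∑ j ∈ K i, tau (s i (y+x) + b i + j) ≤ ∏ i, gst (s i (y+x) + b i) := fun x =>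
    Finset.prod_le_prod (fun i _ => Finset.sum_nonneg fun j _ => tau_nonneg _) fun i _ => tau_sum_le _ _
  have hg1 : ∀ x, ∏ i, gst (s i (y+x) + b i) ≤ 1 := fun x =>
    Finset.prod_le_one (fun i _ => gst_nonneg _) fun i _ => gst_le_one _
  have hg0 : ∀ x, 0 ≤ ∏ i, gst (s i (y+x) + b i) := fun x =>
    Finset.prod_nonneg fun i _ => gst_nonneg _
  set Bad : ι → Set E := fun i => {x | ENNReal.ofReal (Real.exp R) ≤ pot (u i) (kk i) (s i x)} with hBad
  have hBm : ∀ i, MeasurableSet (Bad i) := fun i => measurableSet_le measurable_const (hpm i)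
  have hdiff : ∀ x, |∏ i, gst (s i (y+x) + b i) - ∏ i, ∑ j ∈ K i, tau (s i (y+x) + b i + j)| ≤
      ∑ i, (Bad i).indicator (fun _ => (1:ℝ)) x := by
    intro x
    by_cases hx : ∃ i, x ∈ Bad i
    · obtain ⟨i, hi⟩ := hx
      have h1 : (Bad i).indicator (fun _ => (1:ℝ)) x ≤ ∑ i, (Bad i).indicator (fun _ => (1:ℝ)) x :=
        Finset.single_le_sum (f := fun i => (Bad i).indicator (fun _ => (1:ℝ)) x)
          (fun j _ => Set.indicator_nonneg (fun _ _ => zero_le_one) x) (Finset.mem_univ i)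
      rw [Set.indicator_of_mem hi] at h1
      rw [abs_of_nonneg (by linarith [hp1 x])]
      linarith [hp0 x, hg1 x]
    · push Not at hx
      have : ∏ i, ∑ j ∈ K i, tau (s i (y+x) + b i + j) = ∏ i, gst (s i (y+x) + b i) := by
        refine Finset.prod_congr rfl fun i _ => tau_sum_eq _ _ fun j hj => ?_
        refine hK2 i (s i x) ?_ j ?_
        · have := hx i; simpa [hBad] using this
        · rw [map_add] at hj; convert hj using 2; ring
      rw [this, sub_self, abs_zero]
      exact Finset.sum_nonneg fun i _ => Set.indicator_nonneg (fun _ _ => zero_le_one) x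
  have hrem : Apx (Finset.Icc (n - L) (n + L)) D (Fintype.card ι * Real.exp (V - R))
      (fun N => ∫ x, (∏ i, gst (s i (y+x) + b i) - ∏ i, ∑ j ∈ K i, tau (s i (y+x) + b i + j)) ∂(convPow μ (N - k))) := by
    refine apx_of_le fun N hN => ?_
    have hind : ∀ i, Integrable ((Bad i).indicator (fun _ => (1:ℝ))) (convPow μ (N-k)) := fun i =>
      (integrable_const _).indicator (hBm i)
    refine (abs_integral_le_integral_abs).trans ?_
    refine (integral_mono_of_nonneg (Filter.Eventually.of_forall fun x => abs_nonneg _)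
      (integrable_finsetSum _ fun i _ => hind i) (Filter.Eventually.of_forall hdiff)).trans ?_
    rw [integral_finsetSum _ fun i _ => hind i]
    have : ∀ i ∈ Finset.univ, ∫ x, (Bad i).indicator (fun _ => (1:ℝ)) x ∂(convPow μ (N - k)) ≤ Real.exp (V - R) := by
      intro i _
      rw [integral_indicator_const _ (hBm i), smul_eq_mul, mul_one]
      refine (pot_tail hμ1 hsym (s i) (hout i) (hW i) (N - k) R).trans ?_
      refine Real.exp_le_exp.mpr ?_
      have hW0 : 0 ≤ W := (integral_nonneg fun y => le_min (sq_nonneg _) zero_le_one).trans (hW i)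
      have : ((N - k : ℕ):ℝ) ≤ ((n + L : ℕ):ℝ) := by
        have := (Finset.mem_Icc.mp hN).2
        exact_mod_cast (by omega)
      have : ((N - k : ℕ):ℝ) * (Real.exp 5 * W) ≤ ((n + L : ℕ):ℝ) * (Real.exp 5 * W) := by gcongr
      linarith
    refine (Finset.sum_le_sum this).trans ?_
    simp
  have hi1 : ∀ N, Integrable (fun x => ∏ i, gst (s i (y+x) + b i)) (convPow μ (N-k)) := fun N =>
    integrable_of_bdd (C := 1) (by fun_prop) fun x => by rw [abs_of_nonneg (hg0 x)]; exact hg1 x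
  have hi2 : ∀ N, Integrable (fun x => ∏ i, ∑ j ∈ K i, tau (s i (y+x) + b i + j)) (convPow μ (N-k)) := fun N =>
    integrable_of_bdd (C := 1) (by fun_prop) fun x => by
      rw [abs_of_nonneg (hp0 x)]; exact (hp1 x).trans (hg1 x)
  have hi3 : ∀ N, ∀ p ∈ Fintype.piFinset K, Integrable (fun x => ∏ i, tau (s i x + (s i y + b i + p i))) (convPow μ (N-k)) := by
    intro N p hp
    refine integrable_of_bdd (C := 1) (by fun_prop) fun x => ?_
    have h0 : ∀ q ∈ Fintype.piFinset K, 0 ≤ ∏ i, tau (s i x + (s i y + b i + q i)) := fun q _ =>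
      Finset.prod_nonneg fun i _ => tau_nonneg _
    rw [abs_of_nonneg (h0 p hp)]
    refine (Finset.single_le_sum h0 hp).trans ?_
    rw [hpt x]; exact (hp1 x).trans (hg1 x)
  refine ((hrem.add hmain).congr fun N _ => ?_).mono le_rfl ?_
  · show _ = (∫ x, _ ∂_) + ∑ p ∈ _, ∫ x, _ ∂_
    rw [← integral_finsetSum _ (hi3 N)]
    simp_rw [hpt]
    rw [integral_sub (hi1 N) (hi2 N)]; ring
  · rw [Finset.sum_const, nsmul_eq_mul]
    gcongr
    rw [Fintype.card_piFinset, ← Finset.card_univ, ← Finset.prod_const]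
    push_cast
    refine Finset.prod_le_prod (fun i _ => by positivity) fun i _ => ?_
    have : (K i).card ≤ (2*R+5)^r := (hK1 i).trans (Nat.pow_le_pow_right (by omega) (hkr i))
    exact_mod_cast this

end L1Part


section MLPart
set_option linter.unusedSectionVars false
open MeasureTheory
open scoped ENNReal

variable {E : Type*} [NormedAddCommGroup E] [NormedSpace ℝ E] [MeasurableSpace E] [BorelSpace E]
  [SecondCountableTopology E]

lemma pow_le_exp_add {c α : ℝ} (hc : -1 + α ≤ c) (M : ℕ) :
    c ^ (2*M) ≤ Real.exp (-((2*M:ℕ) * (1 - c))) + Real.exp (-((2*M:ℕ) * α)) := by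
  have key : ∀ a b : ℝ, 0 ≤ a → a ≤ 1 - b → a ^ (2*M) ≤ Real.exp (-((2*M:ℕ) * b)) := by
    intro a b ha hab
    have h1 : a ≤ Real.exp (-b) := by linarith [Real.add_one_le_exp (-b)]
    calc a ^ (2*M) ≤ Real.exp (-b) ^ (2*M) := by gcongr
      _ = _ := by rw [← Real.exp_nat_mul]; congr 1; ring
  by_cases h0 : 0 ≤ c
  · have := key c (1 - c) h0 (by linarith)
    linarith [Real.exp_pos (-((2*M:ℕ) * α))]
  · have := key (-c) α (by linarith) (by linarith)
    rw [Even.neg_pow (even_two_mul M)] at this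
    linarith [Real.exp_pos (-((2*M:ℕ) * (1 - c)))]

lemma mainLem {ι : Type*} [Fintype ι] {F : Measure E} [IsProbabilityMeasure F]
    (hsym : F.map (fun x => -x) = F) {α : ℝ} (hα0 : 0 ≤ α) (hα : ∀ φ : E →L[ℝ] ℝ, -1 + α ≤ ∫ x, Real.cos (φ x) ∂F)
    (s : ι → E →L[ℝ] ℝ) (b : ι → ℝ) {l M r n L D km R : ℕ} (hM : 1 ≤ M)
    (h : ∀ i, (1/2:ℝ)^(l+1) ≤ ∫ ξ, (∫ x, Real.cos (ξ * s i x) ∂F)^(2*M) ∂gam)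
    (hMα : Real.exp (-((2*M:ℕ) * α)) ≤ (1/2:ℝ)^(l+2))
    (hr : 1 ≤ r) (hrq : Cs * (3/5) ^ r < (1/2:ℝ)^(l+2))
    (hκ : (Fintype.card ι * r : ℝ) / (2*M:ℕ) ≤ α / 2)
    (hn : n + L ≤ 5 * (2 * M)) (hk : km + 8 * L ≤ n) (hL : 1 ≤ L) {ν : ℝ}
    (hν : Real.exp (-(α/2 * ((n - L - km : ℕ):ℝ))) ≤ ν) :
    Apx (Finset.Icc (n - L) (n + L)) (D + km)
      ((Fintype.card ι * Real.exp (5 * Real.exp 5 * (144 / ((1/2)^(l+2))^2) - R) +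
        (((2*R+5:ℕ):ℝ)^r)^Fintype.card ι * (c0 ^ Fintype.card ι * ((1/2) ^ D + ν))) * Real.exp (5 * (Fintype.card ι * r))
        + Real.exp (3 * (5 * (Fintype.card ι * r)) - km))
      (fun N => ∫ x, ∏ i, gst (s i x + b i) ∂(convPow F N)) := by
  classical
  set q : ℝ := (1/2:ℝ)^(l+2) with hq
  have hq0 : 0 < q := by positivity
  have hq1 : q ≤ 1 := pow_le_one₀ (by norm_num) (by norm_num)
  have hsm : ∀ i, Measurable (s i) := fun i => (s i).continuous.measurable
  set m2 : ℝ := ((2*M:ℕ):ℝ) with hm2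
  have hm2pos : 0 < m2 := by rw [hm2]; exact_mod_cast (by omega)
  set cM : NNReal := ((2*M:ℕ):NNReal) with hcM
  have hcM' : (cM : ℝ) = m2 := by simp [hcM, hm2]
  set Λ : ι → Measure ℝ := fun i => cM • F.map (s i) with hΛ
  have hΛint : ∀ i (f : ℝ → ℝ), Measurable f → ∫ y, f y ∂(Λ i) = m2 * ∫ x, f (s i x) ∂F := by
    intro i f hf
    simp only [hΛ]
    rw [integral_smul_nnreal_measure, integral_map (hsm i).aemeasurable hf.aestronglyMeasurable,
      NNReal.smul_def, hcM', smul_eq_mul]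
  have hprob : ∀ i, IsProbabilityMeasure (F.map (s i)) := fun i =>
    Measure.isProbabilityMeasure_map (hsm i).aemeasurable
  have hΛfin : ∀ i, IsFiniteMeasure (Λ i) := fun i => by simp only [hΛ]; infer_instance
  -- characteristic bound
  have hch : ∀ i, q ≤ ∫ x, Real.exp (-∫ y, (1 - Real.cos (x * y)) ∂(Λ i)) ∂gam := by
    intro i
    have hc : Continuous fun ξ : ℝ => ∫ x, Real.cos (ξ * s i x) ∂F := by
      refine continuous_of_dominated (bound := fun _ => (1:ℝ)) (fun ξ => ?_) (fun ξ => ?_) (integrable_const _) ?_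
      · have := hsm i
        exact (by fun_prop : Measurable fun x => Real.cos (ξ * s i x)).aestronglyMeasurable
      · exact Filter.Eventually.of_forall fun x => by simpa using Real.abs_cos_le_one _
      · exact Filter.Eventually.of_forall fun x => by fun_prop
    have hcint : ∀ ξ, Integrable (fun x => Real.cos (ξ * s i x)) F := fun ξ => by
      have := hsm i
      exact integrable_of_bdd (C := 1) (by fun_prop) fun x => Real.abs_cos_le_one _
    have hc1 : ∀ ξ, ∫ x, Real.cos (ξ * s i x) ∂F ≤ 1 := fun ξ => by
      have := integral_mono (hcint ξ) (integrable_const (1:ℝ)) fun x => Real.cos_le_one _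
      simpa using this
    have hcl : ∀ ξ, -1 + α ≤ ∫ x, Real.cos (ξ * s i x) ∂F := fun ξ => by
      have := hα (ξ • s i)
      simpa using this
    have heq : ∀ ξ, ∫ y, (1 - Real.cos (ξ * y)) ∂(Λ i) = m2 * (1 - ∫ x, Real.cos (ξ * s i x) ∂F) := fun ξ => by
      rw [hΛint i _ (by fun_prop), integral_sub (integrable_const _) (hcint ξ)]
      simp
    simp_rw [heq]
    have hα2 : α ≤ 2 := by
      have := (hcl 0).trans (hc1 0); linarith
    have hgf : IsFiniteMeasure gam := by unfold gam; infer_instance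
    have hgp : IsProbabilityMeasure gam := by unfold gam; infer_instance
    have hi1 : Integrable (fun ξ => Real.exp (-(m2 * (1 - ∫ x, Real.cos (ξ * s i x) ∂F)))) gam := by
      refine integrable_of_bdd (C := 1) (Real.continuous_exp.comp ((continuous_const.mul (continuous_const.sub hc)).neg)).measurable fun ξ => ?_
      rw [abs_of_pos (Real.exp_pos _)]
      refine Real.exp_le_one_iff.mpr ?_
      have : 0 ≤ m2 * (1 - ∫ x, Real.cos (ξ * s i x) ∂F) := mul_nonneg hm2pos.le (by linarith [hc1 ξ])
      linarith
    have hi2 : Integrable (fun ξ => (∫ x, Real.cos (ξ * s i x) ∂F)^(2*M)) gam := by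
      refine integrable_of_bdd (C := 1) (hc.pow _).measurable fun ξ => ?_
      rw [abs_pow]
      exact pow_le_one₀ (abs_nonneg _) (abs_le.mpr ⟨by linarith [hcl ξ], hc1 ξ⟩)
    have h3 := integral_mono hi2 (hi1.add (integrable_const (Real.exp (-(m2 * α)))))
      fun ξ => pow_le_exp_add (hcl ξ) M
    rw [integral_add' hi1 (integrable_const _)] at h3
    simp only [integral_const, smul_eq_mul, probReal_univ, one_mul] at h3
    have h4 := h i
    have h5 : (1/2:ℝ)^(l+1) = 2 * q := by rw [hq]; ring
    rw [h5] at h4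
    linarith
  choose kk hkk u hu using fun i => structure_lemma hr hrq (hch i)
  have hWΛ : ∀ i, ∫ y, min (y^2) 1 ∂(Λ i) ≤ 144 / q^2 := fun i => W_bound hq0 hq1 (hch i)
  set Oi : ι → Set E := fun i => s i ⁻¹' (OutS (u i) (kk i)) with hOi
  have hOim : ∀ i, MeasurableSet (Oi i) := fun i => hsm i (OutS_meas _ _)
  set O : Set E := ⋃ i, Oi i with hO
  have hOm : MeasurableSet O := MeasurableSet.iUnion hOim
  have hOneg : (fun x : E => -x) ⁻¹' O = O := by
    have hh : ∀ x ∈ O, -x ∈ O := by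
      intro x hx
      obtain ⟨i, hi⟩ := Set.mem_iUnion.mp hx
      refine Set.mem_iUnion.mpr ⟨i, ?_⟩
      show s i (-x) ∈ OutS (u i) (kk i)
      rw [map_neg]; exact OutS_neg _ _ hi
    ext x
    exact ⟨fun hx => by simpa using hh _ hx, hh x⟩
  have hFOi : ∀ i, F.real (Oi i) ≤ r / m2 := by
    intro i
    have h1 := hu i
    rw [measureReal_def] at h1
    simp only [hΛ, Measure.smul_apply, Measure.map_apply (hsm i) (OutS_meas _ _)] at h1
    rw [le_div_iff₀ hm2pos, ← hcM', measureReal_def]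
    refine le_of_lt (lt_of_eq_of_lt ?_ h1)
    rw [ENNReal.smul_def, smul_eq_mul, ENNReal.toReal_mul, mul_comm]; simp [hOi]
  have hFO : F.real O ≤ Fintype.card ι * r / m2 := by
    refine (measureReal_iUnion_fintype_le _).trans ((Finset.sum_le_sum fun i _ => hFOi i).trans ?_)
    simp [mul_div_assoc]
  have hFOα : F.real O ≤ α/2 := hFO.trans hκ
  -- decomposition
  have hdec : F.restrict O + F.restrict Oᶜ = F := Measure.restrict_add_restrict_compl hOm
  have hr1 : F.restrict Oᶜ Set.univ ≤ 1 := by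
    rw [Measure.restrict_apply_univ]; exact prob_le_one
  have hrsym : (F.restrict Oᶜ).map (fun x => -x) = F.restrict Oᶜ := by
    have h1 : (fun x : E => -x) ⁻¹' Oᶜ = Oᶜ := by rw [Set.preimage_compl, hOneg]
    have := Measure.restrict_map (μ := F) (f := fun x : E => -x) measurable_neg hOm.compl
    rw [hsym, h1] at this
    exact this.symm
  have hrβ : ∀ φ : E →L[ℝ] ℝ, -1 + α/2 ≤ ∫ x, Real.cos (φ x) ∂(F.restrict Oᶜ) := by
    intro φ
    have hφm : Measurable φ := φ.continuous.measurable
    have hIntg : Integrable (fun x => Real.cos (φ x)) F :=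
      integrable_of_bdd (C := 1) (by fun_prop) fun x => Real.abs_cos_le_one _
    have h1 := integral_add_compl hOm hIntg
    have h2 : ∫ x in O, Real.cos (φ x) ∂F ≤ F.real O := by
      have := integral_mono (μ := F.restrict O) hIntg.restrict (integrable_const (1:ℝ)) fun x => Real.cos_le_one _
      simpa using this
    linarith [hα φ]
  have hrout : ∀ i, ∀ᵐ y ∂(F.restrict Oᶜ), s i y ∉ OutS (u i) (kk i) := by
    intro i
    filter_upwards [ae_restrict_mem hOm.compl] with y hy hy2
    exact hy (Set.mem_iUnion.mpr ⟨i, hy2⟩)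
  have hrW : ∀ i, ∫ y, min ((s i y)^2) 1 ∂(F.restrict Oᶜ) ≤ (144 / q^2) / m2 := by
    intro i
    have hIntg : Integrable (fun x => min ((s i x)^2) 1) F := by
      have := hsm i
      refine integrable_of_bdd (C := 1) (by fun_prop) fun x => ?_
      rw [abs_of_nonneg (le_min (sq_nonneg _) zero_le_one)]; exact min_le_right _ _
    refine (setIntegral_le_integral hIntg (Filter.Eventually.of_forall fun x => le_min (sq_nonneg _) zero_le_one)).trans ?_
    rw [le_div_iff₀ hm2pos, mul_comm, ← hΛint i (fun y => min (y^2) 1) (by fun_prop)]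
    exact hWΛ i
  have hnL : ((n + L : ℕ):ℝ) ≤ 5 * m2 := by rw [hm2]; exact_mod_cast hn
  have hV : ((n + L : ℕ):ℝ) * (Real.exp 5 * ((144 / q^2) / m2)) ≤ 5 * Real.exp 5 * (144 / q^2) := by
    calc ((n + L : ℕ):ℝ) * (Real.exp 5 * ((144 / q^2) / m2)) ≤ (5 * m2) * (Real.exp 5 * ((144 / q^2) / m2)) := by gcongr
      _ = _ := by field_simp
  have hc0 := c0_nonneg
  have hν0 : 0 ≤ ν := (Real.exp_pos _).le.trans hν
  have hgm := gst_cont.measurable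
  have hfin := binom_apx (μo := F.restrict O) (μr := F.restrict Oᶜ) hr1
    (f := fun x => ∏ i, gst (s i x + b i)) (by fun_prop)
    (fun x => by
      rw [abs_of_nonneg (Finset.prod_nonneg fun i _ => gst_nonneg _)]
      exact Finset.prod_le_one (fun i _ => gst_nonneg _) fun i _ => gst_le_one _)
    (n := n) (L := L) (D := D) (km := km) (K0 := 5 * (Fintype.card ι * r))
    (e1 := Fintype.card ι * Real.exp (5 * Real.exp 5 * (144 / q^2) - R) +
        (((2*R+5:ℕ):ℝ)^r)^Fintype.card ι * (c0 ^ Fintype.card ι * ((1/2) ^ D + ν)))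
    (by positivity) (by omega)
    (by
      rw [measureReal_restrict_apply_univ]
      calc ((n + L : ℕ):ℝ) * F.real O ≤ (5 * m2) * (Fintype.card ι * r / m2) := by gcongr
        _ = _ := by field_simp)
    (fun k hkk' y => l1_apx hr1 hrsym (by positivity : 0 ≤ α/2) hrβ s b u kk hkk hrout hrW hV R (by omega) hL
      (fun N hN => by
        refine le_trans (Real.exp_le_exp.mpr ?_) hν
        have h1 : ((n - L - km : ℕ):ℝ) ≤ ((N - k : ℕ):ℝ) := by
          have := (Finset.mem_Icc.mp hN).1
          exact_mod_cast (by omega)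
        have : α/2 * ((n - L - km : ℕ):ℝ) ≤ α/2 * ((N - k : ℕ):ℝ) := by gcongr
        linarith) y)
  rw [hdec] at hfin
  exact hfin

end MLPart


section ScPart
set_option linter.unusedSectionVars false
open MeasureTheory
open scoped ENNReal

variable {E : Type*} [NormedAddCommGroup E] [NormedSpace ℝ E] [MeasurableSpace E] [BorelSpace E]
  [SecondCountableTopology E]

lemma gam_prob : IsProbabilityMeasure gam := by unfold gam; infer_instance

/-- symmetric char. function along `s`, as real integral -/
noncomputable def rch (F : Measure E) (s : E →L[ℝ] ℝ) (ξ : ℝ) : ℝ := ∫ x, Real.cos (ξ * s x) ∂F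

lemma rch_cont (F : Measure E) [IsProbabilityMeasure F] (s : E →L[ℝ] ℝ) : Continuous (rch F s) := by
  have hs : Measurable s := s.continuous.measurable
  refine continuous_of_dominated (bound := fun _ => (1:ℝ)) (fun ξ => ?_) (fun ξ => ?_) (integrable_const _) ?_
  · exact (by fun_prop : Measurable fun x => Real.cos (ξ * s x)).aestronglyMeasurable
  · exact Filter.Eventually.of_forall fun x => by simpa using Real.abs_cos_le_one _
  · exact Filter.Eventually.of_forall fun x => by fun_prop

lemma rch_abs (F : Measure E) [IsProbabilityMeasure F] (s : E →L[ℝ] ℝ) (ξ : ℝ) : |rch F s ξ| ≤ 1 := by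
  have := norm_integral_le_of_norm_le_const (μ := F) (f := fun x => Real.cos (ξ * s x)) (C := 1)
    (Filter.Eventually.of_forall fun x => by simpa using Real.abs_cos_le_one _)
  simpa [rch] using this

noncomputable def Qf (F : Measure E) (s : E →L[ℝ] ℝ) (M : ℕ) (τ : ℝ) : ℝ := ∫ ξ, (rch F s (ξ * τ))^(2*M) ∂gam

lemma Qf_cont (F : Measure E) [IsProbabilityMeasure F] (s : E →L[ℝ] ℝ) (M : ℕ) : Continuous (Qf F s M) := by
  have := gam_prob
  have hc := rch_cont F s
  refine continuous_of_dominated (bound := fun _ => (1:ℝ)) (fun τ => ?_) (fun τ => ?_) (integrable_const _) ?_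
  · exact (by fun_prop : Continuous fun ξ => (rch F s (ξ * τ))^(2*M)).aestronglyMeasurable
  · exact Filter.Eventually.of_forall fun x => by
      rw [Real.norm_eq_abs, abs_pow]; exact pow_le_one₀ (abs_nonneg _) (rch_abs _ _ _)
  · exact Filter.Eventually.of_forall fun x => by fun_prop

lemma Qf_zero (F : Measure E) [IsProbabilityMeasure F] (s : E →L[ℝ] ℝ) (M : ℕ) : Qf F s M 0 = 1 := by
  have := gam_prob
  simp [Qf, rch]

lemma cos_shift_convPow {F : Measure E} [IsProbabilityMeasure F] (hsym : F.map (fun x => -x) = F)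
    (s : E →L[ℝ] ℝ) (ξ w : ℝ) (N : ℕ) :
    ∫ x, Real.cos (ξ * s x - w) ∂(convPow F N) = Real.cos w * (rch F s ξ)^N := by
  have hs : Measurable s := s.continuous.measurable
  have h1 := cexp_convPow F (ξ • s) N
  rw [cexp_symm hsym] at h1
  have hi := integrable_cexp (convPow F N) (φ := fun x => ξ * s x) (by fun_prop)
  have h2 : ∀ x, Real.cos (ξ * s x - w) = (Complex.exp (-((w:ℂ) * Complex.I)) * Complex.exp ((ξ * s x : ℝ) * Complex.I)).re := by
    intro x
    rw [← Complex.exp_add, ← Complex.exp_ofReal_mul_I_re]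
    congr 2; push_cast; ring
  simp_rw [h2]
  have h3 := integral_re (hi.const_mul (Complex.exp (-((w:ℂ) * Complex.I))))
  simp only [RCLike.re_eq_complex_re] at h3
  rw [h3, integral_const_mul]
  have h4 : ∫ x, Complex.exp ((ξ * s x : ℝ) * Complex.I) ∂(convPow F N) = ((rch F s ξ ^ N : ℝ) : ℂ) := by
    simpa [rch] using h1
  rw [h4, Complex.re_mul_ofReal, ← neg_mul, ← Complex.ofReal_neg, Complex.exp_ofReal_mul_I_re, Real.cos_neg]

lemma conc_bound {F : Measure E} [IsProbabilityMeasure F] (hsym : F.map (fun x => -x) = F)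
    (s : E →L[ℝ] ℝ) {M N : ℕ} (hN : 2 * M ≤ N) {τ : ℝ} (z : ℝ) :
    (convPow F N).real {x | |τ * (s x - z)| ≤ 1} ≤ 2 * Qf F s M τ := by
  have hs : Measurable s := s.continuous.measurable
  have := gam_prob
  have hS : MeasurableSet {x | |τ * (s x - z)| ≤ 1} := measurableSet_le (by fun_prop) measurable_const
  set G := convPow F N with hG
  have hpt : ∀ x, {x | |τ * (s x - z)| ≤ 1}.indicator (fun _ => (1:ℝ)) x ≤ 2 * ∫ ξ, Real.cos (ξ * (τ * (s x - z))) ∂gam := by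
    intro x
    rw [gam_cos]
    by_cases hx : |τ * (s x - z)| ≤ 1
    · rw [Set.indicator_of_mem (by exact hx)]
      have h1 : (τ * (s x - z))^2 ≤ 1 := (sq_le_one_iff_abs_le_one _).mpr hx
      have := Real.add_one_le_exp (-((τ * (s x - z))^2/2))
      linarith
    · rw [Set.indicator_of_notMem (by exact hx)]; positivity
  have hIntg : Integrable (fun p : E × ℝ => Real.cos (p.2 * (τ * (s p.1 - z)))) (G.prod gam) :=
    integrable_of_bdd (C := 1) (by fun_prop) fun p => Real.abs_cos_le_one _
  have h1 : G.real {x | |τ * (s x - z)| ≤ 1} ≤ 2 * ∫ x, ∫ ξ, Real.cos (ξ * (τ * (s x - z))) ∂gam ∂G := by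
    rw [← integral_const_mul]
    have := integral_mono ((integrable_const (1:ℝ)).indicator hS) (hIntg.integral_prod_left.const_mul 2) hpt
    rwa [integral_indicator_const _ hS, smul_eq_mul, mul_one] at this
  refine h1.trans ?_
  rw [integral_integral_swap hIntg]
  have h2 : ∀ ξ, ∫ x, Real.cos (ξ * (τ * (s x - z))) ∂G = Real.cos (ξ * τ * z) * (rch F s (ξ * τ))^N := by
    intro ξ
    rw [← cos_shift_convPow hsym]
    congr 1; ext x; congr 1; ring
  simp_rw [h2]
  have hc := rch_cont F s
  unfold Qf
  gcongr 2 * ?_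
  refine integral_mono ?_ ?_ fun ξ => ?_
  · refine integrable_of_bdd (C := 1) (by fun_prop) fun ξ => ?_
    rw [abs_mul, abs_pow]
    exact mul_le_one₀ (Real.abs_cos_le_one _) (by positivity) (pow_le_one₀ (abs_nonneg _) (rch_abs _ _ _))
  · refine integrable_of_bdd (C := 1) (by fun_prop) fun ξ => ?_
    rw [abs_pow]; exact pow_le_one₀ (abs_nonneg _) (rch_abs _ _ _)
  · refine (le_abs_self _).trans ?_
    rw [abs_mul, abs_pow, ← Even.pow_abs (even_two_mul M)]
    calc |Real.cos (ξ * τ * z)| * |rch F s (ξ * τ)| ^ N ≤ 1 * |rch F s (ξ * τ)| ^ (2*M) :=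
          mul_le_mul (Real.abs_cos_le_one _) (pow_le_pow_of_le_one (abs_nonneg _) (rch_abs _ _ _) hN) (by positivity) zero_le_one
      _ = _ := one_mul _

lemma scale_exists {F : Measure E} [IsProbabilityMeasure F] (hsym : F.map (fun x => -x) = F)
    (s : E →L[ℝ] ℝ) (z : ℝ) {M l : ℕ} {I : Finset ℕ} (hI : ∀ N ∈ I, 2 * M ≤ N) {T : ℝ} (hT : 0 < T)
    (h : ∀ N ∈ I, (convPow F N).real {x | z < s x ∧ s x < z + 1 / T} ≤ (1/2:ℝ)^l) :
    ∃ τ : ℝ, 0 < τ ∧ (1/2:ℝ)^(l+1) ≤ Qf F s M τ ∧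
      ∀ N ∈ I, (convPow F N).real {x | z < s x ∧ s x < z + 1 / τ} ≤ (1/2:ℝ)^l := by
  by_cases hQ : (1/2:ℝ)^(l+1) ≤ Qf F s M T
  · exact ⟨T, hT, hQ, h⟩
  · push Not at hQ
    have hlt : (1/2:ℝ)^(l+1) < 1 := pow_lt_one₀ (by norm_num) (by norm_num) (by omega)
    obtain ⟨τ, hτ, hτe⟩ := intermediate_value_Icc' hT.le (Qf_cont F s M).continuousOn
      (show (1/2:ℝ)^(l+1) ∈ Set.Icc (Qf F s M T) (Qf F s M 0) by rw [Qf_zero]; exact ⟨hQ.le, hlt.le⟩)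
    have hτ0 : 0 < τ := by
      rcases hτ.1.lt_or_eq with h0 | h0
      · exact h0
      · rw [← h0, Qf_zero] at hτe; linarith
    refine ⟨τ, hτ0, hτe.ge, fun N hN => ?_⟩
    have hc := conc_bound hsym s (hI N hN) (τ := τ) (z + 1/τ)
    rw [hτe] at hc
    have h2 : 2 * (1/2:ℝ)^(l+1) = (1/2)^l := by ring
    rw [h2] at hc
    refine (measureReal_mono (fun x hx => ?_)).trans hc
    obtain ⟨hx1, hx2⟩ := hx
    show |τ * (s x - (z + 1/τ))| ≤ 1
    have h3 : τ * (s x - (z + 1/τ)) = τ * (s x - z) - 1 := by field_simp; ring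
    have h4 : 0 < τ * (s x - z) := mul_pos hτ0 (by linarith)
    have h5 : τ * (s x - z) < 1 := by
      have : s x - z < 1/τ := by linarith
      rwa [lt_div_iff₀ hτ0, mul_comm] at this
    rw [h3, abs_le]; constructor <;> linarith

lemma T_exists {ι : Type*} [Fintype ι] {F : Measure E} [IsProbabilityMeasure F]
    (s : ι → E →L[ℝ] ℝ) (z : ι → ℝ) (I : Finset ℕ) {ε : ℝ} (hε : 0 < ε) :
    ∃ T : ℝ, 0 < T ∧ ∀ i, ∀ N ∈ I, (convPow F N).real {x | z i < s i x ∧ s i x < z i + 1 / T} ≤ ε := by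
  have key : ∀ i, ∀ N ∈ I, ∀ᶠ k : ℕ in Filter.atTop,
      (convPow F N).real {x | z i < s i x ∧ s i x < z i + 1 / ((k:ℝ) + 1)} ≤ ε := by
    intro i N _
    have hs : Measurable (s i) := (s i).continuous.measurable
    have hanti : Antitone fun k : ℕ => {x | z i < s i x ∧ s i x < z i + 1 / ((k:ℝ) + 1)} := by
      intro a b hab x hx
      refine ⟨hx.1, hx.2.trans_le ?_⟩
      have : (a:ℝ) ≤ b := by exact_mod_cast hab
      gcongr
    have hemp : ⋂ k : ℕ, {x | z i < s i x ∧ s i x < z i + 1 / ((k:ℝ) + 1)} = ∅ := by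
      ext x
      simp only [Set.mem_iInter, Set.mem_empty_iff_false, iff_false]
      intro hx
      have h0 : z i < s i x := (hx 0).1
      obtain ⟨k, hk⟩ := exists_nat_one_div_lt (sub_pos.mpr h0)
      have := (hx k).2
      linarith
    have ht := tendsto_measure_iInter_atTop (μ := convPow F N)
      (s := fun k : ℕ => {x | z i < s i x ∧ s i x < z i + 1 / ((k:ℝ) + 1)})
      (fun k => ((measurableSet_lt measurable_const hs).inter (measurableSet_lt hs measurable_const)).nullMeasurableSet)
      hanti ⟨0, measure_ne_top _ _⟩
    rw [hemp, measure_empty] at ht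
    have ht2 := (ENNReal.tendsto_toReal ENNReal.zero_ne_top).comp ht
    exact (ht2.eventually (ge_mem_nhds (by simpa using hε))).mono fun k hk => hk
  have key2 : ∀ᶠ k : ℕ in Filter.atTop, ∀ i, ∀ N ∈ I,
      (convPow F N).real {x | z i < s i x ∧ s i x < z i + 1 / ((k:ℝ) + 1)} ≤ ε := by
    rw [Filter.eventually_all]
    intro i
    rw [Filter.eventually_all_finset]
    exact key i
  obtain ⟨k, hk⟩ := key2.exists
  exact ⟨(k:ℝ)+1, by positivity, hk⟩

lemma level_apx {ι : Type*} [Fintype ι] {F : Measure E} [IsProbabilityMeasure F]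
    (hsym : F.map (fun x => -x) = F) {α : ℝ} (hα0 : 0 ≤ α) (hα : ∀ φ : E →L[ℝ] ℝ, -1 + α ≤ ∫ x, Real.cos (φ x) ∂F)
    (s : ι → E →L[ℝ] ℝ) (z : ι → ℝ) {l M r n L D km R : ℕ} (hM : 1 ≤ M)
    (hMα : Real.exp (-((2*M:ℕ) * α)) ≤ (1/2:ℝ)^(l+2))
    (hr : 1 ≤ r) (hrq : Cs * (3/5) ^ r < (1/2:ℝ)^(l+2))
    (hκ : (Fintype.card ι * r : ℝ) / (2*M:ℕ) ≤ α / 2) (hnM : 2 * M ≤ n - L)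
    (hn : n + L ≤ 5 * (2 * M)) (hk : km + 8 * L ≤ n) (hL : 1 ≤ L) {ν : ℝ}
    (hν : Real.exp (-(α/2 * ((n - L - km : ℕ):ℝ))) ≤ ν) :
    Apx (Finset.Icc (n - L) (n + L)) (D + km)
      (((Fintype.card ι * Real.exp (5 * Real.exp 5 * (144 / ((1/2)^(l+2))^2) - R) +
        (((2*R+5:ℕ):ℝ)^r)^Fintype.card ι * (c0 ^ Fintype.card ι * ((1/2) ^ D + ν))) * Real.exp (5 * (Fintype.card ι * r))
        + Real.exp (3 * (5 * (Fintype.card ι * r)) - km)) + Fintype.card ι * (1/2)^l)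
      (fun N => (convPow F N).real {x | ∀ i, s i x ≤ z i}) := by
  classical
  have hsm : ∀ i, Measurable (s i) := fun i => (s i).continuous.measurable
  set I := Finset.Icc (n - L) (n + L) with hI
  obtain ⟨T, hT, hT2⟩ := T_exists (F := F) s z I (show (0:ℝ) < (1/2)^l by positivity)
  choose τ hτ0 hτQ hτS using fun i => scale_exists hsym (s i) (z i) (M := M) (l := l) (I := I)
    (fun N hN => hnM.trans (Finset.mem_Icc.mp hN).1) hT (hT2 i)
  have hA := mainLem hsym hα0 hα (fun i => τ i • s i) (fun i => -(τ i * z i)) (l := l) (M := M) (r := r) (n := n) (L := L)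
    (D := D) (km := km) (R := R) hM
    (fun i => by
      have := hτQ i
      simp only [Qf, rch] at this
      simpa [mul_assoc] using this)
    hMα hr hrq hκ hn hk hL hν
  rw [← hI] at hA
  set X : Set E := {x | ∀ i, s i x ≤ z i} with hX
  have hXm : MeasurableSet X := by
    have : X = ⋂ i, {x | s i x ≤ z i} := by ext x; simp [hX]
    rw [this]
    exact MeasurableSet.iInter fun i => measurableSet_le (hsm i) measurable_const
  set St : ι → Set E := fun i => {x | z i < s i x ∧ s i x < z i + 1 / τ i} with hSt
  have hStm : ∀ i, MeasurableSet (St i) := fun i =>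
    (measurableSet_lt measurable_const (hsm i)).inter (measurableSet_lt (hsm i) measurable_const)
  set g : E → ℝ := fun x => ∏ i, gst ((τ i • s i) x + -(τ i * z i)) with hg
  have hg0 : ∀ x, 0 ≤ g x := fun x => Finset.prod_nonneg fun i _ => gst_nonneg _
  have hg1 : ∀ x, g x ≤ 1 := fun x => Finset.prod_le_one (fun i _ => gst_nonneg _) fun i _ => gst_le_one _
  have hgm : Measurable g := by
    have := gst_cont.measurable
    have h2 : ∀ i, Measurable (τ i • s i) := fun i => (τ i • s i).continuous.measurable
    fun_prop
  have hdiff : ∀ x, |X.indicator (fun _ => (1:ℝ)) x - g x| ≤ ∑ i, (St i).indicator (fun _ => (1:ℝ)) x := by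
    intro x
    have hx0 : 0 ≤ X.indicator (fun _ => (1:ℝ)) x := Set.indicator_nonneg (fun _ _ => zero_le_one) x
    have hx1 : X.indicator (fun _ => (1:ℝ)) x ≤ 1 := Set.indicator_le_self' (fun _ _ => zero_le_one) x
    by_cases hx : ∃ i, x ∈ St i
    · obtain ⟨i, hi⟩ := hx
      have h1 : (St i).indicator (fun _ => (1:ℝ)) x ≤ ∑ i, (St i).indicator (fun _ => (1:ℝ)) x :=
        Finset.single_le_sum (f := fun i => (St i).indicator (fun _ => (1:ℝ)) x)
          (fun j _ => Set.indicator_nonneg (fun _ _ => zero_le_one) x) (Finset.mem_univ i)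
      rw [Set.indicator_of_mem hi] at h1
      refine le_trans ?_ h1
      rw [abs_le]
      constructor <;> linarith [hg0 x, hg1 x]
    · push Not at hx
      have : X.indicator (fun _ => (1:ℝ)) x = g x := by
        by_cases hxX : x ∈ X
        · rw [Set.indicator_of_mem hxX]
          symm
          refine Finset.prod_eq_one fun i _ => gst_one ?_
          have : s i x ≤ z i := hxX i
          have := mul_le_mul_of_nonneg_left this (hτ0 i).le
          simp only [smul_apply, smul_eq_mul]; linarith
        · rw [Set.indicator_of_notMem hxX]
          symm
          have : ∃ i, z i < s i x := by
            by_contra hcon; push Not at hcon; exact hxX hcon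
          obtain ⟨i, hi⟩ := this
          refine Finset.prod_eq_zero (Finset.mem_univ i) (gst_zero ?_)
          have h2 : z i + 1 / τ i ≤ s i x := by
            by_contra hcon; push Not at hcon; exact hx i ⟨hi, hcon⟩
          have h3 := mul_le_mul_of_nonneg_left h2 (hτ0 i).le
          have h4 : τ i * (z i + 1 / τ i) = τ i * z i + 1 := by have := (hτ0 i).ne'; field_simp
          simp only [smul_apply, smul_eq_mul]; linarith
      rw [this, sub_self, abs_zero]
      exact Finset.sum_nonneg fun i _ => Set.indicator_nonneg (fun _ _ => zero_le_one) x
  have hrem : Apx I (D + km) (Fintype.card ι * (1/2)^l)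
      (fun N => ∫ x, (X.indicator (fun _ => (1:ℝ)) x - g x) ∂(convPow F N)) := by
    refine apx_of_le fun N hN => ?_
    have hind : ∀ i, Integrable ((St i).indicator (fun _ => (1:ℝ))) (convPow F N) := fun i =>
      (integrable_const _).indicator (hStm i)
    refine (abs_integral_le_integral_abs).trans ?_
    refine (integral_mono_of_nonneg (Filter.Eventually.of_forall fun x => abs_nonneg _)
      (integrable_finsetSum _ fun i _ => hind i) (Filter.Eventually.of_forall hdiff)).trans ?_
    rw [integral_finsetSum _ fun i _ => hind i]
    have : ∀ i ∈ Finset.univ, ∫ x, (St i).indicator (fun _ => (1:ℝ)) x ∂(convPow F N) ≤ (1/2)^l := by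
      intro i _
      rw [integral_indicator_const _ (hStm i), smul_eq_mul, mul_one]
      exact hτS i N hN
    refine (Finset.sum_le_sum this).trans ?_
    simp
  refine ((hA.add hrem).congr fun N _ => ?_)
  show (convPow F N).real X = (∫ x, g x ∂_) + _
  rw [integral_sub ((integrable_const _).indicator hXm)
    (integrable_of_bdd (C := 1) hgm fun x => by rw [abs_of_nonneg (hg0 x)]; exact hg1 x),
    integral_indicator_const _ hXm]
  simp

end ScPart


section PaPart
set_option linter.unusedSectionVars false
open Filter

lemma evt_params (A a : ℕ) : ∃ n0 : ℕ, ∀ n ≥ n0, 32 ≤ n ∧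
    8 * (A * (2 * (Nat.log 2 n + 1) + 1)^2)^2 ≤ n / 16 ∧
    ((a:ℝ) + 1) * ((2 * (Nat.log 2 n + 1) + 1 : ℕ):ℝ)^2 * Real.log 2 ≤ Real.log n ^ 3 / 4 := by
  have hlog : Tendsto (fun n : ℕ => Real.log n) atTop atTop := Real.tendsto_log_atTop.comp tendsto_natCast_atTop_atTop
  -- J + 1 ≤ 4 log n eventually
  have hJ : ∀ᶠ n : ℕ in atTop, ((2 * (Nat.log 2 n + 1) + 1 : ℕ):ℝ) ≤ 4 * Real.log n := by
    filter_upwards [hlog.eventually_ge_atTop 6, eventually_ge_atTop 1] with n hn h1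
    have h2 : (2:ℝ) ^ Nat.log 2 n ≤ n := by exact_mod_cast Nat.pow_log_le_self 2 (by omega)
    have h3 : (Nat.log 2 n : ℝ) * Real.log 2 ≤ Real.log n := by
      rw [← Real.log_pow]; exact Real.log_le_log (by positivity) h2
    have h4 := Real.log_two_gt_d9
    have h5 : (Nat.log 2 n : ℝ) * 0.69 ≤ Real.log n := by
      refine le_trans ?_ h3; gcongr; linarith
    push_cast
    linarith
  have h3 : ∀ᶠ n : ℕ in atTop, ((a:ℝ) + 1) * ((2 * (Nat.log 2 n + 1) + 1 : ℕ):ℝ)^2 * Real.log 2 ≤ Real.log n ^ 3 / 4 := by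
    filter_upwards [hJ, hlog.eventually_ge_atTop (64 * ((a:ℝ)+1))] with n h1 h2
    have h4 : Real.log 2 ≤ 1 := by linarith [Real.log_two_lt_d9]
    have h5 : 0 ≤ Real.log n := le_trans (by positivity) h2
    calc ((a:ℝ) + 1) * ((2 * (Nat.log 2 n + 1) + 1 : ℕ):ℝ)^2 * Real.log 2 ≤ (a + 1) * (4 * Real.log n)^2 * 1 := by gcongr
      _ = (64 * ((a:ℝ)+1)) * Real.log n^2 / 4 := by ring
      _ ≤ Real.log n * Real.log n ^ 2 / 4 := by gcongr
      _ = _ := by ring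
  have h2 : ∀ᶠ n : ℕ in atTop, 8 * (A * (2 * (Nat.log 2 n + 1) + 1)^2)^2 ≤ n / 16 := by
    have ho : (fun n : ℕ => Real.log n ^ 4) =o[atTop] (fun n : ℕ => (n:ℝ)) := by
      have := (Real.isLittleO_pow_log_id_atTop (n := 4)).comp_tendsto (tendsto_natCast_atTop_atTop (R := ℝ))
      simpa [Function.comp_def] using this
    have hpos : (0:ℝ) < 1 / (16 * 8 * 256 * (A^2 + 1)) := by positivity
    filter_upwards [hJ, ho.bound hpos, hlog.eventually_ge_atTop 0] with n h1 h2 h0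
    rw [Nat.le_div_iff_mul_le (by norm_num)]
    rw [Real.norm_eq_abs, Real.norm_eq_abs, abs_of_nonneg (by positivity), abs_of_nonneg (by positivity),
      div_mul_eq_mul_div, one_mul, le_div_iff₀ (by positivity)] at h2
    have h6 : (((8 * (A * (2 * (Nat.log 2 n + 1) + 1)^2)^2 * 16 : ℕ)) : ℝ) ≤ n := by
      calc (((8 * (A * (2 * (Nat.log 2 n + 1) + 1)^2)^2 * 16 : ℕ)) : ℝ)
          = 128 * A^2 * ((2 * (Nat.log 2 n + 1) + 1 : ℕ):ℝ)^4 := by push_cast; ring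
        _ ≤ 128 * (A^2+1) * (4 * Real.log n)^4 := by gcongr; linarith
        _ = Real.log n ^ 4 * (16 * 8 * 256 * (A^2 + 1)) := by ring
        _ ≤ n := h2
    exact_mod_cast h6
  obtain ⟨n0, hn0⟩ := eventually_atTop.mp ((eventually_ge_atTop 32).and (h2.and h3))
  exact ⟨n0, hn0⟩

lemma rho_exists : ∃ ρ : ℕ, 1 ≤ ρ ∧ ∀ l : ℕ, Cs * (3/5)^(ρ*(l+1)) < (1/2:ℝ)^(l+2) := by
  have hC : 0 ≤ |Cs| := abs_nonneg _
  obtain ⟨k, hk⟩ := exists_pow_lt_of_lt_one (show (0:ℝ) < 1/(8*(|Cs|+1)) by positivity) (show (3/5:ℝ) < 1 by norm_num)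
  refine ⟨k+2, by omega, fun l => ?_⟩
  rw [pow_mul]
  set t : ℝ := (3/5)^(k+2) with ht
  have ht0 : 0 ≤ t := by positivity
  have h1 : t ≤ 1/2 := by
    rw [ht, pow_add]
    have : (3/5:ℝ)^k ≤ 1 := pow_le_one₀ (by norm_num) (by norm_num)
    calc (3/5:ℝ)^k * (3/5)^2 ≤ 1 * (3/5)^2 := by gcongr
      _ ≤ _ := by norm_num
  have h2 : t ≤ 1/(8*(|Cs|+1)) := by
    rw [ht, pow_add]
    calc (3/5:ℝ)^k * (3/5)^2 ≤ (3/5:ℝ)^k * 1 := by gcongr; norm_num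
      _ ≤ _ := by linarith
  have h3 : |Cs| * t ≤ 1/8 := by
    calc |Cs| * t ≤ (|Cs|+1) * (1/(8*(|Cs|+1))) := by gcongr; linarith
      _ = 1/8 := by field_simp
  calc Cs * t^(l+1) ≤ |Cs| * t^(l+1) := by gcongr; exact le_abs_self _
    _ = (|Cs| * t) * t^l := by ring
    _ ≤ (1/8) * (1/2)^l := by gcongr
    _ < (1/4) * (1/2)^l := by gcongr; norm_num
    _ = _ := by ring

/-- all the numerical constants -/
lemma const_exists (κ : ℕ) : ∃ ρ a A : ℕ, 1 ≤ ρ ∧ 4 * κ * ρ ≤ a ∧ 1 ≤ a ∧ 1 ≤ A ∧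
    (∀ l : ℕ, Cs * (3/5)^(ρ*(l+1)) < (1/2:ℝ)^(l+2)) ∧
    ∀ l : ℕ, ∃ D km R : ℕ, D + km ≤ A * (l+1)^2 ∧ ∀ ν : ℝ, 0 ≤ ν → ν ≤ (1/2)^((a+1)*(l+1)^2) →
      (((κ:ℝ) * Real.exp (5 * Real.exp 5 * (144 / ((1/2)^(l+2))^2) - R) +
        (((2*R+5:ℕ):ℝ)^(ρ*(l+1)))^κ * (c0 ^ κ * ((1/2) ^ D + ν))) * Real.exp (5 * (κ * (ρ*(l+1) : ℕ)))
        + Real.exp (3 * (5 * (κ * (ρ*(l+1) : ℕ))) - km)) + κ * (1/2)^l ≤ (2*κ+3) * (1/2)^l := by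
  obtain ⟨ρ, hρ1, hρ⟩ := rho_exists
  obtain ⟨v, hv⟩ := exists_nat_ge (5 * Real.exp 5 * (144 * 16))
  set R1 : ℕ := 2*v + 10*κ*ρ + 7 with hR1
  have hc0 := c0_nonneg
  set H : ℝ := ((4*R1:ℕ):ℝ)^(κ*ρ) * ((c0+1)^κ * Real.exp (5*(κ*ρ))) with hH
  obtain ⟨a0, ha0⟩ := pow_unbounded_of_one_lt H (one_lt_two)
  set a := a0 + 4*κ*ρ + 1 with ha
  have hHa : H ≤ 2^a := ha0.le.trans (pow_le_pow_right₀ (by norm_num) (by omega))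
  refine ⟨ρ, a, a + 1 + 15*κ*ρ + 1, hρ1, by omega, by omega, by omega, hρ, fun l => ?_⟩
  set R := v * 4^l + 5*κ*(ρ*(l+1)) + l with hR
  refine ⟨(a+1)*(l+1)^2, 15*κ*(ρ*(l+1)) + l, R, ?_, fun ν hν0 hν => ?_⟩
  · have h1 : l + 1 ≤ (l+1)^2 := by nlinarith
    have h2 : 15*κ*(ρ*(l+1)) ≤ 15*κ*ρ*(l+1)^2 := by
      calc 15*κ*(ρ*(l+1)) = 15*κ*ρ*(l+1) := by ring
        _ ≤ _ := Nat.mul_le_mul_left _ h1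
    calc _ ≤ (a+1)*(l+1)^2 + (15*κ*ρ*(l+1)^2 + (l+1)^2) := by omega
      _ = _ := by ring
  · have hexpl : Real.exp (-(l:ℝ)) ≤ (1/2)^l := by
      have : Real.exp (-1) ≤ 1/2 := by
        rw [Real.exp_neg, inv_eq_one_div]
        exact one_div_le_one_div_of_le (by norm_num) (by linarith [Real.exp_one_gt_d9])
      calc Real.exp (-(l:ℝ)) = Real.exp (-1) ^ l := by rw [← Real.exp_nat_mul]; congr 1; ring
        _ ≤ _ := by gcongr
    -- first term
    have hV : 5 * Real.exp 5 * (144 / ((1/2:ℝ)^(l+2))^2) ≤ v * 4^l := by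
      have h1 : (144 / ((1/2:ℝ)^(l+2))^2) = 144 * 16 * 4^l := by
        rw [← pow_mul, show (l+2)*2 = 2*(l+2) by ring, pow_mul, div_eq_iff (by positivity), pow_add]
        have : (4:ℝ)^l * ((1/2)^2)^l = 1 := by rw [← mul_pow]; norm_num
        linear_combination (-144:ℝ) * this
      rw [h1]
      calc 5 * Real.exp 5 * (144 * 16 * 4^l) = (5 * Real.exp 5 * (144 * 16)) * 4^l := by ring
        _ ≤ _ := by gcongr
    have t1 : Real.exp (5 * Real.exp 5 * (144 / ((1/2:ℝ)^(l+2))^2) - R) * Real.exp (5 * (κ * (ρ*(l+1) : ℕ))) ≤ (1/2)^l := by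
      rw [← Real.exp_add]
      refine (Real.exp_le_exp.mpr ?_).trans hexpl
      rw [hR]; push_cast; linarith
    have t3 : Real.exp (3 * (5 * (κ * (ρ*(l+1) : ℕ))) - (15*κ*(ρ*(l+1)) + l : ℕ)) ≤ (1/2)^l := by
      refine (Real.exp_le_exp.mpr ?_).trans hexpl
      push_cast; linarith
    -- second
    have hR2 : 2*R+5 ≤ (4*R1)^(l+1) := by
      have h4 : l + 1 ≤ 4^l := by
        calc l + 1 ≤ 2^l := Nat.lt_two_pow_self
          _ ≤ 4^l := Nat.pow_le_pow_left (by norm_num) _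
      have h5 : 2*R+5 ≤ R1 * 4^l := by
        calc 2*R+5 ≤ 2*v*4^l + (10*κ*ρ+7)*(l+1) := by rw [hR]; nlinarith
          _ ≤ 2*v*4^l + (10*κ*ρ+7)*4^l := by gcongr
          _ = _ := by rw [hR1]; ring
      calc 2*R+5 ≤ R1 * 4^l := h5
        _ ≤ R1^(l+1) * 4^(l+1) := Nat.mul_le_mul (Nat.le_self_pow (by omega) _) (Nat.pow_le_pow_right (by norm_num) (by omega))
        _ = _ := by rw [mul_pow]; ring
    have hl2 : l + 1 ≤ (l+1)^2 := by nlinarith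
    have hHl : (((2*R+5:ℕ):ℝ)^(ρ*(l+1)))^κ * c0^κ * Real.exp (5 * (κ * (ρ*(l+1) : ℕ))) ≤ H^((l+1)^2) := by
      have e1 : (((2*R+5:ℕ):ℝ)^(ρ*(l+1)))^κ ≤ (((4*R1:ℕ):ℝ)^(κ*ρ))^((l+1)^2) := by
        have : ((2*R+5:ℕ):ℝ) ≤ ((4*R1:ℕ):ℝ)^(l+1) := by exact_mod_cast hR2
        calc (((2*R+5:ℕ):ℝ)^(ρ*(l+1)))^κ ≤ ((((4*R1:ℕ):ℝ)^(l+1))^(ρ*(l+1)))^κ := by gcongr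
          _ = _ := by rw [← pow_mul, ← pow_mul, ← pow_mul]; congr 1; ring
      have e2 : c0^κ ≤ ((c0+1)^κ)^((l+1)^2) := by
        calc c0^κ ≤ (c0+1)^κ := by gcongr; linarith
          _ ≤ _ := le_self_pow₀ (one_le_pow₀ (by linarith)) (by positivity)
      have e3 : Real.exp (5 * (κ * (ρ*(l+1) : ℕ))) ≤ Real.exp (5*(κ*ρ))^((l+1)^2) := by
        rw [← Real.exp_nat_mul]
        refine Real.exp_le_exp.mpr ?_
        have : ((l:ℝ)+1) ≤ ((l:ℝ)+1)^2 := by exact_mod_cast hl2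
        push_cast
        calc 5 * ((κ:ℝ) * (ρ * (l+1))) = (5*(κ*ρ)) * ((l:ℝ)+1) := by ring
          _ ≤ (5*(κ*ρ)) * ((l:ℝ)+1)^2 := by gcongr
          _ = _ := by ring
      calc _ ≤ (((4*R1:ℕ):ℝ)^(κ*ρ))^((l+1)^2) * ((c0+1)^κ)^((l+1)^2) * Real.exp (5*(κ*ρ))^((l+1)^2) := by gcongr
        _ = _ := by rw [hH, mul_pow, mul_pow]; ring
    have hH0 : 0 ≤ H := by positivity
    have hHl2 : H^((l+1)^2) ≤ 2^(a*(l+1)^2) := by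
      rw [pow_mul]; gcongr
    have t2 : H^((l+1)^2) * ((1/2)^((a+1)*(l+1)^2) + ν) ≤ 2 * (1/2)^l := by
      calc H^((l+1)^2) * ((1/2)^((a+1)*(l+1)^2) + ν)
          ≤ 2^(a*(l+1)^2) * ((1/2)^((a+1)*(l+1)^2) + (1/2)^((a+1)*(l+1)^2)) := by gcongr
        _ = 2 * (1/2)^((l+1)^2) * (2^(a*(l+1)^2) * (1/2)^(a*(l+1)^2)) := by rw [add_mul, one_mul, pow_add]; ring
        _ = 2 * (1/2)^((l+1)^2) := by rw [← mul_pow]; norm_num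
        _ ≤ 2 * (1/2)^l := by
          gcongr 2 * ?_
          exact pow_le_pow_of_le_one (by norm_num) (by norm_num) (by omega)
    have t2' : ((((2*R+5:ℕ):ℝ)^(ρ*(l+1)))^κ * (c0 ^ κ * ((1/2) ^ ((a+1)*(l+1)^2) + ν))) * Real.exp (5 * (κ * (ρ*(l+1) : ℕ))) ≤ 2 * (1/2)^l := by
      refine le_trans ?_ t2
      calc _ = ((((2*R+5:ℕ):ℝ)^(ρ*(l+1)))^κ * c0^κ * Real.exp (5 * (κ * (ρ*(l+1) : ℕ)))) * ((1/2)^((a+1)*(l+1)^2) + ν) := by ring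
        _ ≤ _ := by gcongr
    have t1' := mul_le_mul_of_nonneg_left t1 (Nat.cast_nonneg (α := ℝ) κ)
    rw [add_mul]
    linarith

end PaPart


section FiPart
set_option linter.unusedSectionVars false
open MeasureTheory Polynomial
open scoped ENNReal

lemma core_bound (κ : ℕ) : ∃ n0 : ℕ, ∃ C : ℝ, 0 < C ∧ ∀ (d n : ℕ), n0 ≤ n → 1 ≤ n → ∀ α : ℝ, 0 ≤ α → Real.log n ^ 3 ≤ n * α →
    ∀ F : Measure (Euc d), IsProbabilityMeasure F → F.map (fun x => -x) = F →
      (∀ φ : Euc d →L[ℝ] ℝ, -1 + α ≤ ∫ x, Real.cos (φ x) ∂F) →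
      ∀ (ι : Type) [Fintype ι], Fintype.card ι = κ → ∀ (s : ι → Euc d →L[ℝ] ℝ) (z : ι → ℝ),
      |(convPow F (n+1)).real {x | ∀ i, s i x ≤ z i} - (convPow F n).real {x | ∀ i, s i x ≤ z i}| ≤ C / n ∧
      |(∑' k : ℕ, Real.exp (-(n:ℝ)) * (n:ℝ) ^ k / k.factorial * (convPow F k).real {x | ∀ i, s i x ≤ z i})
        - (convPow F n).real {x | ∀ i, s i x ≤ z i}| ≤ C / n := by
  obtain ⟨ρ, a, A, hρ1, haκ, ha1, hA1, hρ, hcst⟩ := const_exists κ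
  obtain ⟨n0, hn0⟩ := evt_params A a
  set B0 : ℝ := 2*κ+3 with hB0
  have hB0p : 0 < B0 := by positivity
  obtain ⟨C, hC, hlin⟩ := linear_of_levels (A:ℝ) (3*B0+1) (by exact_mod_cast hA1) (by positivity)
  refine ⟨n0, 3*C, by positivity, ?_⟩
  intro d n hn hn1 α hα0 hnα F hF hsym hα ι _ hcard s z
  obtain ⟨h32, h8, hkey⟩ := hn0 n hn
  set J := 2 * (Nat.log 2 n + 1) with hJ
  set f : ℕ → ℝ := fun N => (convPow F N).real {x | ∀ i, s i x ≤ z i} with hf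
  have hnpos : (0:ℝ) < n := by exact_mod_cast (by omega : 0 < n)
  have hpw : ∀ N, (convPow F N).real Set.univ = 1 := fun N => by
    rw [convPow_real_univ]; simp
  have hf0 : ∀ N, 0 ≤ f N := fun N => measureReal_nonneg
  have hf1 : ∀ N, f N ≤ 1 := fun N => (measureReal_mono (Set.subset_univ _)).trans (hpw N).le
  have hln2 := Real.log_two_gt_d9
  have hEx : Real.exp (-(n * α / 4)) ≤ (1/2:ℝ)^((a+1)*(J+1)^2) := by
    have : (1/2:ℝ)^((a+1)*(J+1)^2) = Real.exp (-(((a+1)*(J+1)^2 : ℕ) * Real.log 2)) := by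
      rw [Real.exp_neg, ← Real.log_pow, Real.exp_log (by positivity), one_div, inv_pow]
    rw [this]
    refine Real.exp_le_exp.mpr ?_
    push_cast at hkey ⊢
    linarith
  have hAJ : A * (J+1)^2 ≤ n / 16 := by
    refine le_trans ?_ h8
    set Y := A * (J+1)^2
    nlinarith [Nat.zero_le Y]
  have hM : (n:ℝ) / 4 ≤ ((2*(n/4) : ℕ):ℝ) := by
    have : n ≤ 4 * (2*(n/4)) := by omega
    have : (n:ℝ) ≤ 4 * ((2*(n/4) : ℕ):ℝ) := by exact_mod_cast this
    linarith
  -- level approximations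
  have hlev : ∀ l, l ≤ J → Apx (Finset.Icc (n - n/16) (n + n/16)) (A*(l+1)^2) (B0 * (1/2)^l) f := by
    intro l hl
    obtain ⟨D, km, R, hDk, herr⟩ := hcst l
    have hl2 : (l+1)^2 ≤ (J+1)^2 := Nat.pow_le_pow_left (by omega) _
    have hkm : km ≤ n/16 := by
      have : A*(l+1)^2 ≤ A*(J+1)^2 := Nat.mul_le_mul_left _ hl2
      omega
    have hJ2 : J + 1 ≤ (J+1)^2 := by nlinarith
    have happ := level_apx (n := n) (L := n/16) (M := n/4) (l := l) (D := D) (km := km) (R := R) (r := ρ*(l+1))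
      (ν := (1/2:ℝ)^((a+1)*(l+1)^2)) hsym hα0 hα s z (by omega)
      (by
        have h1 : Real.exp (-((2*(n/4):ℕ) * α)) ≤ Real.exp (-(n*α/4)) := by
          refine Real.exp_le_exp.mpr ?_
          have := mul_le_mul_of_nonneg_right hM hα0
          linarith
        refine (h1.trans hEx).trans (pow_le_pow_of_le_one (by norm_num) (by norm_num) ?_)
        calc l + 2 ≤ 2 * (J+1) := by omega
          _ ≤ (a+1) * (J+1)^2 := Nat.mul_le_mul (by omega) hJ2)
      (Nat.one_le_iff_ne_zero.mpr (by positivity)) (hρ l)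
      (by
        have hMp : (0:ℝ) < ((2*(n/4):ℕ):ℝ) := by exact_mod_cast (by omega)
        rw [div_le_iff₀ hMp, hcard]
        have h1 := mul_le_mul_of_nonneg_right hM hα0
        have h2 : (κ:ℝ) * ((ρ*(l+1):ℕ):ℝ) * 4 ≤ (a+1) * ((J+1:ℕ):ℝ)^2 := by
          have : κ * (ρ*(l+1)) * 4 ≤ (a+1) * (J+1)^2 := by
            calc κ * (ρ*(l+1)) * 4 = (4*κ*ρ)*(l+1) := by ring
              _ ≤ (a+1) * (J+1)^2 := Nat.mul_le_mul (by omega) (by omega)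
          exact_mod_cast this
        have h3 : 0 ≤ ((a:ℝ)+1) * ((J+1:ℕ):ℝ)^2 := by positivity
        nlinarith)
      (by omega) (by omega) (by omega) (by omega)
      (by
        have h1 : (n:ℝ)/2 ≤ ((n - n/16 - km : ℕ):ℝ) := by
          have : n ≤ 2 * (n - n/16 - km) := by omega
          have : (n:ℝ) ≤ 2 * ((n - n/16 - km:ℕ):ℝ) := by exact_mod_cast this
          linarith
        refine le_trans (Real.exp_le_exp.mpr ?_) (hEx.trans (pow_le_pow_of_le_one (by norm_num) (by norm_num)
          (Nat.mul_le_mul_left _ hl2)))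
        have := mul_le_mul_of_nonneg_left h1 (by positivity : 0 ≤ α/2)
        linarith)
    refine happ.mono hDk ?_
    rw [hcard]
    exact herr _ (by positivity) le_rfl
  choose! p hpd hpe using hlev
  set P : ℕ → ℝ[X] := fun l => p l - (if l = 0 then 0 else p (l-1)) with hP
  have hPsum : ∀ j, ∑ l ∈ Finset.range (j+1), P l = p j := by
    intro j
    induction j with
    | zero => simp [hP]
    | succ j ih => rw [Finset.sum_range_succ, ih]; simp [hP]
  have hn2 : (n:ℝ)^2 * (1/2)^J ≤ 1 := by
    have h1 : (n:ℝ) ≤ 2^(Nat.log 2 n + 1) := by exact_mod_cast (Nat.lt_pow_succ_log_self (by norm_num) n).le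
    have h2 : (1/2:ℝ)^J = ((1/2)^(Nat.log 2 n + 1))^2 := by rw [hJ, ← pow_mul]; congr 1; ring
    rw [h2, ← mul_pow]
    refine pow_le_one₀ (by positivity) ?_
    calc (n:ℝ) * (1/2)^(Nat.log 2 n + 1) ≤ 2^(Nat.log 2 n + 1) * (1/2)^(Nat.log 2 n + 1) := by gcongr
      _ = 1 := by rw [← mul_pow]; norm_num
  obtain ⟨a', ha', hbd⟩ := hlin n J P f h32 hf0 hf1 (by exact_mod_cast h8)
    (by
      intro l hl
      have h1 : (P l).natDegree ≤ A * (l+1)^2 := by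
        refine (natDegree_sub_le _ _).trans (max_le (hpd l hl) ?_)
        split_ifs with h0
        · simp
        · refine (hpd (l-1) (by omega)).trans (Nat.mul_le_mul_left _ (Nat.pow_le_pow_left (by omega) _))
      exact_mod_cast h1)
    (by
      intro l hl N hN1 hN2
      have hN : N ∈ Finset.Icc (n - n/16) (n + n/16) := Finset.mem_Icc.mpr ⟨hN1, hN2⟩
      have e1 := abs_le.mp (hpe l hl N hN)
      rcases Nat.eq_zero_or_pos l with h0 | h0
      · subst h0
        simp only [hP, if_true, sub_zero, pow_zero, mul_one] at e1 ⊢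
        rw [abs_le]; constructor <;> linarith [hf0 N, hf1 N]
      · have e2 := abs_le.mp (hpe (l-1) (by omega) N hN)
        obtain ⟨k, rfl⟩ := Nat.exists_eq_succ_of_ne_zero h0.ne'
        simp only [Nat.succ_eq_add_one, Nat.add_sub_cancel] at e1 e2
        simp only [hP, Nat.succ_eq_add_one, Nat.add_sub_cancel, Nat.add_eq_zero_iff, one_ne_zero, and_false, if_false, eval_sub]
        have hk : (1/2:ℝ)^k = 2 * (1/2)^(k+1) := by ring
        rw [hk] at e2
        have hpp : (0:ℝ) < (1/2)^(k+1) := by positivity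
        rw [abs_le]; constructor <;> nlinarith)
    (by
      intro N hN1 hN2
      rw [hPsum]
      refine (hpe J le_rfl N (Finset.mem_Icc.mpr ⟨hN1, hN2⟩)).trans ?_
      rw [le_div_iff₀ (by positivity)]
      calc B0 * (1/2)^J * (n:ℝ)^2 = B0 * ((n:ℝ)^2 * (1/2)^J) := by ring
        _ ≤ B0 * 1 := by gcongr
        _ ≤ _ := by linarith)
  constructor
  · have h1 := hbd (n+1)
    push_cast at h1
    have h2 : C * (((n:ℝ)+1-n)^2+1)/n^2 ≤ 2*C/n := by
      rw [show C * (((n:ℝ)+1-n)^2+1) = 2*C by ring]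
      gcongr
      have : (1:ℝ) ≤ n := by exact_mod_cast hn1
      nlinarith
    have h3 := h1.trans h2
    rw [show a' * ((n:ℝ)+1-n) = a' by ring] at h3
    have h4 : 3*C/n = 2*C/n + C/n := by ring
    rw [h4]
    calc |f (n+1) - f n| = |(f (n+1) - f n - a') + a'| := by ring_nf
      _ ≤ _ := (abs_add_le _ _).trans (add_le_add h3 ha')
  · refine (pois_compare (by omega) hf0 hf1 hbd).trans ?_
    rw [mul_comm C 2]
    gcongr
    norm_num

end FiPart


section GPart
set_option linter.unusedSectionVars false
open MeasureTheory RealInnerProductSpace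
open scoped ENNReal

lemma half_upper {d : ℕ} (t : Euc d) (b : EReal) : ∃ (s : Euc d →L[ℝ] ℝ) (z : ℝ), ∀ x : Euc d,
    (((⟪x, t⟫ : ℝ) : EReal) ≤ b ↔ s x ≤ z) := by
  induction b with
  | bot => exact ⟨0, -1, fun x => by simp⟩
  | top => exact ⟨0, 0, fun x => by simp⟩
  | coe c => exact ⟨innerSL ℝ t, c, fun x => by rw [innerSL_apply_apply, real_inner_comm]; exact EReal.coe_le_coe_iff⟩

lemma half_lower {d : ℕ} (t : Euc d) (a : EReal) : ∃ (s : Euc d →L[ℝ] ℝ) (z : ℝ), ∀ x : Euc d,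
    (a ≤ ((⟪x, t⟫ : ℝ) : EReal) ↔ s x ≤ z) := by
  induction a with
  | bot => exact ⟨0, 0, fun x => by simp⟩
  | top => exact ⟨0, -1, fun x => by simp⟩
  | coe c => exact ⟨-innerSL ℝ t, -c, fun x => by
      rw [EReal.coe_le_coe_iff, neg_apply, innerSL_apply_apply, real_inner_comm, neg_le_neg_iff]⟩

lemma poly_repr {d m : ℕ} {X : Set (Euc d)} (hX : X ∈ polyhedra d m) :
    ∃ (s : Fin m ⊕ Fin m → Euc d →L[ℝ] ℝ) (z : Fin m ⊕ Fin m → ℝ), X = {x | ∀ i, s i x ≤ z i} := by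
  obtain ⟨t, a, b, rfl⟩ := hX
  choose s1 z1 h1 using fun j => half_lower (t j) (a j)
  choose s2 z2 h2 using fun j => half_upper (t j) (b j)
  refine ⟨Sum.elim s1 s2, Sum.elim z1 z2, ?_⟩
  ext x
  simp only [Set.mem_ofPred_eq, Sum.forall, Sum.elim_inl, Sum.elim_inr, h1, h2, forall_and]

lemma charFn_cos {d : ℕ} {F : Measure (Euc d)} [IsProbabilityMeasure F] (hsym : IsSymmMeasure F) {α : ℝ}
    (h : ∀ t : Euc d, -1 + α ≤ (charFn F t).re) (φ : Euc d →L[ℝ] ℝ) : -1 + α ≤ ∫ x, Real.cos (φ x) ∂F := by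
  have h1 := h ((InnerProductSpace.toDual ℝ (Euc d)).symm φ)
  unfold charFn at h1
  simp only [InnerProductSpace.toDual_symm_apply] at h1
  rw [cexp_symm hsym, Complex.ofReal_re] at h1
  exact h1

lemma cpois_apply {d : ℕ} (n : ℕ) (F : Measure (Euc d)) [IsProbabilityMeasure F] {X : Set (Euc d)} (hX : MeasurableSet X) :
    (cpois n F X).toReal = ∑' k : ℕ, Real.exp (-(n:ℝ)) * (n:ℝ) ^ k / k.factorial * (convPow F k).real X := by
  unfold cpois
  rw [Measure.sum_apply _ hX, ENNReal.tsum_toReal_eq]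
  · refine tsum_congr fun k => ?_
    rw [Measure.smul_apply, smul_eq_mul, ENNReal.toReal_mul, ENNReal.toReal_ofReal (by positivity), measureReal_def]
  · intro k
    rw [Measure.smul_apply, smul_eq_mul]
    exact ENNReal.mul_ne_top ENNReal.ofReal_ne_top (measure_ne_top _ _)

lemma rhoPoly_le {d m : ℕ} {G H : Measure (Euc d)} {B : ℝ} (hB : 0 ≤ B)
    (h : ∀ X ∈ polyhedra d m, |(G X).toReal - (H X).toReal| ≤ B) : rhoPoly m G H ≤ B :=
  Real.iSup_le (fun X => Real.iSup_le (fun hX => h X hX) hB) hB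

end GPart

theorem stmt2 :
    ∃ c : ℝ, 0 < c ∧ ∃ C : ℕ → ℝ, (∀ m, 0 < C m) ∧
      ∀ (d m n : ℕ), 0 < d → 0 < m → 0 < n → ∀ α : ℝ, 0 ≤ α → α ≤ 2 →
        ∀ F : Measure (Euc d), IsProbabilityMeasure F → IsSymmMeasure F →
          (∀ t : Euc d, -1 + α ≤ (charFn F t).re) →
          max (rhoPoly m (convPow F n) (cpois n F))
              (rhoPoly m (convPow F n) (convPow F (n + 1))) ≤
            C m * ((n : ℝ)⁻¹ + Real.exp (-(n : ℝ) * α + c * m * Real.log n ^ 3)) := by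
  choose n0 K hK hcore using fun m : ℕ => core_bound (m + m)
  refine ⟨1, one_pos, fun m => K m + n0 m + 1, fun m => by have := hK m; positivity, ?_⟩
  intro d m n _ hm hn α hα0 _ F hF hsym hch
  have hKm := hK m
  have hnpos : (0:ℝ) < n := by exact_mod_cast hn
  have hn1 : (1:ℝ) ≤ n := by exact_mod_cast hn
  set rhs : ℝ := (K m + n0 m + 1) * ((n : ℝ)⁻¹ + Real.exp (-(n : ℝ) * α + 1 * m * Real.log n ^ 3)) with hrhs
  have hexp := Real.exp_pos (-(n : ℝ) * α + 1 * m * Real.log n ^ 3)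
  have hrhs0 : 0 ≤ rhs := by positivity
  have hinv : 0 < (n:ℝ)⁻¹ := by positivity
  -- basic facts about a polyhedron
  have hmeas : ∀ X ∈ polyhedra d m, MeasurableSet X := by
    intro X hX
    obtain ⟨s, z, rfl⟩ := poly_repr hX
    have : {x | ∀ i, s i x ≤ z i} = ⋂ i, {x | s i x ≤ z i} := by ext x; simp
    rw [this]
    exact MeasurableSet.iInter fun i => measurableSet_le (s i).continuous.measurable measurable_const
  have hpw : ∀ N X, (convPow F N).real X ≤ 1 := fun N X => by
    refine (measureReal_mono (Set.subset_univ _)).trans ?_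
    rw [convPow_real_univ]; simp
  have hcp : ∀ X ∈ polyhedra d m, 0 ≤ (cpois n F X).toReal ∧ (cpois n F X).toReal ≤ 1 := by
    intro X hX
    refine ⟨ENNReal.toReal_nonneg, ?_⟩
    rw [cpois_apply n F (hmeas X hX)]
    have hs := pois_hasSum n
    have hle : ∀ k : ℕ, Real.exp (-(n:ℝ)) * (n:ℝ) ^ k / k.factorial * (convPow F k).real X ≤
        Real.exp (-(n:ℝ)) * (n:ℝ) ^ k / k.factorial := fun k =>
      mul_le_of_le_one_right (by positivity) (hpw k X)
    have hsum : Summable fun k : ℕ => Real.exp (-(n:ℝ)) * (n:ℝ) ^ k / k.factorial * (convPow F k).real X :=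
      Summable.of_nonneg_of_le (fun k => by positivity) hle hs.summable
    exact (hsum.tsum_le_tsum hle hs.summable).trans hs.tsum_eq.le
  have htriv : 1 ≤ rhs → max (rhoPoly m (convPow F n) (cpois n F))
              (rhoPoly m (convPow F n) (convPow F (n + 1))) ≤ rhs := by
    intro h1
    refine max_le (rhoPoly_le hrhs0 fun X hX => le_trans ?_ h1) (rhoPoly_le hrhs0 fun X hX => le_trans ?_ h1)
    · have h2 := hcp X hX
      have h3 : 0 ≤ ((convPow F n) X).toReal := ENNReal.toReal_nonneg
      have h4 := hpw n X
      rw [measureReal_def] at h4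
      rw [abs_le]; constructor <;> linarith [h2.1, h2.2]
    · have h3 : 0 ≤ ((convPow F n) X).toReal := ENNReal.toReal_nonneg
      have h5 : 0 ≤ ((convPow F (n+1)) X).toReal := ENNReal.toReal_nonneg
      have h4 := hpw n X
      have h6 := hpw (n+1) X
      rw [measureReal_def] at h4 h6
      rw [abs_le]; constructor <;> linarith
  by_cases hcase : (m:ℝ) * Real.log n ^ 3 ≤ n * α
  swap
  · refine htriv ?_
    push Not at hcase
    have h1 : 1 ≤ Real.exp (-(n : ℝ) * α + 1 * m * Real.log n ^ 3) := Real.one_le_exp (by linarith)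
    have h2 : (1:ℝ) ≤ K m + n0 m + 1 := by
      have : (0:ℝ) ≤ n0 m := by positivity
      linarith
    rw [hrhs]
    exact one_le_mul_of_one_le_of_one_le h2 (by linarith)
  by_cases hnn : n0 m ≤ n
  swap
  · refine htriv ?_
    push Not at hnn
    have h1 : (n:ℝ) ≤ n0 m := by exact_mod_cast hnn.le
    calc (1:ℝ) = n * (n:ℝ)⁻¹ := by field_simp
      _ ≤ (K m + n0 m + 1) * ((n : ℝ)⁻¹ + Real.exp (-(n : ℝ) * α + 1 * m * Real.log n ^ 3)) := by
        gcongr <;> linarith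
  have hlog : 0 ≤ Real.log n := Real.log_nonneg hn1
  have hm1 : (1:ℝ) ≤ m := by exact_mod_cast hm
  have hl3 : Real.log n ^ 3 ≤ n * α := by
    refine le_trans ?_ hcase
    exact le_mul_of_one_le_left (by positivity) hm1
  have hfin : K m / n ≤ rhs := by
    rw [hrhs, div_eq_mul_inv]
    have : (0:ℝ) ≤ n0 m := by positivity
    gcongr <;> linarith
  refine max_le (rhoPoly_le hrhs0 fun X hX => le_trans ?_ hfin) (rhoPoly_le hrhs0 fun X hX => le_trans ?_ hfin)
  · have hXm := hmeas X hX
    obtain ⟨s, z, rfl⟩ := poly_repr hX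
    have := (hcore m d n hnn hn α hα0 hl3 F hF hsym (charFn_cos hsym hch) (Fin m ⊕ Fin m) (by simp) s z).2
    rw [cpois_apply n F hXm, abs_sub_comm]
    exact this
  · obtain ⟨s, z, rfl⟩ := poly_repr hX
    have := (hcore m d n hnn hn α hα0 hl3 F hF hsym (charFn_cos hsym hch) (Fin m ⊕ Fin m) (by simp) s z).1
    rw [abs_sub_comm]
    exact this
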